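/- arXiv:2205.04367 — 5 statements merged into one kernel-verified Lean document; each statement's English description precedes it below -/
import Mathlib

section
/- For every finite set {γ₁, …, γ_m} of positive real numbers there exists a metric space X which is uniformly discrete, has bounded geometry, and is amenable, such that the scaling group Sc(X) is exactly the subgroup of the multiplicative group of positive reals generated by {γ₁, …, γ_m}. -/
/-!
Write `γ ^ v = ∏ i, γ i ^ v i` for `v ∈ ℤ ^ m`. The space `HairySpace.Pt γ` consists of fibres over
the indices `s = (v, n) ∈ ℤ ^ m × ℕ`; the fibre over `s` is the half-line of integers
`i ≤ len s = n! * γ ^ v`. Its positive part, the *hair*, is an interval with the usual metric, while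
its nonpositive part, the *root*, carries a logarithmic metric and so has exponential growth. Indices
are compared by the metric of the lattice `ℤ ^ m` with a ray attached to each point. The hairs over
`(0, n)` form a Følner sequence, since the boundary of a hair has bounded size (`top_boundary`).

Every `γ ^ u` is a scaling constant: translation of the indices by `u` combined with stretching the
fibres by `γ ^ u` is a quasi-isometry, and it is coarsely `γ ^ (-u)`-to-1 by summation by parts along
the fibres (`shift_quasiIsometry`, `shift_scaling`).

Conversely, let `q` be a coarsely `k`-to-1 quasi-isometry. The growth is exponential near the roots
and linear far up on the hairs, so `q` and a coarse inverse of it preserve the property of having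
large height (`CoarseEmb.low`, `CoarseEmb.high`). As the upper parts of different hairs are far
apart, `q` matches long hairs with long hairs, and counting preimages of the upper part of a hair
shows that the lengths of matched hairs have ratio `k` up to a bounded additive error
(`exists_hair_map`). Consider the hairs matched with those over `(0, n)`. Consecutive ones have
indices at bounded distance, while their lengths `k * n! + O(1)` have unbounded ratios; a bounded
jump between two rays of the index set only allows bounded ratios. Hence the indices eventually lie
on one ray, `(v, l n)` with `v` fixed, and `(l n)! * γ ^ v = k * n! + O(1)` forces `l n = n` for large
`n`, that is, `k = γ ^ v` (`eq_mono_of_seq`).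
-/

/-- A metric space is *uniformly discrete* if there is a global positive
lower bound on distances between distinct points. -/
def UniformlyDiscrete (X : Type*) [MetricSpace X] : Prop :=
  ∃ ε : ℝ, 0 < ε ∧ ∀ x y : X, x ≠ y → ε ≤ dist x y

/-- A metric space has *bounded geometry* if for every `r > 0` there is a
uniform bound on the number of points in closed balls of radius `r`. -/
def BoundedGeometry (X : Type*) [MetricSpace X] : Prop :=
  ∀ r : ℝ, 0 < r → ∃ B : ℕ, ∀ x : X,
    (Metric.closedBall x r).Finite ∧ (Metric.closedBall x r).ncard ≤ B

/-- The `r`-boundary `∂_r S` of a set `S`: points within distance `r` of both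
`S` and its complement. -/
def rBoundary {X : Type*} [MetricSpace X] (r : ℝ) (S : Set X) : Set X :=
  {x : X | Metric.infDist x S ≤ r ∧ Metric.infDist x Sᶜ ≤ r}

/-- A *Følner sequence*: nonempty finite sets whose relative `r`-boundaries
vanish asymptotically, for every `r > 0`. -/
def IsFolnerSeq {X : Type*} [MetricSpace X] (S : ℕ → Set X) : Prop :=
  (∀ i, (S i).Nonempty ∧ (S i).Finite) ∧
  ∀ r : ℝ, 0 < r →
    Filter.Tendsto (fun i => ((rBoundary r (S i)).ncard : ℝ) / ((S i).ncard : ℝ))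
      Filter.atTop (nhds 0)

/-- A UDBG space is *amenable* if it admits a Følner sequence. -/
def MetricAmenable (X : Type*) [MetricSpace X] : Prop :=
  ∃ S : ℕ → Set X, IsFolnerSeq S

/-- `q` is a `K`-quasi-isometry for some `K ≥ 1`. -/
def IsQuasiIsometry {X Y : Type*} [MetricSpace X] [MetricSpace Y] (q : X → Y) : Prop :=
  ∃ K : ℝ, 1 ≤ K ∧
    (∀ a b : X, dist a b / K - K ≤ dist (q a) (q b) ∧ dist (q a) (q b) ≤ K * dist a b + K) ∧
    (∀ y : Y, ∃ x : X, dist y (q x) ≤ K)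

/-- `q` is *coarsely k-to-1* (`k`-scaling): preimage counts of finite sets match
`k` times their size, up to a boundary-sized error. -/
def CoarselyScaling {X Y : Type*} [MetricSpace X] [MetricSpace Y] (q : X → Y) (k : ℝ) : Prop :=
  ∃ r : ℝ, 0 < r ∧ ∃ C : ℝ, 0 ≤ C ∧ ∀ A : Set Y, A.Finite →
    |((q ⁻¹' A).ncard : ℝ) - k * (A.ncard : ℝ)| ≤ C * ((rBoundary r A).ncard : ℝ)

/-- The *scaling group* of `X`: positive reals `k` realized as the scaling
factor of some self quasi-isometry of `X`. -/
def ScalingGroup (X : Type*) [MetricSpace X] : Set ℝ :=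
  {k : ℝ | 0 < k ∧ ∃ q : X → X, IsQuasiIsometry q ∧ CoarselyScaling q k}

namespace HairySpace

/-! ### The space -/

/-- The hedgehog (pseudo)distance: `x` and `y` are heights on the spines labelled `a` and `b`, all
spines being glued together at height `0`. -/
noncomputable def hedge {α : Type} (a b : α) (x y : ℝ) : ℝ :=
  open Classical in if a = b then |x - y| else x + y

section hedge
variable {α : Type} {a b c : α} {x y z : ℝ}

lemma hedge_same : hedge a a x y = |x - y| := by simp [hedge]

lemma hedge_ne (h : a ≠ b) : hedge a b x y = x + y := by simp [hedge, h]

lemma hedge_comm : hedge a b x y = hedge b a y x := by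
  by_cases h : a = b
  · subst h; rw [hedge_same, hedge_same, abs_sub_comm]
  · rw [hedge_ne h, hedge_ne (Ne.symm h), add_comm]

lemma abs_le_hedge (hx : 0 ≤ x) (hy : 0 ≤ y) : |x - y| ≤ hedge a b x y := by
  by_cases h : a = b
  · subst h; rw [hedge_same]
  · rw [hedge_ne h, abs_le]; constructor <;> linarith

lemma hedge_nonneg (hx : 0 ≤ x) (hy : 0 ≤ y) : 0 ≤ hedge a b x y :=
  (abs_nonneg _).trans (abs_le_hedge hx hy)

lemma hedge_le_add (hx : 0 ≤ x) (hy : 0 ≤ y) : hedge a b x y ≤ x + y := by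
  by_cases h : a = b
  · subst h; rw [hedge_same, abs_le]; constructor <;> linarith
  · rw [hedge_ne h]

lemma hedge_triangle (hx : 0 ≤ x) (hy : 0 ≤ y) (hz : 0 ≤ z) :
    hedge a c x z ≤ hedge a b x y + hedge b c y z := by
  by_cases h : a = b
  · subst h
    by_cases h' : a = c
    · subst h'; simp only [hedge_same]; exact abs_sub_le x y z
    · rw [hedge_same, hedge_ne h', hedge_ne h']
      linarith [le_abs_self (x - y)]
  · by_cases h' : b = c
    · subst h'
      rw [hedge_same, hedge_ne h, hedge_ne h]
      linarith [neg_abs_le (y - z)]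
    · rw [hedge_ne h, hedge_ne h']
      linarith [hedge_le_add (a := a) (b := c) hx hz]

end hedge

/-- The index set of the hairs: a multi-exponent `v` together with a level `n`. -/
abbrev Idx (m : ℕ) : Type := (Fin m → ℤ) × ℕ

/-- The monomial `γ ^ v = ∏ i, γ i ^ v i`. -/
noncomputable def mono {m : ℕ} (γ : Fin m → ℝ) (v : Fin m → ℤ) : ℝ := ∏ i, γ i ^ v i

/-- The length `n! * γ ^ v` of the hair with index `(v, n)`. -/
noncomputable def len {m : ℕ} (γ : Fin m → ℝ) (s : Idx m) : ℝ := (s.2.factorial : ℝ) * mono γ s.1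

/-- The distance on the index set: the lattice `ℤ ^ m` with a ray attached to each of its points. -/
noncomputable def dS {m : ℕ} (s t : Idx m) : ℝ :=
  dist s.1 t.1 + hedge s.1 t.1 (s.2 : ℝ) (t.2 : ℝ)

/-- The underlying set of the space: over each index `s` lies the half-line of integers
`i ≤ len γ s`. The points with `i > 0` form the *hair* over `s`, and those with `i ≤ 0` its *root*. -/
@[ext] structure Pt {m : ℕ} (γ : Fin m → ℝ) : Type where
  /-- the index of the fibre -/
  s : Idx m
  /-- the position in the fibre -/
  i : ℤ
  le : (i : ℝ) ≤ len γ s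

variable {m : ℕ} {γ : Fin m → ℝ}

lemma dS_nonneg (s t : Idx m) : 0 ≤ dS s t :=
  add_nonneg dist_nonneg (hedge_nonneg (by positivity) (by positivity))

lemma dS_self (s : Idx m) : dS s s = 0 := by simp [dS, hedge_same]

lemma dS_comm (s t : Idx m) : dS s t = dS t s := by
  rw [dS, dS, dist_comm, hedge_comm]

lemma dS_triangle (s t u : Idx m) : dS s u ≤ dS s t + dS t u := by
  have h1 := dist_triangle s.1 t.1 u.1
  have h2 := hedge_triangle (a := s.1) (b := t.1) (c := u.1) (x := (s.2 : ℝ)) (y := (t.2 : ℝ))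
    (z := (u.2 : ℝ)) (by positivity) (by positivity) (by positivity)
  simp only [dS]; linarith

namespace Pt

/-- The height of a point above the root of its hair. -/
noncomputable def h (x : Pt γ) : ℝ := max (x.i : ℝ) 0

/-- The depth of a point in the root of its hair. -/
noncomputable def d (x : Pt γ) : ℝ := max (-(x.i : ℝ)) 0

lemma h_nonneg (x : Pt γ) : 0 ≤ x.h := le_max_right _ _

lemma i_eq (x : Pt γ) : (x.i : ℝ) = x.h - x.d := by
  simp only [h, d]
  rcases le_total (x.i : ℝ) 0 with h | h
  · rw [max_eq_right h, max_eq_left (by linarith)]; ring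
  · rw [max_eq_left h, max_eq_right (by linarith)]; ring

lemma i_eq_h {x : Pt γ} (hx : 0 < x.h) : (x.i : ℝ) = x.h := by
  rw [h] at *
  rcases le_total (x.i : ℝ) 0 with h | h
  · rw [max_eq_right h] at hx; exact absurd hx (lt_irrefl _)
  · rw [max_eq_left h]

end Pt

lemma log_triangle (x y z : ℝ) :
    Real.log (1 + |x - z|) ≤ Real.log (1 + |x - y|) + Real.log (1 + |y - z|) := by
  rw [← Real.log_mul (by positivity) (by positivity)]
  apply Real.log_le_log (by positivity)
  nlinarith [abs_sub_le x y z, abs_nonneg (x - y), abs_nonneg (y - z)]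

lemma log_one_add_abs_nonneg (x : ℝ) : 0 ≤ Real.log (1 + |x|) :=
  Real.log_nonneg (by linarith [abs_nonneg x])

/-- Hairs carry the metric of an interval, while roots carry the logarithm of the metric of `ℕ`
and hence have exponential growth. -/
noncomputable instance : Dist (Pt γ) where
  dist x y := dS x.s y.s + hedge x.s y.s x.h y.h + Real.log (1 + |x.d - y.d|)

lemma dist_def (x y : Pt γ) :
    dist x y = dS x.s y.s + hedge x.s y.s x.h y.h + Real.log (1 + |x.d - y.d|) := rfl

lemma dS_le (x y : Pt γ) : dS x.s y.s ≤ dist x y := by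
  have := hedge_nonneg (a := x.s) (b := y.s) x.h_nonneg y.h_nonneg
  have := log_one_add_abs_nonneg (x.d - y.d)
  rw [dist_def]; linarith

lemma hedge_le (x y : Pt γ) : hedge x.s y.s x.h y.h ≤ dist x y := by
  have := dS_nonneg x.s y.s
  have := log_one_add_abs_nonneg (x.d - y.d)
  rw [dist_def]; linarith

lemma log_le (x y : Pt γ) : Real.log (1 + |x.d - y.d|) ≤ dist x y := by
  have := dS_nonneg x.s y.s
  have := hedge_nonneg (a := x.s) (b := y.s) x.h_nonneg y.h_nonneg
  rw [dist_def]; linarith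

lemma abs_h_sub_le (x y : Pt γ) : |x.h - y.h| ≤ dist x y :=
  (abs_le_hedge x.h_nonneg y.h_nonneg).trans (hedge_le x y)

lemma abs_i_sub_le (x y : Pt γ) : |(x.i : ℝ) - y.i| ≤ dist x y + Real.exp (dist x y) := by
  have h1 := abs_h_sub_le x y
  have h2 : |x.d - y.d| ≤ Real.exp (dist x y) := by
    have := (Real.log_le_iff_le_exp (by positivity)).1 (log_le x y)
    linarith
  rw [x.i_eq, y.i_eq]
  have : x.h - x.d - (y.h - y.d) = (x.h - y.h) - (x.d - y.d) := by ring
  rw [this]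
  exact (abs_sub _ _).trans (add_le_add h1 h2)

lemma abs_n_sub_le (x y : Pt γ) : |(x.s.2 : ℝ) - y.s.2| ≤ dist x y := by
  refine le_trans ?_ (dS_le x y)
  have := abs_le_hedge (a := x.s.1) (b := y.s.1) (x := (x.s.2 : ℝ)) (y := (y.s.2 : ℝ))
    (by positivity) (by positivity)
  have := dist_nonneg (x := x.s.1) (y := y.s.1)
  rw [dS]; linarith

lemma dist_v_le (x y : Pt γ) : dist x.s.1 y.s.1 ≤ dist x y := by
  refine le_trans ?_ (dS_le x y)
  have := hedge_nonneg (a := x.s.1) (b := y.s.1) (x := (x.s.2 : ℝ)) (y := (y.s.2 : ℝ))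
    (by positivity) (by positivity)
  rw [dS]; linarith

/-- Points on different hairs are at least as far apart as the sum of their heights. -/
lemma add_h_le {x y : Pt γ} (hs : x.s ≠ y.s) : x.h + y.h ≤ dist x y := by
  have := hedge_le x y
  rwa [hedge_ne hs] at this

lemma log_two_le {x y : Pt γ} (hxy : x ≠ y) : Real.log 2 ≤ dist x y := by
  have hlog : Real.log 2 ≤ 1 := by linarith [Real.log_two_lt_d9]
  by_cases hv : x.s.1 = y.s.1
  · by_cases hn : x.s.2 = y.s.2
    · have hs : x.s = y.s := Prod.ext hv hn
      have hi : x.i ≠ y.i := fun h => hxy (Pt.ext hs h)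
      by_cases hh : x.h = y.h
      · refine le_trans ?_ (log_le x y)
        apply Real.log_le_log (by norm_num)
        have e : |x.d - y.d| = |((x.i - y.i : ℤ) : ℝ)| := by
          push_cast; rw [x.i_eq, y.i_eq, hh, abs_sub_comm]; congr 1; ring
        have : (1 : ℝ) ≤ |((x.i - y.i : ℤ) : ℝ)| := by
          exact_mod_cast Int.one_le_abs (sub_ne_zero.2 hi)
        linarith
      · refine hlog.trans (le_trans ?_ (abs_h_sub_le x y))
        have hx : x.h = ((max x.i 0 : ℤ) : ℝ) := by simp [Pt.h]
        have hy : y.h = ((max y.i 0 : ℤ) : ℝ) := by simp [Pt.h]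
        have hne : max x.i 0 - max y.i 0 ≠ 0 := fun h => hh (by rw [hx, hy, sub_eq_zero.1 h])
        rw [hx, hy]
        exact_mod_cast Int.one_le_abs hne
    · refine hlog.trans (le_trans ?_ (abs_n_sub_le x y))
      have : ((x.s.2 : ℤ) - y.s.2) ≠ 0 := fun h => hn (by omega)
      exact_mod_cast Int.one_le_abs this
  · refine hlog.trans (le_trans ?_ (dist_v_le x y))
    obtain ⟨j, hj⟩ := Function.ne_iff.1 hv
    refine le_trans ?_ (dist_le_pi_dist x.s.1 y.s.1 j)
    rw [Int.dist_eq]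
    exact_mod_cast Int.one_le_abs (sub_ne_zero.2 hj)

noncomputable instance : MetricSpace (Pt γ) where
  dist_self x := by simp [dist_def, dS_self, hedge_same]
  dist_comm x y := by rw [dist_def, dist_def, dS_comm, hedge_comm, abs_sub_comm]
  dist_triangle x y z := by
    have h1 := dS_triangle x.s y.s z.s
    have h2 := hedge_triangle (a := x.s) (b := y.s) (c := z.s) x.h_nonneg y.h_nonneg z.h_nonneg
    have h3 := log_triangle x.d y.d z.d
    simp only [dist_def]; linarith
  eq_of_dist_eq_zero {x y} hxy := by
    by_contra hne
    have := log_two_le hne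
    linarith [Real.log_pos (by norm_num : (1 : ℝ) < 2)]

lemma uniformlyDiscrete : UniformlyDiscrete (Pt γ) :=
  ⟨Real.log 2, Real.log_pos (by norm_num), fun _ _ h => log_two_le h⟩

/-- A ball is contained in a box of `ℤ ^ m × ℤ × ℤ` whose size depends only on the radius, and boxes
of the same size are translates of each other. -/
lemma boundedGeometry : BoundedGeometry (Pt γ) := by
  intro r hr
  let e : Pt γ → (Fin m → ℤ) × ℤ × ℤ := fun x => (x.s.1, (x.s.2 : ℤ), x.i)
  have he : Function.Injective e := by
    intro x y hxy
    simp only [e, Prod.mk.injEq, Nat.cast_inj] at hxy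
    exact Pt.ext (Prod.ext hxy.1 hxy.2.1) hxy.2.2
  let R := r + Real.exp r
  let Q : Set ((Fin m → ℤ) × ℤ × ℤ) := Metric.closedBall 0 R
  have hQ : Q.Finite := (isCompact_closedBall _ _).finite_of_discrete
  refine ⟨Q.ncard, fun x => ?_⟩
  let f : Pt γ → (Fin m → ℤ) × ℤ × ℤ := fun y => e y - e x
  have hf : Function.Injective f := fun y z h => he (sub_left_injective h)
  have hsub : f '' Metric.closedBall x r ⊆ Q := by
    rintro _ ⟨y, hy, rfl⟩
    have hy' : dist y x ≤ r := hy
    have hexp := Real.exp_pos r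
    have h1 := (dist_v_le y x).trans hy'
    have h2 := (abs_n_sub_le y x).trans hy'
    have h3 : |(y.i : ℝ) - x.i| ≤ R :=
      (abs_i_sub_le y x).trans (add_le_add hy' (Real.exp_le_exp.2 hy'))
    simp only [Q, Metric.mem_closedBall, dist_zero_right, f]
    rw [← dist_eq_norm, Prod.dist_eq, Prod.dist_eq]
    refine max_le (by simp only [e, R]; linarith) (max_le ?_ ?_)
    · rw [Int.dist_eq]; simp only [e, R]; push_cast; linarith
    · rw [Int.dist_eq]; exact h3
  have hfin : (Metric.closedBall x r).Finite :=
    Set.Finite.of_finite_image (hQ.subset hsub) hf.injOn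
  refine ⟨hfin, ?_⟩
  rw [← Set.ncard_image_of_injective _ hf]
  exact Set.ncard_le_ncard hsub hQ

lemma nbhd_ncard {X : Type} [MetricSpace X] (hX : BoundedGeometry X) (r : ℝ) (hr : 0 < r) :
    ∃ B : ℕ, ∀ (F : Finset X) (T : Set X), (∀ x ∈ T, ∃ a ∈ F, dist x a ≤ r) →
      T.Finite ∧ T.ncard ≤ F.card * B := by
  classical
  obtain ⟨B, hB⟩ := hX r hr
  refine ⟨B, fun F T hT => ?_⟩
  have hsub : T ⊆ ↑(F.biUnion fun a => (hB a).1.toFinset) := by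
    intro x hx
    obtain ⟨a, ha, hxa⟩ := hT x hx
    simp only [Finset.coe_biUnion, Set.mem_iUnion, Set.Finite.coe_toFinset]
    exact ⟨a, ha, hxa⟩
  refine ⟨(Finset.finite_toSet _).subset hsub, ?_⟩
  refine (Set.ncard_le_ncard hsub (Finset.finite_toSet _)).trans ?_
  rw [Set.ncard_coe_finset]
  refine Finset.card_biUnion_le_card_mul _ _ _ fun a _ => ?_
  rw [← Set.ncard_eq_toFinset_card _ (hB a).1]
  exact (hB a).2

lemma exists_of_mem_rBoundary {X : Type} [MetricSpace X] {r : ℝ} {A : Set X} (hA : A.Nonempty)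
    {x : X} (hx : x ∈ rBoundary r A) : ∃ a ∈ A, dist x a < r + 1 :=
  (Metric.infDist_lt_iff hA).1 (hx.1.trans_lt (lt_add_one r))

lemma exists_of_mem_rBoundary' {X : Type} [MetricSpace X] {r : ℝ} {A : Set X} (hA : Aᶜ.Nonempty)
    {x : X} (hx : x ∈ rBoundary r A) : ∃ a ∉ A, dist x a < r + 1 :=
  (Metric.infDist_lt_iff hA).1 (hx.2.trans_lt (lt_add_one r))

lemma rBoundary_finite {r : ℝ} (hr : 0 < r) {A : Set (Pt γ)} (hA : A.Finite)
    (hne : A.Nonempty) : (rBoundary r A).Finite := by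
  obtain ⟨B, hB⟩ := nbhd_ncard (boundedGeometry (γ := γ)) (r + 1) (by linarith)
  refine (hB hA.toFinset _ fun x hx => ?_).1
  obtain ⟨a, ha, hxa⟩ := exists_of_mem_rBoundary hne hx
  exact ⟨a, by simpa using ha, hxa.le⟩

lemma dist_same_le {x y : Pt γ} (hs : x.s = y.s) : dist x y ≤ 2 * |(x.i : ℝ) - y.i| := by
  have h1 : |x.h - y.h| ≤ |(x.i : ℝ) - y.i| := by
    simpa [Pt.h] using abs_max_sub_max_le_abs (x.i : ℝ) (y.i : ℝ) 0
  have h2 : |x.d - y.d| ≤ |(x.i : ℝ) - y.i| := by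
    have := abs_max_sub_max_le_abs (-(x.i : ℝ)) (-(y.i : ℝ)) 0
    rw [neg_sub_neg, abs_sub_comm (y.i : ℝ)] at this
    exact this
  have h3 : Real.log (1 + |x.d - y.d|) ≤ |x.d - y.d| := by
    have := Real.log_le_sub_one_of_pos (show 0 < 1 + |x.d - y.d| by positivity)
    linarith
  rw [dist_def, hs, dS_self, hedge_same]
  linarith

/-! ### Upper parts of hairs -/

/-- The part of the hair over `s` above height `c`. -/
def top (γ : Fin m → ℝ) (s : Idx m) (c : ℕ) : Set (Pt γ) := {x | x.s = s ∧ (c : ℤ) < x.i}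

lemma lt_h_iff {x : Pt γ} {c : ℕ} : (c : ℝ) < x.h ↔ (c : ℤ) < x.i := by
  rw [Pt.h, lt_max_iff]
  constructor
  · rintro (h | h)
    · exact_mod_cast h
    · exact absurd h (by simp)
  · intro h; left; exact_mod_cast h

lemma injOn_i (s : Idx m) : Set.InjOn (Pt.i (γ := γ)) {x | x.s = s} := by
  intro x hx y hy h
  exact Pt.ext (hx.trans hy.symm) h

lemma image_i_top (s : Idx m) (c : ℕ) :
    Pt.i '' top γ s c = ↑(Finset.Ioc (c : ℤ) ⌊len γ s⌋) := by
  ext i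
  simp only [Set.mem_image, Finset.coe_Ioc, Set.mem_Ioc]
  constructor
  · rintro ⟨x, ⟨hs, hx⟩, rfl⟩
    exact ⟨hx, Int.le_floor.2 (hs ▸ x.le)⟩
  · rintro ⟨h1, h2⟩
    exact ⟨⟨s, i, Int.le_floor.1 h2⟩, ⟨rfl, h1⟩, rfl⟩

lemma top_finite (s : Idx m) (c : ℕ) : (top γ s c).Finite :=
  Set.Finite.of_finite_image (by rw [image_i_top]; exact Finset.finite_toSet _)
    ((injOn_i s).mono fun _ h => h.1)

lemma top_ncard (s : Idx m) (c : ℕ) : (top γ s c).ncard = (⌊len γ s⌋ - c).toNat := by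
  rw [← ((injOn_i s).mono fun _ h => h.1).ncard_image, image_i_top,
    Set.ncard_coe_finset, Int.card_Ioc]

lemma fibre_ncard_le {s : Idx m} {T : Set (Pt γ)} (a b : ℤ)
    (hT : ∀ x ∈ T, x.s = s ∧ a ≤ x.i ∧ x.i ≤ b) : T.Finite ∧ T.ncard ≤ (b + 1 - a).toNat := by
  have hinj : Set.InjOn (Pt.i (γ := γ)) T := (injOn_i s).mono fun x h => (hT x h).1
  have hsub : Pt.i '' T ⊆ ↑(Finset.Icc a b) := by
    rintro _ ⟨x, hx, rfl⟩
    simpa using (hT x hx).2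
  refine ⟨Set.Finite.of_finite_image ((Finset.finite_toSet _).subset hsub) hinj, ?_⟩
  rw [← hinj.ncard_image, ← Int.card_Icc, ← Set.ncard_coe_finset]
  exact Set.ncard_le_ncard hsub (Finset.finite_toSet _)

lemma len_nonneg (hγ : ∀ i, 0 < γ i) (s : Idx m) : 0 ≤ len γ s :=
  mul_nonneg (by positivity) (Finset.prod_nonneg fun i _ => (zpow_pos (hγ i) _).le)

/-- The boundary of an upper part of a hair lies near its lower end, so that its size is bounded
independently of the hair. -/
lemma top_boundary (hγ : ∀ i, 0 < γ i) (r : ℝ) (hr : 0 < r) (c : ℕ) :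
    ∃ C : ℕ, ∀ s, (top γ s c).Nonempty → (rBoundary r (top γ s c)).ncard ≤ C := by
  obtain ⟨B, hB⟩ := nbhd_ncard (boundedGeometry (γ := γ)) (r + 1) (by linarith)
  refine ⟨(⌈c + (2 * r + 2)⌉ + 1 - 0).toNat * B, fun s hne => ?_⟩
  have hcne : (top γ s c)ᶜ.Nonempty :=
    ⟨⟨s, 0, by simpa using len_nonneg hγ s⟩, fun h => absurd h.2 (by simp)⟩
  let T : Set (Pt γ) := {x | x.s = s ∧ 0 ≤ x.i ∧ x.i ≤ ⌈c + (2 * r + 2)⌉}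
  have hT := fibre_ncard_le (s := s) (T := T) 0 ⌈c + (2 * r + 2)⌉ fun x hx => hx
  refine (hB hT.1.toFinset (rBoundary r (top γ s c)) fun x hx => ?_).2.trans ?_
  · obtain ⟨a, ha, hxa⟩ := exists_of_mem_rBoundary hne hx
    obtain ⟨b, hb, hxb⟩ := exists_of_mem_rBoundary' hcne hx
    refine ⟨a, ?_, hxa.le⟩
    have hab : dist a b ≤ 2 * r + 2 := by
      have := dist_triangle_left a b x
      linarith
    have hai : 0 < a.i := lt_of_le_of_lt (by positivity) ha.2
    have hah : a.h ≤ c + (2 * r + 2) := by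
      by_cases hs : b.s = a.s
      · have h1 : ¬ ((c : ℝ) < b.h) := fun h => hb ⟨hs.trans ha.1, lt_h_iff.1 h⟩
        have h2 := (le_abs_self _).trans (abs_h_sub_le a b)
        linarith
      · have h1 := add_h_le (Ne.symm hs)
        have := b.h_nonneg
        have : (0 : ℝ) ≤ c := by positivity
        linarith
    simp only [Set.Finite.mem_toFinset, T, Set.mem_ofPred_eq]
    refine ⟨ha.1, hai.le, ?_⟩
    have : (a.i : ℝ) ≤ ⌈(c : ℝ) + (2 * r + 2)⌉ :=
      (le_max_left _ _).trans (hah.trans (Int.le_ceil _))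
    exact_mod_cast this
  · rw [← Set.ncard_eq_toFinset_card _ hT.1]
    exact Nat.mul_le_mul_right _ hT.2

/-- Hairs of index `(0, n)` form a Følner sequence. -/
lemma amenable (hγ : ∀ i, 0 < γ i) : MetricAmenable (Pt γ) := by
  have hlen : ∀ n : ℕ, len γ (0, n) = ((n.factorial : ℤ) : ℝ) := fun n => by simp [len, mono]
  have hcard : ∀ n : ℕ, (top γ (0, n) 0).ncard = n.factorial := fun n => by
    rw [top_ncard, hlen, Int.floor_intCast]; simp
  have hne : ∀ n : ℕ, (top γ (0, n) 0).Nonempty := fun n => by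
    rw [← Set.ncard_pos (top_finite _ _), hcard]; exact n.factorial_pos
  refine ⟨fun n => top γ (0, n) 0, fun n => ⟨hne n, top_finite _ _⟩, fun r hr => ?_⟩
  obtain ⟨C, hC⟩ := top_boundary hγ r hr 0
  have hlim : Filter.Tendsto (fun n : ℕ => (C : ℝ) / (n.factorial : ℝ)) Filter.atTop (nhds 0) :=
    tendsto_const_nhds.div_atTop
      (tendsto_natCast_atTop_atTop.comp
        (Filter.tendsto_atTop_mono Nat.self_le_factorial Filter.tendsto_id))
  refine squeeze_zero (fun n => by positivity) (fun n => ?_) hlim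
  simp only [hcard]
  have : ((rBoundary r (top γ (0, n) 0)).ncard : ℝ) ≤ C := by exact_mod_cast hC _ (hne n)
  gcongr

/-! ### The shift maps -/

lemma mono_pos (hγ : ∀ i, 0 < γ i) (v : Fin m → ℤ) : 0 < mono γ v :=
  Finset.prod_pos fun i _ => zpow_pos (hγ i) _

lemma mono_add (hγ : ∀ i, 0 < γ i) (u v : Fin m → ℤ) : mono γ (u + v) = mono γ u * mono γ v := by
  simp only [mono, ← Finset.prod_mul_distrib]
  exact Finset.prod_congr rfl fun i _ => zpow_add₀ (hγ i).ne' _ _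

lemma mono_neg (u : Fin m → ℤ) : mono γ (-u) = (mono γ u)⁻¹ := by
  simp [mono, Finset.prod_inv_distrib]

lemma len_shift (hγ : ∀ i, 0 < γ i) (u : Fin m → ℤ) (s : Idx m) :
    len γ (s.1 + u, s.2) = mono γ u * len γ s := by
  simp only [len, mono_add hγ]; ring

/-- The shift by `u` translates the indices by `u` and stretches the fibres by `γ ^ u`. -/
noncomputable def shift (hγ : ∀ i, 0 < γ i) (u : Fin m → ℤ) (x : Pt γ) : Pt γ where
  s := (x.s.1 + u, x.s.2)
  i := ⌊mono γ u * x.i⌋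
  le := by
    rw [len_shift hγ]
    exact (Int.floor_le _).trans (mul_le_mul_of_nonneg_left x.le (mono_pos hγ u).le)

lemma shift_h (hγ : ∀ i, 0 < γ i) (u : Fin m → ℤ) (x : Pt γ) :
    (shift hγ u x).h = ⌊mono γ u * x.h⌋ := by
  have hk := mono_pos hγ u
  simp only [Pt.h, shift]
  rcases le_total (x.i : ℝ) 0 with h | h
  · rw [max_eq_right h, max_eq_right]
    · simp
    · exact (Int.floor_le _).trans (mul_nonpos_of_nonneg_of_nonpos hk.le h)
  · rw [max_eq_left h, max_eq_left]
    exact_mod_cast Int.floor_nonneg.2 (mul_nonneg hk.le h)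

lemma shift_d (hγ : ∀ i, 0 < γ i) (u : Fin m → ℤ) (x : Pt γ) :
    (shift hγ u x).d = ⌈mono γ u * x.d⌉ := by
  have hk := mono_pos hγ u
  simp only [Pt.d, shift]
  rcases le_total (x.i : ℝ) 0 with h | h
  · rw [max_eq_left (by linarith : (0 : ℝ) ≤ -x.i), max_eq_left, mul_neg, Int.ceil_neg]
    · push_cast; rfl
    · have := (Int.floor_le _).trans (mul_nonpos_of_nonneg_of_nonpos hk.le h)
      linarith
  · rw [max_eq_right (by linarith : -(x.i : ℝ) ≤ 0), max_eq_right]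
    · simp
    · have : (0 : ℝ) ≤ ⌊mono γ u * x.i⌋ := by
        exact_mod_cast Int.floor_nonneg.2 (mul_nonneg hk.le h)
      linarith

lemma shift_s_inj (hγ : ∀ i, 0 < γ i) (u : Fin m → ℤ) (x y : Pt γ) :
    (shift hγ u x).s = (shift hγ u y).s ↔ x.s = y.s := by
  simp [shift, Prod.ext_iff]

lemma shift_lipschitz (hγ : ∀ i, 0 < γ i) (u : Fin m → ℤ) :
    ∃ K : ℝ, 1 ≤ K ∧ ∀ x y, dist (shift hγ u x) (shift hγ u y) ≤ K * dist x y + K := by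
  set k := mono γ u with hkdef
  have hk : 0 < k := mono_pos hγ u
  have hlog : 0 ≤ Real.log (k + 2) := Real.log_nonneg (by linarith)
  refine ⟨k + 2 + Real.log (k + 2), by linarith, fun x y => ?_⟩
  have h1 : dS (shift hγ u x).s (shift hγ u y).s = dS x.s y.s := by
    by_cases hv : x.s.1 = y.s.1
    · simp [dS, shift, hv, hedge_same]
    · have : x.s.1 + u ≠ y.s.1 + u := fun h => hv (add_right_cancel h)
      simp [dS, shift, hedge_ne hv, hedge_ne this]
  have h2 : hedge (shift hγ u x).s (shift hγ u y).s (shift hγ u x).h (shift hγ u y).h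
      ≤ k * hedge x.s y.s x.h y.h + 1 := by
    rw [shift_h, shift_h, ← hkdef]
    have a1 := Int.floor_le (k * x.h)
    have a2 := Int.floor_le (k * y.h)
    have a3 := Int.lt_floor_add_one (k * x.h)
    have a4 := Int.lt_floor_add_one (k * y.h)
    by_cases hs : x.s = y.s
    · rw [(shift_s_inj hγ u x y).2 hs, hs, hedge_same, hedge_same]
      have b1 : k * (x.h - y.h) ≤ k * |x.h - y.h| :=
        mul_le_mul_of_nonneg_left (le_abs_self _) hk.le
      have b2 : k * -|x.h - y.h| ≤ k * (x.h - y.h) :=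
        mul_le_mul_of_nonneg_left (neg_abs_le _) hk.le
      rw [abs_le]; constructor <;> linarith
    · rw [hedge_ne hs, hedge_ne (fun h => hs ((shift_s_inj hγ u x y).1 h))]
      linarith
  have h3 : Real.log (1 + |(shift hγ u x).d - (shift hγ u y).d|)
      ≤ Real.log (1 + |x.d - y.d|) + Real.log (k + 2) := by
    rw [shift_d, shift_d, ← hkdef, ← Real.log_mul (by positivity) (by positivity)]
    apply Real.log_le_log (by positivity)
    have a1 := Int.le_ceil (k * x.d)
    have a2 := Int.le_ceil (k * y.d)
    have a3 := Int.ceil_lt_add_one (k * x.d)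
    have a4 := Int.ceil_lt_add_one (k * y.d)
    have b1 : k * (x.d - y.d) ≤ k * |x.d - y.d| :=
      mul_le_mul_of_nonneg_left (le_abs_self _) hk.le
    have b2 : k * -|x.d - y.d| ≤ k * (x.d - y.d) :=
      mul_le_mul_of_nonneg_left (neg_abs_le _) hk.le
    have : |(⌈k * x.d⌉ : ℝ) - ⌈k * y.d⌉| ≤ k * |x.d - y.d| + 1 := by
      rw [abs_le]; constructor <;> linarith
    nlinarith [abs_nonneg (x.d - y.d)]
  have c1 := dS_nonneg x.s y.s
  have c2 := hedge_nonneg (a := x.s) (b := y.s) x.h_nonneg y.h_nonneg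
  have c3 := log_one_add_abs_nonneg (x.d - y.d)
  rw [dist_def, dist_def, h1]
  nlinarith [mul_nonneg hk.le c1, mul_nonneg hk.le c3, mul_nonneg hlog c1, mul_nonneg hlog c2,
    mul_nonneg hlog c3]

lemma shift_neg_shift (hγ : ∀ i, 0 < γ i) (u : Fin m → ℤ) :
    ∃ M : ℝ, ∀ x, dist (shift hγ (-u) (shift hγ u x)) x ≤ M := by
  have hk := mono_pos hγ u
  refine ⟨2 * ((mono γ u)⁻¹ + 1), fun x => ?_⟩
  refine (dist_same_le (by simp [shift])).trans ?_
  simp only [shift, mono_neg]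
  set k := mono γ u
  have a1 := Int.floor_le (k * x.i)
  have a2 := Int.lt_floor_add_one (k * x.i)
  have a3 := Int.floor_le (k⁻¹ * ⌊k * x.i⌋)
  have a4 := Int.lt_floor_add_one (k⁻¹ * ⌊k * x.i⌋)
  have hk' := inv_pos.2 hk
  have b1 := mul_le_mul_of_nonneg_left a1 hk'.le
  have b2 := mul_le_mul_of_nonneg_left a2.le hk'.le
  rw [mul_add, inv_mul_cancel_left₀ hk.ne'] at b2
  rw [inv_mul_cancel_left₀ hk.ne'] at b1
  gcongr
  rw [abs_le]; constructor <;> linarith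

lemma shift_quasiIsometry (hγ : ∀ i, 0 < γ i) (u : Fin m → ℤ) :
    IsQuasiIsometry (shift hγ u) := by
  obtain ⟨K1, hK1, h1⟩ := shift_lipschitz hγ u
  obtain ⟨K2, hK2, h2⟩ := shift_lipschitz hγ (-u)
  obtain ⟨M1, hM1⟩ := shift_neg_shift hγ u
  obtain ⟨M2, hM2⟩ := shift_neg_shift hγ (-u)
  rw [neg_neg] at hM2
  have hM1' : 0 ≤ M1 := dist_nonneg.trans (hM1 ⟨0, 0, by simpa using len_nonneg hγ 0⟩)
  have hM2' : 0 ≤ M2 := dist_nonneg.trans (hM2 ⟨0, 0, by simpa using len_nonneg hγ 0⟩)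
  set K := K1 + K2 + 2 * M1 + M2 with hK
  have hKpos : 0 < K := by linarith
  refine ⟨K, by linarith, fun a b => ⟨?_, ?_⟩, fun y => ⟨shift hγ (-u) y, ?_⟩⟩
  · have e1 := h2 (shift hγ u a) (shift hγ u b)
    have e2 := hM1 a
    have e3 := hM1 b
    have e4 := dist_triangle4 a (shift hγ (-u) (shift hγ u a)) (shift hγ (-u) (shift hγ u b)) b
    rw [dist_comm a (shift hγ (-u) (shift hγ u a))] at e4
    have hD := dist_nonneg (x := shift hγ u a) (y := shift hγ u b)
    rw [sub_le_iff_le_add, div_le_iff₀ hKpos]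
    nlinarith
  · refine (h1 a b).trans ?_
    have := dist_nonneg (x := a) (y := b)
    nlinarith
  · rw [dist_comm]
    exact (hM2 y).trans (by linarith)

/-- Summation by parts over a finite set: the sum of the increments of a bounded function along an
injection `σ` is controlled by the number of points of the set that `σ` enters from outside. -/
lemma abs_sum_increment_le {α : Type} [DecidableEq α] (B : Finset α) (σ : α → α)
    (hσ : Function.Injective σ) (G : α → ℝ) (M : ℝ) (h1 : ∀ b ∈ B, |G b| ≤ M)
    (h2 : ∀ b ∈ B, |G (σ b)| ≤ M) :
    |∑ b ∈ B, (G (σ b) - G b)| ≤ 2 * M * ((B \ B.image σ).card : ℝ) := by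
  rw [Finset.sum_sub_distrib, ← Finset.sum_image (f := G) (s := B) (g := σ) hσ.injOn,
    ← Finset.sum_sdiff_sub_sum_sdiff]
  have hc : (B.image σ \ B).card = (B \ B.image σ).card :=
    Finset.card_sdiff_comm (Finset.card_image_of_injective B hσ)
  have e1 : |∑ b ∈ B.image σ \ B, G b| ≤ ((B \ B.image σ).card : ℝ) * M := by
    refine (Finset.abs_sum_le_sum_abs _ _).trans ?_
    rw [← hc, ← nsmul_eq_mul]
    refine Finset.sum_le_card_nsmul _ _ _ fun b hb => ?_
    obtain ⟨a, ha, rfl⟩ := Finset.mem_image.1 (Finset.mem_sdiff.1 hb).1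
    exact h2 a ha
  have e2 : |∑ b ∈ B \ B.image σ, G b| ≤ ((B \ B.image σ).card : ℝ) * M := by
    refine (Finset.abs_sum_le_sum_abs _ _).trans ?_
    rw [← nsmul_eq_mul]
    exact Finset.sum_le_card_nsmul _ _ _ fun b hb => h1 b (Finset.mem_sdiff.1 hb).1
  have := abs_sub (∑ b ∈ B.image σ \ B, G b) (∑ b ∈ B \ B.image σ, G b)
  linarith

/-- The least position in the fibre over `s - u` that the stretch by `k = γ ^ u` sends to at least
`x`, capped by the first position beyond the tip of that fibre. -/
noncomputable def cut (γ : Fin m → ℝ) (k : ℝ) (p : Idx m × ℤ) : ℤ :=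
  min ⌈(p.2 : ℝ) / k⌉ (⌊len γ p.1 / k⌋ + 1)

lemma cut_le {k : ℝ} (hk : 0 < k) {p : Idx m × ℤ} (hp : (p.2 : ℝ) ≤ len γ p.1 + 1) :
    |(cut γ k p : ℝ) - p.2 / k| ≤ 1 + 1 / k := by
  have hk' : 0 < 1 / k := by positivity
  have a1 := Int.le_ceil ((p.2 : ℝ) / k)
  have a2 := Int.ceil_lt_add_one ((p.2 : ℝ) / k)
  have a3 := Int.lt_floor_add_one (len γ p.1 / k)
  have a4 : (p.2 : ℝ) / k ≤ len γ p.1 / k + 1 / k := by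
    rw [← add_div]; gcongr
  rw [cut, Int.cast_min, abs_le]
  push_cast
  constructor
  · have : (p.2 : ℝ) / k - 1 / k ≤ min (⌈(p.2 : ℝ) / k⌉ : ℝ) ((⌊len γ p.1 / k⌋ : ℝ) + 1) :=
      le_min (by linarith) (by linarith)
    linarith
  · have := min_le_left (⌈(p.2 : ℝ) / k⌉ : ℝ) ((⌊len γ p.1 / k⌋ : ℝ) + 1)
    linarith

/-- The preimage of a point is an interval of a fibre with end points given by `cut`, so that the
number of preimages is an increment of `cut`. -/
lemma shift_fibre (hγ : ∀ i, 0 < γ i) (u : Fin m → ℤ) (a : Pt γ) :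
    {x | shift hγ u x = a}.Finite ∧ ({x | shift hγ u x = a}.ncard : ℝ) =
      cut γ (mono γ u) (a.s, a.i + 1) - cut γ (mono γ u) (a.s, a.i) := by
  have hk := mono_pos hγ u
  set k := mono γ u with hkdef
  have hs : ∀ x, shift hγ u x = a → x.s = (a.s.1 - u, a.s.2) := by
    rintro x rfl
    simp [shift]
  have hlen : len γ a.s / k = len γ (a.s.1 - u, a.s.2) := by
    rw [div_eq_iff hk.ne', mul_comm, ← len_shift hγ]; simp
  have hcut : cut γ k (a.s, a.i) = ⌈(a.i : ℝ) / k⌉ := by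
    rw [cut, min_eq_left]
    rw [Int.ceil_le]
    push_cast
    have : (a.i : ℝ) / k ≤ len γ a.s / k := by gcongr; exact a.le
    exact this.trans (Int.lt_floor_add_one _).le
  have hinj : Set.InjOn (Pt.i (γ := γ)) {x | shift hγ u x = a} :=
    (injOn_i _).mono hs
  have himg : Pt.i '' {x | shift hγ u x = a} =
      ↑(Finset.Ico (cut γ k (a.s, a.i)) (cut γ k (a.s, a.i + 1))) := by
    ext i
    have e1 : ⌊k * (i : ℝ)⌋ = a.i ↔ (a.i : ℝ) / k ≤ i ∧ (i : ℝ) < (a.i + 1) / k := by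
      rw [Int.floor_eq_iff, div_le_iff₀ hk, lt_div_iff₀ hk, mul_comm]
    rw [hcut, cut]
    simp only [Finset.coe_Ico, Set.mem_Ico, lt_min_iff, Int.ceil_le, Int.lt_ceil,
      Int.lt_add_one_iff, Int.le_floor, hlen]
    push_cast
    constructor
    · rintro ⟨x, hx, rfl⟩
      have hx' : shift hγ u x = a := hx
      have h1 : ⌊k * (x.i : ℝ)⌋ = a.i := by rw [← hx']; rfl
      exact ⟨(e1.1 h1).1, (e1.1 h1).2, hs x hx' ▸ x.le⟩
    · rintro ⟨h1, h2, h3⟩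
      refine ⟨⟨(a.s.1 - u, a.s.2), i, h3⟩, ?_, rfl⟩
      refine Pt.ext ?_ (e1.2 ⟨h1, h2⟩)
      simp [shift]
  refine ⟨Set.Finite.of_finite_image (by rw [himg]; exact Finset.finite_toSet _) hinj, ?_⟩
  rw [← hinj.ncard_image, himg, Set.ncard_coe_finset, Int.card_Ico]
  have hle : cut γ k (a.s, a.i) ≤ cut γ k (a.s, a.i + 1) := by
    simp only [cut]
    refine min_le_min_right _ (Int.ceil_le_ceil ?_)
    gcongr
    simp
  rw [← Int.cast_natCast, Int.toNat_of_nonneg (sub_nonneg.2 hle)]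
  push_cast; rfl

/-- On each fibre the defect `#preimage - k⁻¹` is the increment of the bounded function
`cut - i / k`. Its sum over `A` only sees the points of `A` whose predecessor in the fibre is not in
`A`, and these lie in the boundary of `A`. -/
lemma shift_scaling (hγ : ∀ i, 0 < γ i) (u : Fin m → ℤ) :
    CoarselyScaling (shift hγ u) (mono γ u)⁻¹ := by
  classical
  have hk := mono_pos hγ u
  have hfib := shift_fibre hγ u
  set k := mono γ u with hkdef
  refine ⟨2, by norm_num, 2 * (1 + 1 / k), by positivity, fun A hA => ?_⟩
  rcases A.eq_empty_or_nonempty with rfl | hne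
  · simp only [Set.preimage_empty, Set.ncard_empty, Nat.cast_zero, mul_zero, sub_zero, abs_zero]
    positivity
  let e : Pt γ → Idx m × ℤ := fun x => (x.s, x.i)
  have he : Function.Injective e := fun x y h => by
    simp only [e, Prod.mk.injEq] at h
    exact Pt.ext h.1 h.2
  let σ : Idx m × ℤ → Idx m × ℤ := fun p => (p.1, p.2 + 1)
  have hσ : Function.Injective σ := fun p q h => by
    simp only [σ, Prod.mk.injEq, add_left_inj] at h
    exact Prod.ext h.1 h.2
  let G : Idx m × ℤ → ℝ := fun p => cut γ k p - p.2 / k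
  let B : Finset (Idx m × ℤ) := hA.toFinset.image e
  have hpre : (shift hγ u ⁻¹' A).Finite := by
    have : shift hγ u ⁻¹' A = ⋃ a ∈ A, {x | shift hγ u x = a} := by ext x; simp
    rw [this]
    exact hA.biUnion fun a _ => (hfib a).1
  have hcount : ((shift hγ u ⁻¹' A).ncard : ℝ) - k⁻¹ * (A.ncard : ℝ) =
      ∑ b ∈ B, (G (σ b) - G b) := by
    rw [Finset.sum_image he.injOn, Set.ncard_eq_toFinset_card _ hpre,
      Set.ncard_eq_toFinset_card _ hA,
      Finset.card_eq_sum_card_fiberwise (f := shift hγ u) (t := hA.toFinset)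
        (fun x hx => by simpa using hx), Nat.cast_sum, mul_comm, ← nsmul_eq_mul,
      ← Finset.sum_const, ← Finset.sum_sub_distrib]
    refine Finset.sum_congr rfl fun a ha => ?_
    have e1 : ((hpre.toFinset.filter fun x => shift hγ u x = a).card : ℝ) =
        ({x | shift hγ u x = a}.ncard : ℝ) := by
      rw [← Set.ncard_coe_finset]
      congr 2
      ext x
      simp only [Finset.coe_filter, Set.Finite.mem_toFinset, Set.mem_preimage, Set.mem_ofPred_eq]
      refine ⟨fun h => h.2, fun h => ⟨?_, h⟩⟩
      rw [h]; simpa using ha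
    rw [e1, (hfib a).2]
    simp only [G, σ, e]
    push_cast
    field_simp
    ring
  have hB : ∀ b ∈ B, (b.2 : ℝ) ≤ len γ b.1 := by
    intro b hb
    obtain ⟨x, _, rfl⟩ := Finset.mem_image.1 hb
    exact x.le
  have hmain := abs_sum_increment_le B σ hσ G (1 + 1 / k)
    (fun b hb => cut_le hk (by linarith [hB b hb]))
    (fun b hb => cut_le hk (by simp only [σ]; push_cast; linarith [hB b hb]))
  rw [hcount]
  refine hmain.trans ?_
  have hfin := rBoundary_finite (r := 2) (by norm_num) hA hne
  gcongr
  rw [Set.ncard_eq_toFinset_card _ hfin]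
  refine le_trans (Finset.card_le_card ?_) (Finset.card_image_le (f := e))
  intro b hb
  obtain ⟨hb1, hb2⟩ := Finset.mem_sdiff.1 hb
  obtain ⟨x, hx, rfl⟩ := Finset.mem_image.1 hb1
  rw [Set.Finite.mem_toFinset] at hx
  refine Finset.mem_image_of_mem e ?_
  -- The point just below `x` exists because fibres are closed downwards.
  let y : Pt γ := ⟨x.s, x.i - 1, by push_cast; linarith [x.le]⟩
  have hy : y ∉ A := fun hy => hb2 <| Finset.mem_image.2
    ⟨e y, Finset.mem_image_of_mem e (by simpa using hy), by simp [σ, e, y]⟩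
  have hxy : dist x y ≤ 2 := by
    refine (dist_same_le (x := x) (y := y) rfl).trans ?_
    simp [y]
  rw [Set.Finite.mem_toFinset]
  refine ⟨?_, (Metric.infDist_le_dist_of_mem hy).trans hxy⟩
  rw [Metric.infDist_zero_of_mem hx]; norm_num

/-! ### Rigidity of quasi-isometries -/

/-- The part of the definition of a quasi-isometry needed to compare growth: `f` is coarsely
Lipschitz and its point preimages have bounded diameter. -/
structure CoarseEmb (f : Pt γ → Pt γ) (K : ℝ) : Prop where
  one_le : 1 ≤ K
  lip : ∀ a b, dist (f a) (f b) ≤ K * dist a b + K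
  sep : ∀ a b, f a = f b → dist a b ≤ K

lemma exists_log_lt (a b : ℝ) (hb : 0 ≤ b) : ∃ N : ℕ, a + b * Real.log (1 + N) < N + 1 := by
  have h1 := Real.isLittleO_log_id_atTop.bound (show (0 : ℝ) < 1 / (2 * (b + 1)) by positivity)
  have h2 : Filter.Tendsto (fun n : ℕ => (1 : ℝ) + n) Filter.atTop Filter.atTop :=
    Filter.tendsto_atTop_add_const_left _ _ tendsto_natCast_atTop_atTop
  obtain ⟨N, hN, hN'⟩ := ((h2.eventually h1).and (h2.eventually_gt_atTop (2 * a))).exists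
  refine ⟨N, ?_⟩
  simp only [Real.norm_eq_abs, id] at hN
  rw [abs_of_nonneg (show (0 : ℝ) ≤ 1 + N by positivity)] at hN
  have h3 : b * Real.log (1 + N) ≤ (b + 1) * (1 / (2 * (b + 1)) * (1 + N)) := by
    have hl : (0 : ℝ) ≤ Real.log (1 + N) := Real.log_nonneg (by simp)
    have := (le_abs_self _).trans hN
    nlinarith
  have h4 : (b + 1) * (1 / (2 * (b + 1)) * (1 + (N : ℝ))) = (1 + N) / 2 := by field_simp
  linarith

/-- The point `j` positions below `x` in its fibre, or below the position `0` if `x` lies on a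
hair. -/
def below (x : Pt γ) (j : ℕ) : Pt γ :=
  ⟨x.s, min x.i 0 - j, by
    have h1 : ((min x.i 0 : ℤ) : ℝ) ≤ x.i := by exact_mod_cast min_le_left _ _
    have h2 : (0 : ℝ) ≤ j := by positivity
    push_cast at h1 ⊢
    linarith [x.le]⟩

lemma dist_below (x : Pt γ) (j : ℕ) : dist x (below x j) = x.h + Real.log (1 + j) := by
  have hj : (0 : ℝ) ≤ j := by positivity
  have h1 : (below x j).h = 0 := by
    simp only [Pt.h, below]
    rw [max_eq_right]
    push_cast
    linarith [min_le_right (x.i : ℝ) 0]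
  have h2 : (below x j).d = x.d + j := by
    simp only [Pt.d, below]
    push_cast
    rcases le_total (x.i : ℝ) 0 with h | h
    · rw [min_eq_left h, max_eq_left, max_eq_left] <;> linarith
    · rw [min_eq_right h, max_eq_left, max_eq_right] <;> linarith
  have h3 : (below x j).s = x.s := rfl
  rw [dist_def, h1, h2, h3, dS_self, hedge_same, sub_zero, abs_of_nonneg x.h_nonneg]
  simp

/-- Far up on a hair the growth is linear. -/
lemma ball_ncard_le {x : Pt γ} {R : ℝ} (hR : 0 ≤ R) (hx : R < x.h) :
    ((Metric.closedBall x R).ncard : ℝ) ≤ 2 * R + 1 := by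
  have hxi := Pt.i_eq_h (hR.trans_lt hx)
  have h := (fibre_ncard_le (s := x.s) (T := Metric.closedBall x R) (x.i - ⌊R⌋) (x.i + ⌊R⌋)
    fun y hy => ?_).2
  · have e : (x.i + ⌊R⌋ + 1 - (x.i - ⌊R⌋)).toNat = 2 * ⌊R⌋ + 1 := by
      rw [Int.toNat_of_nonneg]
      · ring
      · have := Int.floor_nonneg.2 hR
        linarith
    have h' : ((Metric.closedBall x R).ncard : ℝ) ≤ ((2 * ⌊R⌋ + 1 : ℤ) : ℝ) := by
      rw [← e]; exact_mod_cast h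
    push_cast at h'
    linarith [Int.floor_le R]
  · have hy' : dist y x ≤ R := hy
    have hs : y.s = x.s := by
      by_contra hs
      have := add_h_le hs
      linarith [y.h_nonneg]
    have h1 := abs_le.1 ((abs_h_sub_le y x).trans hy')
    have hyi := Pt.i_eq_h (show 0 < y.h by linarith)
    refine ⟨hs, ?_, ?_⟩
    · have : x.i - y.i ≤ ⌊R⌋ := Int.le_floor.2 (by push_cast; linarith)
      linarith
    · have : y.i - x.i ≤ ⌊R⌋ := Int.le_floor.2 (by push_cast; linarith)
      linarith

/-- A coarse embedding cannot send a point of small height far up on a hair, since the growth is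
exponential near the former and linear near the latter. -/
lemma CoarseEmb.low {f : Pt γ → Pt γ} {K : ℝ} (hf : CoarseEmb f K) (D : ℕ) :
    ∃ E : ℕ, ∀ x : Pt γ, x.h ≤ D → (f x).h ≤ E := by
  classical
  have hK := hf.one_le
  obtain ⟨B, hB⟩ := boundedGeometry (γ := γ) K (by linarith)
  obtain ⟨N, hN⟩ := exists_log_lt (B * (2 * (K * D + K) + 1)) (B * (2 * K)) (by positivity)
  set R := K * (D + Real.log (1 + N)) + K with hR
  have hlog : 0 ≤ Real.log (1 + (N : ℝ)) := Real.log_nonneg (by simp)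
  have hR0 : 0 ≤ R := by positivity
  refine ⟨⌈R⌉₊, fun x hx => ?_⟩
  by_contra hcon
  have hfx : R < (f x).h := (Nat.le_ceil R).trans_lt (not_le.1 hcon)
  let S : Finset (Pt γ) := (Finset.range (N + 1)).image (below x)
  have hScard : S.card = N + 1 := by
    rw [Finset.card_image_of_injective, Finset.card_range]
    intro a b hab
    have := congrArg Pt.i hab
    simp only [below] at this
    omega
  have h1 : S.card ≤ B * (S.image f).card := by
    refine Finset.card_le_mul_card_image S B fun b hb => ?_
    obtain ⟨a, _, rfl⟩ := Finset.mem_image.1 hb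
    refine le_trans ?_ (hB a).2
    rw [← Set.ncard_coe_finset]
    refine Set.ncard_le_ncard ?_ (hB a).1
    intro y hy
    exact hf.sep y a (Finset.mem_filter.1 hy).2
  have h2 : ((S.image f).card : ℝ) ≤ 2 * R + 1 := by
    refine le_trans ?_ (ball_ncard_le hR0 hfx)
    obtain ⟨_, hfin⟩ := boundedGeometry (γ := γ) (R + 1) (by linarith)
    have hfin' : (Metric.closedBall (f x) R).Finite :=
      (hfin (f x)).1.subset (Metric.closedBall_subset_closedBall (by linarith))
    rw [← Set.ncard_coe_finset]
    refine Nat.cast_le.2 (Set.ncard_le_ncard ?_ hfin')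
    intro y hy
    obtain ⟨z, hz, rfl⟩ := Finset.mem_image.1 (Finset.mem_coe.1 hy)
    obtain ⟨j, hj, rfl⟩ := Finset.mem_image.1 hz
    rw [Metric.mem_closedBall, dist_comm]
    refine (hf.lip _ _).trans ?_
    rw [dist_below, hR]
    have hjN : (j : ℝ) ≤ N := by
      exact_mod_cast Nat.lt_succ_iff.1 (Finset.mem_range.1 hj)
    gcongr
  have h3 : ((N + 1 : ℕ) : ℝ) ≤ B * (S.image f).card := by
    rw [← hScard]; exact_mod_cast h1
  have h4 : (B : ℝ) * (S.image f).card ≤ B * (2 * R + 1) := by gcongr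
  have h5 : (B : ℝ) * (2 * R + 1) =
      B * (2 * (K * D + K) + 1) + B * (2 * K) * Real.log (1 + N) := by rw [hR]; ring
  push_cast at h3
  linarith

/-- If `f` has a coarse inverse `g`, then it cannot send a point far up on a hair to a point of
small height: apply `CoarseEmb.low` to `g`. -/
lemma CoarseEmb.high {f g : Pt γ → Pt γ} {K : ℝ} (hg : CoarseEmb g K)
    (hgf : ∀ x, dist (g (f x)) x ≤ K) (E : ℕ) :
    ∃ D : ℕ, ∀ x : Pt γ, (D : ℝ) < x.h → E < (f x).h := by
  obtain ⟨D, hD⟩ := hg.low E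
  refine ⟨D + ⌈K⌉₊, fun x hx => ?_⟩
  by_contra hcon
  have h1 := hD (f x) (not_lt.1 hcon)
  have h2 := abs_le.1 ((abs_h_sub_le (g (f x)) x).trans (hgf x))
  have h3 := Nat.le_ceil K
  push_cast at hx
  linarith

lemma s_eq_of_dist {x y : Pt γ} (h : dist x y < x.h) : x.s = y.s := by
  by_contra hs
  have := add_h_le hs
  linarith [y.h_nonneg]

/-- The upper part of a hair is coarsely connected and far from all other hairs, so that its image
lies on a single hair. -/
lemma CoarseEmb.same {f g : Pt γ → Pt γ} {K : ℝ} (hf : CoarseEmb f K) (hg : CoarseEmb g K)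
    (hgf : ∀ x, dist (g (f x)) x ≤ K) :
    ∃ D : ℕ, ∀ x y : Pt γ, x.s = y.s → (D : ℝ) < x.h → (D : ℝ) < y.h → (f x).s = (f y).s := by
  have hK := hf.one_le
  obtain ⟨D, hD⟩ := hg.high hgf ⌈3 * K⌉₊
  have key : ∀ n : ℕ, ∀ x y : Pt γ, x.s = y.s → (D : ℝ) < x.h → y.i = x.i + n →
      (f x).s = (f y).s := by
    intro n
    induction n with
    | zero =>
      intro x y hs _ hi
      rw [show x = y from Pt.ext hs (by simpa using hi.symm)]
    | succ n ih =>
      intro x y hs hx hi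
      push_cast at hi
      let z : Pt γ := ⟨y.s, y.i - 1, by push_cast; linarith [y.le]⟩
      refine (ih x z hs hx (by simp only [z]; linarith)).trans ?_
      have hz : (D : ℝ) < z.h := by
        rw [lt_h_iff] at hx ⊢
        simp only [z]
        omega
      apply s_eq_of_dist
      have h1 : dist z y ≤ 2 := by
        refine (dist_same_le (x := z) (y := y) rfl).trans ?_
        simp [z]
      have h2 := hf.lip z y
      have h3 := (Nat.le_ceil (3 * K)).trans_lt (hD z hz)
      nlinarith
  refine ⟨D, fun x y hs hx hy => ?_⟩
  rcases le_total x.i y.i with h | h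
  · exact key (y.i - x.i).toNat x y hs hx (by omega)
  · exact (key (x.i - y.i).toNat y x hs.symm hy (by omega)).symm

lemma exists_inverse {q : Pt γ → Pt γ} (hq : IsQuasiIsometry q) :
    ∃ (p : Pt γ → Pt γ) (K : ℝ), CoarseEmb q K ∧ CoarseEmb p K ∧
      (∀ x, dist (p (q x)) x ≤ K) ∧ ∀ y, dist (q (p y)) y ≤ K := by
  obtain ⟨K, hK, hqi, hsurj⟩ := hq
  choose p hp using hsurj
  have hK0 : 0 < K := by linarith
  have low : ∀ a b, dist a b ≤ K * dist (q a) (q b) + K * K := fun a b => by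
    have := (hqi a b).1
    rw [sub_le_iff_le_add, div_le_iff₀ hK0] at this
    linarith
  have hKK : K ≤ K * K := by nlinarith
  refine ⟨p, 3 * (K * K), ⟨by linarith, fun a b => ?_, fun a b h => ?_⟩,
    ⟨by linarith, fun a b => ?_, fun a b h => ?_⟩, fun x => ?_, fun y => ?_⟩
  · have := (hqi a b).2
    have := dist_nonneg (x := a) (y := b)
    nlinarith
  · have := low a b
    rw [h, dist_self] at this
    linarith
  · have h1 := low (p a) (p b)
    have h2 := dist_triangle4 (q (p a)) a b (q (p b))
    have h3 := hp a
    have h4 := hp b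
    rw [dist_comm] at h3
    have := dist_nonneg (x := a) (y := b)
    nlinarith
  · have h2 := dist_triangle_right a b (q (p a))
    have h3 := hp a
    have h4 := hp b
    rw [← h] at h4
    linarith
  · have h1 := low (p (q x)) x
    have h3 := hp (q x)
    rw [dist_comm] at h3
    nlinarith
  · have h3 := hp y
    rw [dist_comm] at h3
    linarith

/-- A scaling quasi-isometry permutes the long hairs, multiplying their lengths by the scaling
constant up to a bounded error; moreover, the resulting map of indices is coarsely Lipschitz. -/
lemma exists_hair_map (hγ : ∀ i, 0 < γ i) {q : Pt γ → Pt γ} (hq : IsQuasiIsometry q) {k : ℝ}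
    (hk : 0 < k) (hs : CoarselyScaling q k) :
    ∃ (τ : Idx m → Idx m) (L C D : ℝ), 0 ≤ D ∧
      (∀ s, L ≤ len γ s → |len γ (τ s) - k * len γ s| ≤ C) ∧
      ∀ s t, L ≤ len γ s → L ≤ len γ t → dS (τ s) (τ t) ≤ D * dS s t + D := by
  obtain ⟨p, K, hqK, hpK, hpq, hqp⟩ := exists_inverse hq
  obtain ⟨r, hr, C₁, hC₁, hscal⟩ := hs
  have hK := hqK.one_le
  have hKn := Nat.le_ceil K
  obtain ⟨Dq, hDq⟩ := hqK.same hpK hpq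
  obtain ⟨Dp, hDp⟩ := hpK.same hqK hqp
  obtain ⟨H₁, hH₁⟩ := hqK.high hqp ⌈K⌉₊
  obtain ⟨H₂, hH₂⟩ := hqK.high hqp Dq
  obtain ⟨c, hc⟩ : ∃ c : ℕ, c = Dp + ⌈K⌉₊ + H₁ + H₂ := ⟨_, rfl⟩
  have hcR : (c : ℝ) = Dp + ⌈K⌉₊ + H₁ + H₂ := by rw [hc]; push_cast; ring
  have n1 : (0 : ℝ) ≤ Dp := by positivity
  have n2 : (0 : ℝ) ≤ ⌈K⌉₊ := by positivity
  have n3 : (0 : ℝ) ≤ H₁ := by positivity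
  have n4 : (0 : ℝ) ≤ H₂ := by positivity
  obtain ⟨H₃, hH₃⟩ := hpK.high hpq c
  obtain ⟨D₃, hD₃⟩ : ∃ D₃ : ℕ, D₃ = Dq + H₃ := ⟨_, rfl⟩
  have hD₃R : (D₃ : ℝ) = Dq + H₃ := by rw [hD₃]; push_cast; ring
  obtain ⟨C₂, hC₂⟩ := top_boundary hγ r hr c
  let Y : ∀ s, (c + 1 : ℝ) ≤ len γ s → Pt γ := fun s h => ⟨s, c + 1, by push_cast; exact h⟩
  have hYh : ∀ s h, (Y s h).h = c + 1 := fun s h => by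
    simp only [Pt.h, Y]; push_cast; exact max_eq_left (by positivity)
  have hYd : ∀ s h, (Y s h).d = 0 := fun s h => by
    simp only [Pt.d, Y]; push_cast; apply max_eq_right
    have : (0 : ℝ) ≤ c := by positivity
    linarith
  classical
  let τ : Idx m → Idx m := fun s => if h : (c + 1 : ℝ) ≤ len γ s then (p (Y s h)).s else s
  have hτ : ∀ s h, τ s = (p (Y s h)).s := fun s h => dif_pos h
  refine ⟨τ, c + 1, k * (1 + c) + C₁ * C₂ + D₃ + 1, K * (2 * (c + 1)) + K, by positivity,
    fun s hs => ?_, fun s t hs ht => ?_⟩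
  · set y₀ := Y s hs with hy₀
    set t := τ s with ht
    have hy₀h : (c : ℝ) < y₀.h := by
      have e : y₀.h = c + 1 := hYh s hs
      rw [e]; linarith
    have hy₀s : y₀.s = s := rfl
    have ht₀ : (p y₀).s = t := (hτ s hs).symm
    have hy₀mem : y₀ ∈ top γ s c := ⟨rfl, lt_h_iff.1 hy₀h⟩
    have hsub1 : q ⁻¹' top γ s c ⊆ top γ t 0 := by
      intro x hx
      have hxh : (c : ℝ) < (q x).h := lt_h_iff.2 hx.2
      have h1 : (p (q x)).s = t := by
        rw [← ht₀]
        exact hDp _ _ hx.1 (by linarith) (by linarith)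
      have h2 := hH₁ (q x) (by linarith)
      have h3 := hpq x
      have h4 : (p (q x)).s = x.s := s_eq_of_dist (by linarith)
      refine ⟨h4.symm.trans h1, lt_h_iff.1 ?_⟩
      have h5 := abs_le.1 ((abs_h_sub_le (p (q x)) x).trans h3)
      push_cast
      linarith
    have hsub2 : top γ t D₃ ⊆ q ⁻¹' top γ s c := by
      intro x hx
      have hxh : (D₃ : ℝ) < x.h := lt_h_iff.2 hx.2
      have nq : (0 : ℝ) ≤ Dq := by positivity
      have n3 : (0 : ℝ) ≤ H₃ := by positivity
      refine ⟨?_, lt_h_iff.1 (hH₃ x (by linarith))⟩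
      have h1 := hH₂ y₀ (by linarith)
      have h2 : (q x).s = (q (p y₀)).s :=
        hDq _ _ (hx.1.trans ht₀.symm) (by linarith) h1
      have h3 : y₀.s = (q (p y₀)).s := by
        apply s_eq_of_dist
        rw [dist_comm]
        linarith [hqp y₀]
      rw [h2, ← h3]
    have hfin : (q ⁻¹' top γ s c).Finite := (top_finite t 0).subset hsub1
    have hN1 := Set.ncard_le_ncard hsub1 (top_finite t 0)
    have hN2 := Set.ncard_le_ncard hsub2 hfin
    have hb : ((rBoundary r (top γ s c)).ncard : ℝ) ≤ C₂ := by
      exact_mod_cast hC₂ s ⟨y₀, hy₀mem⟩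
    have hsc := (hscal _ (top_finite s c)).trans (mul_le_mul_of_nonneg_left hb hC₁)
    set N := (q ⁻¹' top γ s c).ncard
    rw [top_ncard] at hN1 hN2 hsc
    have hfl : (c : ℤ) + 1 ≤ ⌊len γ s⌋ := Int.le_floor.2 (by push_cast; exact hs)
    have hA : (((⌊len γ s⌋ - c).toNat : ℕ) : ℝ) = (⌊len γ s⌋ : ℝ) - c := by
      rw [← Int.cast_natCast, Int.toNat_of_nonneg (by linarith)]; push_cast; rfl
    rw [hA] at hsc
    have ht_nonneg := Int.floor_nonneg.2 (len_nonneg hγ t)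
    have hN1' : (N : ℝ) ≤ ⌊len γ t⌋ := by
      have : (N : ℤ) ≤ ⌊len γ t⌋ := by push_cast at hN1; omega
      exact_mod_cast this
    have hN2' : (⌊len γ t⌋ : ℝ) ≤ N + D₃ := by
      have : ⌊len γ t⌋ ≤ (N : ℤ) + D₃ := by omega
      exact_mod_cast this
    have f1 := Int.floor_le (len γ t)
    have f2 := Int.lt_floor_add_one (len γ t)
    have f3 := Int.floor_le (len γ s)
    have f4 := Int.lt_floor_add_one (len γ s)
    have hsc' := abs_le.1 hsc
    have g1 : k * ((⌊len γ s⌋ : ℝ) - c) ≤ k * len γ s := by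
      have : (0 : ℝ) ≤ c := by positivity
      gcongr; linarith
    have g2 : k * (len γ s - 1 - c) ≤ k * ((⌊len γ s⌋ : ℝ) - c) := by
      gcongr; linarith
    have g3 : 0 ≤ k * (1 + (c : ℝ)) := by positivity
    have g4 : (0 : ℝ) ≤ D₃ := by positivity
    rw [abs_le]
    constructor <;> linarith
  · rw [hτ s hs, hτ t ht]
    have h1 : dist (Y s hs) (Y t ht) ≤ dS s t + 2 * (c + 1) := by
      rw [dist_def, hYh s hs, hYh t ht, hYd s hs, hYd t ht]
      have := hedge_le_add (a := (Y s hs).s) (b := (Y t ht).s) (x := (c + 1 : ℝ))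
        (y := (c + 1 : ℝ)) (by positivity) (by positivity)
      simp only [sub_zero, abs_zero, add_zero, Real.log_one]
      have e : dS (Y s hs).s (Y t ht).s = dS s t := rfl
      linarith
    have h2 := (dS_le _ _).trans (hpK.lip (Y s hs) (Y t ht))
    have h3 : K * dist (Y s hs) (Y t ht) ≤ K * (dS s t + 2 * (c + 1)) := by gcongr
    have h4 : 0 ≤ (K * (2 * ((c : ℝ) + 1))) * dS s t :=
      mul_nonneg (by positivity) (dS_nonneg _ _)
    linarith

/-! ### The arithmetic of hair lengths -/

lemma mono_bounded (γ : Fin m → ℝ) (D : ℝ) :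
    ∃ M : ℝ, 0 ≤ M ∧ ∀ u : Fin m → ℤ, dist u 0 ≤ D → mono γ u ≤ M := by
  have hfin : (Metric.closedBall (0 : Fin m → ℤ) D).Finite :=
    (isCompact_closedBall _ _).finite_of_discrete
  obtain ⟨M, hM⟩ := (hfin.image (mono γ)).bddAbove
  exact ⟨max M 0, le_max_right _ _, fun u hu =>
    (hM (Set.mem_image_of_mem _ hu)).trans (le_max_left _ _)⟩

/-- If the index jumps between different rays by a bounded distance, then both levels are bounded,
and so is the ratio of the lengths. -/
lemma len_le_of_jump (hγ : ∀ i, 0 < γ i) (D : ℝ) :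
    ∃ M : ℝ, 0 ≤ M ∧ ∀ s t : Idx m, s.1 ≠ t.1 → dS s t ≤ D → len γ t ≤ M * len γ s := by
  obtain ⟨M, hM, hM'⟩ := mono_bounded γ D
  refine ⟨(⌈D⌉₊.factorial : ℝ) * M, by positivity, fun s t hne hd => ?_⟩
  rw [dS, hedge_ne hne] at hd
  have hs2 : (0 : ℝ) ≤ s.2 := by positivity
  have ht2 : (0 : ℝ) ≤ t.2 := by positivity
  have hdist := dist_nonneg (x := s.1) (y := t.1)
  have h1 : t.2 ≤ ⌈D⌉₊ := by
    have : (t.2 : ℝ) ≤ ⌈D⌉₊ := le_trans (by linarith) (Nat.le_ceil D)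
    exact_mod_cast this
  have h2 : mono γ (t.1 - s.1) ≤ M := hM' _ (by
    rw [dist_zero_right, ← dist_eq_norm, dist_comm]; linarith)
  have h3 : mono γ t.1 = mono γ (t.1 - s.1) * mono γ s.1 := by rw [← mono_add hγ]; simp
  have h4 : (t.2.factorial : ℝ) ≤ ⌈D⌉₊.factorial := by exact_mod_cast Nat.factorial_le h1
  have h5 : (1 : ℝ) ≤ s.2.factorial := by exact_mod_cast s.2.factorial_pos
  have p1 := mono_pos hγ s.1
  have p2 := mono_pos hγ (t.1 - s.1)
  rw [len, len, h3]
  calc (t.2.factorial : ℝ) * (mono γ (t.1 - s.1) * mono γ s.1)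
      ≤ ⌈D⌉₊.factorial * (M * mono γ s.1) := by gcongr
    _ = ⌈D⌉₊.factorial * M * (1 * mono γ s.1) := by ring
    _ ≤ ⌈D⌉₊.factorial * M * (s.2.factorial * mono γ s.1) := by gcongr

/-- The factorials grow so fast that the index must eventually stay on one ray and follow the
level exactly. -/
lemma eq_mono_of_seq (hγ : ∀ i, 0 < γ i) {k : ℝ} (hk : 0 < k) (f : ℕ → Idx m) (N₀ : ℕ) (C D : ℝ)
    (h1 : ∀ n ≥ N₀, |len γ (f n) - k * n.factorial| ≤ C)
    (h2 : ∀ n ≥ N₀, dS (f n) (f (n + 1)) ≤ D) : ∃ v, k = mono γ v := by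
  obtain ⟨M, hM, hjump⟩ := len_le_of_jump hγ D
  have hC : 0 ≤ C := (abs_nonneg _).trans (h1 N₀ le_rfl)
  obtain ⟨N₁, hN₁⟩ := exists_nat_gt (M + (M + 1) * C / k)
  have hstep : ∀ n ≥ max N₀ N₁, (f n).1 = (f (n + 1)).1 := by
    intro n hn
    by_contra hne
    have hn0 : N₀ ≤ n := (le_max_left _ _).trans hn
    have hn1 : (N₁ : ℝ) ≤ n := by exact_mod_cast (le_max_right _ _).trans hn
    have e1 := hjump _ _ hne (h2 n hn0)
    have e2 := (abs_le.1 (h1 n hn0)).2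
    have e3 := (abs_le.1 (h1 (n + 1) (by omega))).1
    have e4 : (1 : ℝ) ≤ n.factorial := by exact_mod_cast n.factorial_pos
    rw [Nat.factorial_succ] at e3
    push_cast at e3
    have e5 : M * len γ (f n) ≤ M * (k * n.factorial + C) := by
      gcongr; linarith
    have e6 : (M + 1) * C < (n - M) * k := by
      rw [← div_lt_iff₀ hk]; linarith
    have e7 : 0 ≤ (n - M) * k := le_trans (by positivity) e6.le
    have e8 : (n - M) * k * 1 ≤ (n - M) * k * n.factorial := by gcongr
    have e9 : 0 ≤ k * (n.factorial : ℝ) := by positivity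
    nlinarith
  set N := max N₀ N₁ with hN
  have hconst : ∀ n ≥ N, (f n).1 = (f N).1 := by
    intro n hn
    induction n, hn using Nat.le_induction with
    | base => rfl
    | succ n hn ih => rw [← hstep n hn, ih]
  refine ⟨(f N).1, ?_⟩
  set w := mono γ (f N).1 with hw
  have hw0 : 0 < w := mono_pos hγ _
  have hfact : Filter.Tendsto (fun n : ℕ => (n.factorial : ℝ)) Filter.atTop Filter.atTop :=
    tendsto_natCast_atTop_atTop.comp
      (Filter.tendsto_atTop_mono Nat.self_le_factorial Filter.tendsto_id)
  have hlim : Filter.Tendsto (fun n : ℕ => ((f n).2.factorial : ℝ) / n.factorial) Filter.atTop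
      (nhds (k / w)) := by
    rw [tendsto_iff_dist_tendsto_zero]
    refine squeeze_zero' (Filter.Eventually.of_forall fun n => dist_nonneg) ?_
      ((tendsto_const_nhds (x := C / w)).div_atTop hfact)
    filter_upwards [Filter.eventually_ge_atTop N] with n hn
    have hn0 : N₀ ≤ n := (le_max_left _ _).trans hn
    have e1 := h1 n hn0
    rw [len, hconst n hn, ← hw] at e1
    have e4 : (0 : ℝ) < n.factorial := by exact_mod_cast n.factorial_pos
    rw [Real.dist_eq]
    have e5 : ((f n).2.factorial : ℝ) / n.factorial - k / w =
        ((f n).2.factorial * w - k * n.factorial) / (w * n.factorial) := by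
      field_simp
    rw [e5, abs_div, abs_of_pos (show (0 : ℝ) < w * n.factorial by positivity), div_div]
    gcongr
  have hkw : 0 < k / w := by positivity
  have hev : ∀ᶠ n : ℕ in Filter.atTop, ((f n).2.factorial : ℝ) / n.factorial = 1 := by
    obtain ⟨N₂, hN₂⟩ := exists_nat_gt (k / w + 1)
    obtain ⟨N₃, hN₃⟩ := exists_nat_gt (2 / (k / w))
    filter_upwards [hlim.eventually_lt_const (show k / w < k / w + 1 by linarith),
      hlim.eventually_const_lt (show k / w / 2 < k / w by linarith),
      Filter.eventually_ge_atTop N₂, Filter.eventually_ge_atTop N₃,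
      Filter.eventually_ge_atTop 1] with n a1 a2 a3 a4 a5
    have e4 : (0 : ℝ) < n.factorial := by exact_mod_cast n.factorial_pos
    rcases lt_trichotomy (f n).2 n with h | h | h
    · exfalso
      obtain ⟨l, rfl⟩ : ∃ l, n = l + 1 := ⟨n - 1, by omega⟩
      have b1 : ((f (l + 1)).2.factorial : ℝ) ≤ l.factorial := by
        exact_mod_cast Nat.factorial_le (by omega)
      have hl : (0 : ℝ) < l.factorial := by exact_mod_cast l.factorial_pos
      rw [lt_div_iff₀ e4, Nat.factorial_succ] at a2
      have a4' : (N₃ : ℝ) ≤ ((l + 1 : ℕ) : ℝ) := by exact_mod_cast a4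
      rw [div_lt_iff₀ hkw] at hN₃
      push_cast at a2 a4'
      have b2 : 2 < ((l : ℝ) + 1) * (k / w) :=
        hN₃.trans_le (by gcongr)
      nlinarith
    · rw [h]; exact div_self e4.ne'
    · exfalso
      have b1 : ((n + 1).factorial : ℝ) ≤ (f n).2.factorial := by
        exact_mod_cast Nat.factorial_le h
      rw [Nat.factorial_succ] at b1
      push_cast at b1
      rw [div_lt_iff₀ e4] at a1
      have a3' : (N₂ : ℝ) ≤ n := by exact_mod_cast a3
      nlinarith
  have h1' : Filter.Tendsto (fun n : ℕ => ((f n).2.factorial : ℝ) / n.factorial) Filter.atTop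
      (nhds 1) := tendsto_const_nhds.congr' (hev.mono fun n hn => hn.symm)
  have := tendsto_nhds_unique hlim h1'
  rwa [div_eq_one_iff_eq hw0.ne'] at this

lemma eq_mono_of_scaling (hγ : ∀ i, 0 < γ i) {q : Pt γ → Pt γ} (hq : IsQuasiIsometry q) {k : ℝ}
    (hk : 0 < k) (hs : CoarselyScaling q k) : ∃ v, k = mono γ v := by
  obtain ⟨τ, L, C, D, hD, h1, h2⟩ := exists_hair_map hγ hq hk hs
  have hlen : ∀ n : ℕ, len γ (0, n) = n.factorial := fun n => by simp [len, mono]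
  have hL : ∀ n ≥ ⌈L⌉₊, L ≤ len γ (0, n) := fun n hn => by
    rw [hlen]
    refine (Nat.le_ceil L).trans ?_
    exact_mod_cast hn.trans (Nat.self_le_factorial n)
  refine eq_mono_of_seq hγ hk (fun n => τ (0, n)) ⌈L⌉₊ C (D * 1 + D) (fun n hn => ?_)
    fun n hn => ?_
  · rw [← hlen]; exact h1 _ (hL n hn)
  · have e : dS ((0, n) : Idx m) (0, n + 1) = 1 := by simp [dS, hedge_same]
    rw [← e]
    exact h2 _ _ (hL n hn) (hL (n + 1) (by omega))

end HairySpace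

/-- **Main Theorem.** For any finite set `{γ₁, …, γ_m}` of positive reals there is an
amenable UDBG metric space `X` whose scaling group is exactly the multiplicative
subgroup of `ℝ⁺` generated by the `γᵢ`, i.e. the set of products `∏ γᵢ ^ eᵢ`
over integer exponents `e`. -/
theorem exists_UDBG_space_with_scaling_group_generated_by
    (m : ℕ) (γ : Fin m → ℝ) (hγ : ∀ i, 0 < γ i) :
    ∃ (X : Type) (_ : MetricSpace X),
      UniformlyDiscrete X ∧ BoundedGeometry X ∧ MetricAmenable X ∧
      ScalingGroup X = {x : ℝ | ∃ e : Fin m → ℤ, x = ∏ i, γ i ^ e i} := by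
  refine ⟨HairySpace.Pt γ, inferInstance, HairySpace.uniformlyDiscrete,
    HairySpace.boundedGeometry, HairySpace.amenable hγ, ?_⟩
  ext k
  constructor
  · rintro ⟨hk, q, hq, hs⟩
    exact HairySpace.eq_mono_of_scaling hγ hq hk hs
  · rintro ⟨e, rfl⟩
    refine ⟨HairySpace.mono_pos hγ e, HairySpace.shift hγ (-e),
      HairySpace.shift_quasiIsometry hγ (-e), ?_⟩
    have := HairySpace.shift_scaling hγ (-e)
    rwa [HairySpace.mono_neg, inv_inv] at this
end

section
/- For every real number γ > 1 there exists a metric space X which is uniformly discrete, has bounded geometry, and is amenable, such that the scaling group Sc(X) equals {γⁿ : n ∈ ℤ}. -/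
namespace CyclicScaling

open Set

/-! ### The profile function -/

/-- The self-similar profile `h`: on each cell `[γ ^ m, γ ^ (m + 1))`, `m ∈ ℤ`, it vanishes on the
block `[(1 + ρ) γ ^ m, (1 - ρ) γ ^ (m + 1)]` and has slope `± 1` outside it.  Equivalently, its graph
consists of disjoint tents of height and radius `ρ γ ^ j` centred at the points `γ ^ j`. -/
noncomputable def profile (γ ρ x : ℝ) : ℝ :=
  if x ≤ 0 then 0 else
    max 0 (max ((1 + ρ) * γ ^ ⌊Real.logb γ x⌋ - x) (x - (1 - ρ) * γ ^ (⌊Real.logb γ x⌋ + 1)))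

lemma exists_cell {γ x : ℝ} (hγ : 1 < γ) (hx : 0 < x) :
    ∃ m : ℤ, γ ^ m ≤ x ∧ x < γ ^ m * γ := by
  obtain ⟨m, h1, h2⟩ := exists_mem_Ico_zpow hx hγ
  exact ⟨m, h1, by rwa [zpow_add_one₀ (by positivity)] at h2⟩

lemma profile_eq {γ ρ x : ℝ} (hγ : 1 < γ) {m : ℤ} (h1 : γ ^ m ≤ x) (h2 : x < γ ^ m * γ) :
    profile γ ρ x = max 0 (max ((1 + ρ) * γ ^ m - x) (x - (1 - ρ) * (γ ^ m * γ))) := by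
  have h0 : 0 < γ := by linarith
  have hm : 0 < γ ^ m := zpow_pos h0 m
  have hx : 0 < x := by linarith
  have hc : ⌊Real.logb γ x⌋ = m := by
    rw [Int.floor_eq_iff]
    constructor
    · rw [Real.le_logb_iff_rpow_le hγ hx, Real.rpow_intCast]; exact h1
    · rw [Real.logb_lt_iff_lt_rpow hγ hx, Real.rpow_add_one h0.ne', Real.rpow_intCast]; exact h2
  unfold profile
  rw [if_neg (not_le.2 hx), hc, zpow_add_one₀ h0.ne']

lemma profile_zero (γ ρ : ℝ) : profile γ ρ 0 = 0 := by simp [profile]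

lemma profile_nonneg (γ ρ x : ℝ) : 0 ≤ profile γ ρ x := by
  unfold profile; split_ifs
  · exact le_rfl
  · exact le_max_left _ _

lemma rho_lt_one {γ ρ : ℝ} (hγ : 1 < γ) (hρ : 0 < ρ) (hl : 1 + ρ < (1 - ρ) * γ) : ρ < 1 := by
  by_contra h
  nlinarith

lemma profile_div {γ ρ x : ℝ} (hγ : 1 < γ) (hx : 0 ≤ x) (j : ℤ) :
    profile γ ρ (x / γ ^ j) = profile γ ρ x / γ ^ j := by
  have h0 : 0 < γ := by linarith
  rcases hx.eq_or_lt with rfl | hx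
  · simp [profile_zero]
  obtain ⟨m, h1, h2⟩ := exists_cell hγ hx
  have hj : 0 < γ ^ j := zpow_pos h0 j
  have e : γ ^ (m - j) = γ ^ m / γ ^ j := zpow_sub₀ h0.ne' m j
  rw [profile_eq hγ h1 h2, profile_eq hγ (m := m - j)
    (by rw [e]; gcongr) (by rw [e, div_mul_eq_mul_div]; gcongr), e,
    ← max_div_div_right hj.le, ← max_div_div_right hj.le]
  congr 1
  · simp
  · congr 1 <;> field_simp

/-- Crossing into a higher cell changes `γ ^ m` by a factor of at least `γ`. -/
lemma zpow_step {γ : ℝ} (hγ : 1 < γ) {m n : ℤ} (h : m < n) : γ ^ m * γ ≤ γ ^ n := by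
  rw [← zpow_add_one₀ (by positivity)]
  exact zpow_le_zpow_right₀ hγ.le h

lemma profile_lip_aux {γ ρ : ℝ} (hγ : 1 < γ) (hρ : 0 < ρ) (hl : 1 + ρ < (1 - ρ) * γ) {x y : ℝ}
    (hx : 0 ≤ x) (hxy : x ≤ y) : |profile γ ρ x - profile γ ρ y| ≤ y - x := by
  have hρ1 := rho_lt_one hγ hρ hl
  have h0 : 0 < γ := by linarith
  rcases hx.eq_or_lt with rfl | hx
  · rcases hxy.eq_or_lt with rfl | hy
    · simp
    obtain ⟨m, h1, h2⟩ := exists_cell hγ hy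
    have hm : 0 < γ ^ m := zpow_pos h0 m
    rw [profile_zero, zero_sub, abs_neg, abs_of_nonneg (profile_nonneg _ _ _),
      profile_eq hγ h1 h2]
    refine max_le (by linarith) (max_le ?_ ?_)
    · nlinarith
    · have : 0 < (1 - ρ) * (γ ^ m * γ) := by
        have : 0 < 1 - ρ := by linarith
        positivity
      linarith
  have hy : 0 < y := by linarith
  obtain ⟨m, h1, h2⟩ := exists_cell hγ hx
  obtain ⟨n, h3, h4⟩ := exists_cell hγ hy
  have hm : 0 < γ ^ m := zpow_pos h0 m
  have hn : 0 < γ ^ n := zpow_pos h0 n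
  have hmn : m ≤ n := by
    by_contra h
    have := zpow_step hγ (not_le.1 h)
    linarith
  rw [profile_eq hγ h1 h2, profile_eq hγ h3 h4]
  rcases hmn.eq_or_lt with rfl | hmn
  · rw [abs_le]
    constructor
    · rw [neg_le_sub_iff_le_add]
      refine max_le ?_ (max_le ?_ ?_)
      · have := le_max_left 0 (max ((1 + ρ) * γ ^ m - x) (x - (1 - ρ) * (γ ^ m * γ)))
        linarith
      · have := le_max_of_le_right (b := 0) (le_max_left ((1 + ρ) * γ ^ m - x) (x - (1 - ρ) * (γ ^ m * γ)))
        linarith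
      · have := le_max_of_le_right (b := 0) (le_max_right ((1 + ρ) * γ ^ m - x) (x - (1 - ρ) * (γ ^ m * γ)))
        linarith
    · rw [sub_le_iff_le_add]
      refine max_le ?_ (max_le ?_ ?_)
      · have := le_max_left 0 (max ((1 + ρ) * γ ^ m - y) (y - (1 - ρ) * (γ ^ m * γ)))
        linarith
      · have := le_max_of_le_right (b := 0) (le_max_left ((1 + ρ) * γ ^ m - y) (y - (1 - ρ) * (γ ^ m * γ)))
        linarith
      · have := le_max_of_le_right (b := 0) (le_max_right ((1 + ρ) * γ ^ m - y) (y - (1 - ρ) * (γ ^ m * γ)))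
        linarith
  · have hs := zpow_step hγ hmn
    have hlm : (1 + ρ) * γ ^ m < (1 - ρ) * (γ ^ m * γ) := by nlinarith
    have hρs : ρ * (γ ^ m * γ) ≤ ρ * γ ^ n := by gcongr
    have hρs2 : (1 - ρ) * (γ ^ m * γ) ≤ (1 - ρ) * γ ^ n := by
      have : 0 ≤ 1 - ρ := by linarith
      gcongr
    have hln : (1 + ρ) * γ ^ n < (1 - ρ) * (γ ^ n * γ) := by nlinarith
    have a1 := le_max_of_le_right (b := 0) (le_max_left ((1 + ρ) * γ ^ n - y) (y - (1 - ρ) * (γ ^ n * γ)))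
    have a2 := le_max_of_le_right (b := 0) (le_max_right ((1 + ρ) * γ ^ m - x) (x - (1 - ρ) * (γ ^ m * γ)))
    have hp : 0 < ρ * (γ ^ m * γ) := by positivity
    have hpn : 0 < ρ * γ ^ n := by positivity
    rw [abs_le]
    constructor
    · rw [neg_le_sub_iff_le_add]
      refine max_le ?_ (max_le ?_ ?_) <;> nlinarith
    · rw [sub_le_iff_le_add]
      refine max_le ?_ (max_le ?_ ?_) <;> nlinarith

lemma profile_lip {γ ρ : ℝ} (hγ : 1 < γ) (hρ : 0 < ρ) (hl : 1 + ρ < (1 - ρ) * γ) {x y : ℝ}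
    (hx : 0 ≤ x) (hy : 0 ≤ y) : |profile γ ρ x - profile γ ρ y| ≤ |x - y| := by
  rcases le_total x y with h | h
  · rw [abs_sub_comm x y, abs_of_nonneg (sub_nonneg.2 h)]
    exact profile_lip_aux hγ hρ hl hx h
  · rw [abs_sub_comm (profile γ ρ x), abs_of_nonneg (sub_nonneg.2 h)]
    exact profile_lip_aux hγ hρ hl hy h

lemma profile_tent {γ ρ : ℝ} (hγ : 1 < γ) (hρ : 0 < ρ) (hl : 1 + ρ < (1 - ρ) * γ) {y : ℝ} {j : ℤ}
    (h : |y - γ ^ j| ≤ ρ * γ ^ j) : profile γ ρ y = ρ * γ ^ j - |y - γ ^ j| := by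
  have hρ1 := rho_lt_one hγ hρ hl
  have h0 : 0 < γ := by linarith
  rcases le_total (γ ^ j) y with hy | hy
  · have hj : 0 < γ ^ j := zpow_pos h0 j
    have hlj : (1 + ρ) * γ ^ j < (1 - ρ) * (γ ^ j * γ) := by nlinarith
    have : 0 < ρ * (γ ^ j * γ) := by positivity
    rw [abs_of_nonneg (sub_nonneg.2 hy)] at h ⊢
    rw [profile_eq hγ hy (by nlinarith), max_eq_left (a := (1 + ρ) * γ ^ j - y) (by linarith),
      max_eq_right (by linarith)]
    ring
  · rcases hy.eq_or_lt with rfl | hy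
    · have hj : 0 < γ ^ j := zpow_pos h0 j
      have hlj : (1 + ρ) * γ ^ j < (1 - ρ) * (γ ^ j * γ) := by nlinarith
      rw [profile_eq hγ le_rfl (by nlinarith), max_eq_left (a := (1 + ρ) * γ ^ j - γ ^ j) (by nlinarith),
        max_eq_right (by nlinarith)]
      simp; ring
    obtain ⟨i, rfl⟩ : ∃ i, j = i + 1 := ⟨j - 1, by ring⟩
    rw [zpow_add_one₀ h0.ne'] at *
    have hj : 0 < γ ^ i := zpow_pos h0 i
    have hlj : (1 + ρ) * γ ^ i < (1 - ρ) * (γ ^ i * γ) := by nlinarith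
    rw [abs_of_neg (sub_neg.2 hy)] at h ⊢
    rw [profile_eq hγ (m := i) (by nlinarith) hy, max_eq_right (b := y - (1 - ρ) * (γ ^ i * γ))
      (by linarith), max_eq_right (by linarith)]
    ring

lemma exists_tent {γ ρ : ℝ} (hγ : 1 < γ) {x : ℝ} (h : 0 < profile γ ρ x) :
    ∃ j : ℤ, profile γ ρ x = ρ * γ ^ j - |x - γ ^ j| := by
  have h0 : 0 < γ := by linarith
  have hx : 0 < x := by
    by_contra hx
    simp [profile, not_lt.1 hx] at h
  obtain ⟨m, h1, h2⟩ := exists_cell hγ hx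
  rw [profile_eq hγ h1 h2] at h ⊢
  have h' : max 0 (max ((1 + ρ) * γ ^ m - x) (x - (1 - ρ) * (γ ^ m * γ))) =
      max ((1 + ρ) * γ ^ m - x) (x - (1 - ρ) * (γ ^ m * γ)) := by
    rcases le_total 0 (max ((1 + ρ) * γ ^ m - x) (x - (1 - ρ) * (γ ^ m * γ))) with h3 | h3
    · exact max_eq_right h3
    · rw [max_eq_left h3] at h; exact absurd h (lt_irrefl _)
  rw [h']
  rcases max_choice ((1 + ρ) * γ ^ m - x) (x - (1 - ρ) * (γ ^ m * γ)) with h3 | h3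
  · refine ⟨m, ?_⟩
    rw [h3, abs_of_nonneg (by linarith)]; ring
  · refine ⟨m + 1, ?_⟩
    rw [h3, zpow_add_one₀ h0.ne', abs_of_neg (by linarith)]; ring

/-- The integers of the `m`-th flat block of the profile, enlarged by `C` on both sides. -/
def block (γ ρ : ℝ) (m : ℤ) (C : ℝ) : Set ℕ :=
  {x : ℕ | (1 + ρ) * γ ^ m - C ≤ x ∧ (x : ℝ) ≤ (1 - ρ) * (γ ^ m * γ) + C}

lemma block_cell {γ ρ : ℝ} (hγ : 1 < γ) (hρ : 0 < ρ) {x : ℕ} {m : ℤ}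
    (h : x ∈ block γ ρ m 0) : γ ^ m ≤ (x : ℝ) ∧ (x : ℝ) < γ ^ m * γ := by
  obtain ⟨h1, h2⟩ := h
  have hm : 0 < γ ^ m := zpow_pos (by linarith) m
  have : 0 < ρ * γ ^ m := by positivity
  have : 0 < ρ * (γ ^ m * γ) := by positivity
  constructor <;> nlinarith

lemma block_profile {γ ρ : ℝ} (hγ : 1 < γ) (hρ : 0 < ρ) {x : ℕ} {m : ℤ}
    (h : x ∈ block γ ρ m 0) : profile γ ρ x = 0 := by
  obtain ⟨h3, h4⟩ := block_cell hγ hρ h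
  obtain ⟨h1, h2⟩ := h
  rw [profile_eq hγ h3 h4]
  exact max_eq_left (max_le (by linarith) (by linarith))

lemma mem_block_of_profile_le {γ ρ C : ℝ} (hγ : 1 < γ) {x : ℕ} {m : ℤ}
    (h1 : γ ^ m ≤ (x : ℝ)) (h2 : (x : ℝ) < γ ^ m * γ) (h : profile γ ρ x ≤ C) :
    x ∈ block γ ρ m C := by
  rw [profile_eq hγ h1 h2, max_le_iff, max_le_iff] at h
  exact ⟨by linarith, by linarith⟩

/-! ### The metric -/

/-- The distance on `ℕ` attached to a function `h`: flat stretches of `h` carry the snowflake metric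
`√|x - y|`, and stretches of slope `± 1` are quasi-isometric to intervals. -/
noncomputable def D (h : ℝ → ℝ) (x y : ℕ) : ℝ := |h x - h y| + √|(x : ℝ) - y|

lemma D_comm (h : ℝ → ℝ) (x y : ℕ) : D h x y = D h y x := by
  unfold D; rw [abs_sub_comm, abs_sub_comm (x : ℝ)]

lemma D_self (h : ℝ → ℝ) (x : ℕ) : D h x x = 0 := by simp [D]

lemma D_nonneg (h : ℝ → ℝ) (x y : ℕ) : 0 ≤ D h x y := by unfold D; positivity

lemma sqrt_add_le' {a b : ℝ} (ha : 0 ≤ a) (hb : 0 ≤ b) : √(a + b) ≤ √a + √b := by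
  rw [Real.sqrt_le_left (by positivity)]
  nlinarith [Real.sq_sqrt ha, Real.sq_sqrt hb, mul_nonneg (Real.sqrt_nonneg a) (Real.sqrt_nonneg b)]

lemma D_triangle (h : ℝ → ℝ) (x y z : ℕ) : D h x z ≤ D h x y + D h y z := by
  unfold D
  have h1 := abs_sub_le (h x) (h y) (h z)
  have h2 := Real.sqrt_le_sqrt (abs_sub_le (x : ℝ) y z)
  have h3 := sqrt_add_le' (abs_nonneg ((x : ℝ) - y)) (abs_nonneg ((y : ℝ) - z))
  linarith

lemma abs_sub_le_of_D {h : ℝ → ℝ} {x y : ℕ} {r : ℝ} (hd : D h x y ≤ r) :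
    |(x : ℝ) - y| ≤ r ^ 2 := by
  have h1 : √|(x : ℝ) - y| ≤ r := le_trans (by unfold D; linarith [abs_nonneg (h x - h y)]) hd
  exact (Real.sqrt_le_left (le_trans (Real.sqrt_nonneg _) h1)).1 h1

lemma one_le_D (h : ℝ → ℝ) {x y : ℕ} (hxy : x ≠ y) : 1 ≤ D h x y := by
  have h1 : (1 : ℝ) ≤ |(x : ℝ) - y| := by
    have : (1 : ℤ) ≤ |(x : ℤ) - y| := Int.one_le_abs (by omega)
    exact_mod_cast this
  have := Real.one_le_sqrt.2 h1
  unfold D; linarith [abs_nonneg (h x - h y)]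

/-- The set `ℕ` as a carrier for the metric `D h`. -/
def Sp (_h : ℝ → ℝ) : Type := ℕ

noncomputable instance (h : ℝ → ℝ) : MetricSpace (Sp h) where
  dist x y := D h x y
  dist_self x := D_self h x
  dist_comm x y := D_comm h x y
  dist_triangle x y z := D_triangle h x y z
  eq_of_dist_eq_zero := by
    intro x y hxy
    by_contra hne
    have := one_le_D h hne
    change D h x y = 0 at hxy
    linarith

lemma dist_eq (h : ℝ → ℝ) (x y : Sp h) : dist x y = D h x y := rfl

/-! ### Counting integers in real intervals -/

lemma Icc_real_eq (u v : ℝ) (hu : 0 ≤ v) :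
    {x : ℕ | u ≤ x ∧ (x : ℝ) ≤ v} = ↑(Finset.Icc ⌈u⌉₊ ⌊v⌋₊) := by
  ext x
  simp [Nat.ceil_le, Nat.le_floor_iff hu]

lemma finite_Icc_real (u v : ℝ) : {x : ℕ | u ≤ x ∧ (x : ℝ) ≤ v}.Finite := by
  refine (Set.finite_Iic ⌊v⌋₊).subset fun x hx => ?_
  exact Nat.le_floor hx.2

lemma ncard_Icc_le (u v : ℝ) (huv : u ≤ v) :
    ({x : ℕ | u ≤ x ∧ (x : ℝ) ≤ v}.ncard : ℝ) ≤ v - u + 1 := by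
  rcases lt_or_ge v 0 with hv | hv
  · have : {x : ℕ | u ≤ x ∧ (x : ℝ) ≤ v} = ∅ := by
      ext x; simp; intro _; linarith [(Nat.cast_nonneg x : (0 : ℝ) ≤ x)]
    rw [this]; simp; linarith
  · rw [Icc_real_eq u v hv, Set.ncard_coe_finset, Nat.card_Icc]
    have h1 := Nat.floor_le hv
    have h2 := Nat.le_ceil u
    rcases le_total ⌈u⌉₊ (⌊v⌋₊ + 1) with h | h
    · rw [Nat.cast_sub h]; push_cast; linarith
    · rw [Nat.sub_eq_zero_of_le h]; simp; linarith

lemma le_ncard_Icc (u v : ℝ) (hu : 0 ≤ u) (huv : u ≤ v) :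
    v - u - 1 ≤ ({x : ℕ | u ≤ x ∧ (x : ℝ) ≤ v}.ncard : ℝ) := by
  rw [Icc_real_eq u v (hu.trans huv), Set.ncard_coe_finset, Nat.card_Icc]
  have h1 := Nat.lt_floor_add_one v
  have h2 := Nat.ceil_lt_add_one hu
  have h3 : ((⌊v⌋₊ + 1 : ℕ) : ℝ) ≤ ((⌊v⌋₊ + 1 - ⌈u⌉₊ : ℕ) : ℝ) + (⌈u⌉₊ : ℝ) := by
    exact_mod_cast (by omega)
  push_cast at h3
  linarith

lemma ncard_near_le (u w : ℝ) (hw : 0 ≤ w) :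
    {x : ℕ | |(x : ℝ) - u| ≤ w}.Finite ∧ ({x : ℕ | |(x : ℝ) - u| ≤ w}.ncard : ℝ) ≤ 2 * w + 1 := by
  have e : {x : ℕ | |(x : ℝ) - u| ≤ w} = {x : ℕ | u - w ≤ x ∧ (x : ℝ) ≤ u + w} := by
    ext x; simp only [Set.mem_ofPred_eq, abs_le]
    constructor <;> rintro ⟨a, b⟩ <;> constructor <;> linarith
  rw [e]
  refine ⟨finite_Icc_real _ _, (ncard_Icc_le _ _ (by linarith)).trans (by linarith)⟩

/-! ### Bounded geometry and boundaries -/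

lemma uniformlyDiscrete (h : ℝ → ℝ) : UniformlyDiscrete (Sp h) :=
  ⟨1, one_pos, fun _ _ hxy => one_le_D h hxy⟩

lemma boundedGeometry (h : ℝ → ℝ) : BoundedGeometry (Sp h) := by
  intro r hr
  refine ⟨⌈2 * r ^ 2 + 1⌉₊, fun x => ?_⟩
  obtain ⟨h1, h2⟩ := ncard_near_le (@Nat.cast ℝ _ x) (r ^ 2) (by positivity)
  have hs : Metric.closedBall x r ⊆ {y : ℕ | |(y : ℝ) - @Nat.cast ℝ _ x| ≤ r ^ 2} := by
    intro y hy
    exact abs_sub_le_of_D (h := h) (Metric.mem_closedBall.1 hy)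
  refine ⟨h1.subset hs, ?_⟩
  have h3 := Set.ncard_le_ncard hs h1
  have h4 : (2 * r ^ 2 + 1 : ℝ) ≤ ⌈2 * r ^ 2 + 1⌉₊ := Nat.le_ceil _
  exact h3.trans ((Nat.cast_le (α := ℝ)).1 (h2.trans h4))

lemma near_of_mem_boundary {h : ℝ → ℝ} {r : ℝ} {A : Set (Sp h)} (hA : A.Nonempty) {x : Sp h}
    (hx : Metric.infDist x A ≤ r) : ∃ a ∈ A, D h x a ≤ r + 1 := by
  obtain ⟨a, ha, hd⟩ := (Metric.infDist_lt_iff hA).1 (lt_of_le_of_lt hx (lt_add_one r))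
  exact ⟨a, ha, hd.le⟩

lemma compl_nonempty {h : ℝ → ℝ} {A : Set (Sp h)} (hA : A.Finite) : Aᶜ.Nonempty := by
  have : Infinite (Sp h) := inferInstanceAs (Infinite ℕ)
  exact hA.infinite_compl.nonempty

lemma boundary_finite {h : ℝ → ℝ} {r : ℝ} (hr : 0 < r) {A : Set (Sp h)} (hA : A.Finite)
    (hne : A.Nonempty) : (rBoundary r A).Finite := by
  obtain ⟨B, hB⟩ := boundedGeometry h (r + 1) (by linarith)
  refine (hA.biUnion fun a _ => (hB a).1).subset fun x hx => ?_
  obtain ⟨a, ha, hd⟩ := near_of_mem_boundary hne hx.1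
  exact Set.mem_biUnion ha (Metric.mem_closedBall.2 hd)

/-- Intervals have uniformly bounded boundary. -/
lemma boundary_interval {h : ℝ → ℝ} {r : ℝ} (u v : ℝ)
    (hne : ∃ x : ℕ, u ≤ x ∧ (x : ℝ) ≤ v) :
    ((rBoundary r ({x : ℕ | u ≤ x ∧ (x : ℝ) ≤ v} : Set (Sp h))).ncard : ℝ)
      ≤ 2 * (2 * (r + 1) ^ 2 + 1) := by
  set w := (r + 1) ^ 2 with hw
  have hw0 : 0 ≤ w := by positivity
  obtain ⟨f1, c1⟩ := ncard_near_le u w hw0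
  obtain ⟨f2, c2⟩ := ncard_near_le v w hw0
  have hs : rBoundary r ({x : ℕ | u ≤ x ∧ (x : ℝ) ≤ v} : Set (Sp h)) ⊆
      {x : ℕ | |(x : ℝ) - u| ≤ w} ∪ {x : ℕ | |(x : ℝ) - v| ≤ w} := by
    rintro x ⟨hx1, hx2⟩
    obtain ⟨a, ⟨ha1, ha2⟩, hda⟩ := near_of_mem_boundary (h := h) hne hx1
    obtain ⟨b, hb, hdb⟩ := near_of_mem_boundary (h := h) (compl_nonempty (finite_Icc_real u v)) hx2
    have ea := abs_le.1 (abs_sub_le_of_D hda)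
    have eb := abs_le.1 (abs_sub_le_of_D hdb)
    rcases lt_or_ge (@Nat.cast ℝ _ b) u with hbu | hbu
    · left
      change |@Nat.cast ℝ _ x - u| ≤ w
      exact abs_le.2 ⟨by linarith, by linarith⟩
    · right
      have hbv : v < (@Nat.cast ℝ _ b) := by
        by_contra hc
        exact hb ⟨hbu, not_lt.1 hc⟩
      change |@Nat.cast ℝ _ x - v| ≤ w
      exact abs_le.2 ⟨by linarith, by linarith⟩
  have h3 := (Set.ncard_le_ncard hs (f1.union f2)).trans (Set.ncard_union_le _ _)
  have h4 : ((rBoundary r ({x : ℕ | u ≤ x ∧ (x : ℝ) ≤ v} : Set (Sp h))).ncard : ℝ) ≤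
    (({x : ℕ | |(x : ℝ) - u| ≤ w}.ncard + {x : ℕ | |(x : ℝ) - v| ≤ w}.ncard : ℕ) : ℝ) :=
      Nat.cast_le.2 h3
  push_cast at h4
  linarith

lemma amenable (h : ℝ → ℝ) : MetricAmenable (Sp h) := by
  let S : ℕ → Set (Sp h) := fun i => {x : ℕ | (0 : ℝ) ≤ x ∧ (x : ℝ) ≤ ((i + 1 : ℕ) : ℝ)}
  have hS : ∀ i : ℕ, (i : ℝ) ≤ (S i).ncard := fun i => by
    have := le_ncard_Icc 0 ((i + 1 : ℕ) : ℝ) le_rfl (Nat.cast_nonneg _)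
    push_cast at this
    simp only [S]
    push_cast
    refine le_trans ?_ this
    linarith
  refine ⟨S, fun i => ⟨⟨(0 : ℕ), ?_⟩, finite_Icc_real _ _⟩, fun r hr => ?_⟩
  · change (0 : ℝ) ≤ (0 : ℕ) ∧ ((0 : ℕ) : ℝ) ≤ ((i + 1 : ℕ) : ℝ)
    exact ⟨by simp, Nat.cast_le.2 (Nat.zero_le _)⟩
  · have hlim : Filter.Tendsto (fun i : ℕ => (2 * (2 * (r + 1) ^ 2 + 1)) / (i : ℝ)) Filter.atTop
        (nhds 0) := tendsto_const_div_atTop_nhds_zero_nat _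
    refine squeeze_zero' (Filter.Eventually.of_forall fun i => by positivity) ?_ hlim
    filter_upwards [Filter.eventually_gt_atTop 0] with i hi
    have hb := boundary_interval (h := h) (r := r) 0 ((i + 1 : ℕ) : ℝ) ⟨0, by simp, by
      simp only [Nat.cast_zero]; positivity⟩
    have hi' : (0 : ℝ) < i := by exact_mod_cast hi
    exact div_le_div₀ (by positivity) hb hi' (hS i)

/-! ### Realizing the powers of the scaling factor -/

/-- Multiplication by `1 / l`, rounded down. -/
noncomputable def shrink (l : ℝ) (x : ℕ) : ℕ := ⌊(x : ℝ) / l⌋₊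

lemma shrink_near {l : ℝ} (hl : 0 < l) (x : ℕ) :
    |(shrink l x : ℝ) - x / l| ≤ 1 := by
  have h1 : ((shrink l x : ℕ) : ℝ) ≤ (x : ℝ) / l := Nat.floor_le (by positivity)
  have h2 : (x : ℝ) / l < (shrink l x : ℕ) + 1 := Nat.lt_floor_add_one _
  rw [abs_le]; constructor <;> linarith

lemma sqrt_le_sqrt_add_two {a b : ℝ} (hb : 0 ≤ b) (h : a ≤ b + 2) : √a ≤ √b + 2 := by
  rw [Real.sqrt_le_left (by positivity)]
  nlinarith [Real.sq_sqrt hb, Real.sqrt_nonneg b]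

lemma isQuasiIsometry_shrink {h : ℝ → ℝ} {l : ℝ} (hl : 0 < l)
    (hlip : ∀ x y : ℝ, 0 ≤ x → 0 ≤ y → |h x - h y| ≤ |x - y|)
    (hsc : ∀ x : ℝ, 0 ≤ x → h (x / l) = h x / l) :
    IsQuasiIsometry (X := Sp h) (Y := Sp h) (shrink l) := by
  obtain ⟨L, hL1, hL2, hL3⟩ : ∃ L : ℝ, 1 ≤ L ∧ l ≤ L ∧ 1 / l ≤ L :=
    ⟨max 1 (max l (1 / l)), le_max_left _ _, le_max_of_le_right (le_max_left _ _),
      le_max_of_le_right (le_max_right _ _)⟩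
  have hL0 : 0 < L := by linarith
  have hlL : 1 / L ≤ 1 / l := one_div_le_one_div_of_le hl hL2
  have hq : ∀ x : ℕ, |h (shrink l x : ℕ) - h x / l| ≤ 1 := fun x => by
    rw [← hsc _ (Nat.cast_nonneg x)]
    exact (hlip _ _ (Nat.cast_nonneg _) (by positivity)).trans (shrink_near hl x)
  have key : ∀ a b : ℕ, D h a b / L - 4 ≤ D h (shrink l a) (shrink l b) ∧
      D h (shrink l a) (shrink l b) ≤ L * D h a b + 4 := by
    intro a b
    unfold D
    have ha := abs_le.1 (hq a)
    have hb := abs_le.1 (hq b)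
    have na := abs_le.1 (shrink_near hl a)
    have nb := abs_le.1 (shrink_near hl b)
    set t := |(a : ℝ) - b| with ht
    set s := |h a - h b| with hs
    have ht0 : 0 ≤ t := abs_nonneg _
    have hs0 : 0 ≤ s := abs_nonneg _
    have e1 : |(a : ℝ) / l - b / l| = t / l := by
      rw [← sub_div, abs_div, abs_of_pos hl]
    have e2 : |h a / l - h b / l| = s / l := by
      rw [← sub_div, abs_div, abs_of_pos hl]
    have f1 : |(shrink l a : ℝ) - shrink l b| ≤ t / l + 2 := by
      rw [← e1, abs_le]
      have := neg_abs_le ((a : ℝ) / l - b / l)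
      have := le_abs_self ((a : ℝ) / l - b / l)
      constructor <;> linarith
    have f2 : t / l ≤ |(shrink l a : ℝ) - shrink l b| + 2 := by
      rw [← e1, abs_le]
      have := neg_abs_le ((shrink l a : ℝ) - shrink l b)
      have := le_abs_self ((shrink l a : ℝ) - shrink l b)
      constructor <;> linarith
    have g1 : |h (shrink l a : ℕ) - h (shrink l b : ℕ)| ≤ s / l + 2 := by
      rw [← e2, abs_le]
      have := neg_abs_le (h a / l - h b / l)
      have := le_abs_self (h a / l - h b / l)
      constructor <;> linarith
    have g2 : s / l ≤ |h (shrink l a : ℕ) - h (shrink l b : ℕ)| + 2 := by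
      rw [← e2, abs_le]
      have := neg_abs_le (h (shrink l a : ℕ) - h (shrink l b : ℕ))
      have := le_abs_self (h (shrink l a : ℕ) - h (shrink l b : ℕ))
      constructor <;> linarith
    have s1 := sqrt_le_sqrt_add_two (by positivity) f1
    have s2 := sqrt_le_sqrt_add_two (abs_nonneg _) f2
    have u1 : √(t / l) ≤ L * √t := by
      rw [Real.sqrt_le_left (by positivity), mul_pow, Real.sq_sqrt ht0, div_eq_inv_mul,
        ← one_div]
      have : 1 / l ≤ L ^ 2 := by nlinarith
      gcongr
    have u2 : √t / L ≤ √(t / l) := by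
      apply Real.le_sqrt_of_sq_le
      rw [div_pow, Real.sq_sqrt ht0]
      have : l ≤ L ^ 2 := by nlinarith
      gcongr
    have v1 : s / l ≤ L * s := by
      rw [div_eq_inv_mul, ← one_div]; gcongr
    have v2 : s / L ≤ s / l := by gcongr
    constructor
    · rw [add_div]; linarith
    · rw [mul_add]; linarith
  refine ⟨2 * L + 4, by linarith, fun a b => ?_, fun y => ?_⟩
  · obtain ⟨k1, k2⟩ := key a b
    have h0 := D_nonneg h a b
    constructor
    · refine le_trans ?_ k1
      have : D h a b / (2 * L + 4) ≤ D h a b / L := by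
        apply div_le_div_of_nonneg_left h0 hL0; linarith
      rw [dist_eq]; linarith
    · refine le_trans k2 ?_
      rw [dist_eq]
      nlinarith
  · let z : ℕ := y
    refine ⟨⌈l * (z : ℝ)⌉₊, ?_⟩
    change D h z (shrink l ⌈l * (z : ℝ)⌉₊) ≤ _
    have c1 : l * (z : ℝ) ≤ ⌈l * (z : ℝ)⌉₊ := Nat.le_ceil _
    have c2 : (⌈l * (z : ℝ)⌉₊ : ℝ) < l * (z : ℝ) + 1 := Nat.ceil_lt_add_one (by positivity)
    have d1 : (z : ℝ) ≤ (⌈l * (z : ℝ)⌉₊ : ℝ) / l := by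
      rw [le_div_iff₀ hl]; linarith
    have d2 : (⌈l * (z : ℝ)⌉₊ : ℝ) / l ≤ z + 1 / l := by
      rw [div_le_iff₀ hl, add_mul, one_div, inv_mul_cancel₀ hl.ne']; linarith
    have d3 := abs_le.1 (shrink_near hl ⌈l * (z : ℝ)⌉₊)
    have d4 : |(z : ℝ) - shrink l ⌈l * (z : ℝ)⌉₊| ≤ L + 1 := by
      rw [abs_le]; constructor <;> linarith
    have d5 := hlip z (shrink l ⌈l * (z : ℝ)⌉₊ : ℕ) (by positivity) (by positivity)
    have d6 : √|(z : ℝ) - shrink l ⌈l * (z : ℝ)⌉₊| ≤ L + 1 := by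
      rw [Real.sqrt_le_left (by positivity)]; nlinarith
    unfold D
    linarith

lemma shrink_fiber {l : ℝ} (hl : 0 < l) (y : ℕ) (x : ℕ) :
    shrink l x = y ↔ x ∈ Finset.Ico ⌈l * (y : ℝ)⌉₊ ⌈l * ((y + 1 : ℕ) : ℝ)⌉₊ := by
  rw [Finset.mem_Ico, Nat.ceil_le, Nat.lt_ceil, shrink, Nat.floor_eq_iff (by positivity),
    le_div_iff₀ hl, div_lt_iff₀ hl, mul_comm l, mul_comm l]
  push_cast
  rfl

/-- With `F y = ⌈l y⌉ - l y ∈ [0, 1]`, the size of the preimage of `A` minus `l |A|` is the sum of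
`F (y + 1) - F y` over `y ∈ A`.  It telescopes along runs of consecutive integers, so it is bounded by
the number of runs of `A`. -/
lemma shrink_count {l : ℝ} (hl : 0 < l) (A : Finset ℕ) :
    |((shrink l ⁻¹' (A : Set ℕ)).ncard : ℝ) - l * (A.card : ℝ)|
      ≤ ((A.image (· + 1) \ A).card : ℝ) := by
  classical
  set F : ℕ → ℝ := fun y => (⌈l * (y : ℝ)⌉₊ : ℝ) - l * y with hF
  have hF0 : ∀ y, 0 ≤ F y := fun y => sub_nonneg.2 (Nat.le_ceil _)
  have hF1 : ∀ y, F y ≤ 1 := fun y => by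
    have := Nat.ceil_lt_add_one (a := l * (y : ℝ)) (by positivity)
    simp only [hF]; linarith
  have hpre : shrink l ⁻¹' (A : Set ℕ) =
      ↑(A.biUnion fun y => Finset.Ico ⌈l * (y : ℝ)⌉₊ ⌈l * ((y + 1 : ℕ) : ℝ)⌉₊) := by
    ext x
    simp only [Set.mem_preimage, Finset.mem_coe, Finset.mem_biUnion, ← shrink_fiber hl]
    simp
  have hcard : ((shrink l ⁻¹' (A : Set ℕ)).ncard : ℝ) - l * (A.card : ℝ) =
      ∑ y ∈ A, (F (y + 1) - F y) := by
    rw [hpre, Set.ncard_coe_finset, Finset.card_biUnion]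
    · push_cast
      rw [mul_comm l, ← nsmul_eq_mul, ← Finset.sum_const, ← Finset.sum_sub_distrib]
      refine Finset.sum_congr rfl fun y _ => ?_
      have hle : ⌈l * (y : ℝ)⌉₊ ≤ ⌈l * ((y : ℝ) + 1)⌉₊ := Nat.ceil_le_ceil (by nlinarith)
      rw [Nat.card_Ico, Nat.cast_sub hle]
      simp only [hF]
      push_cast
      ring
    · intro y _ z _ hyz
      rw [Function.onFun, Finset.disjoint_left]
      intro x hx hx'
      exact hyz (((shrink_fiber hl y x).2 hx).symm.trans ((shrink_fiber hl z x).2 hx'))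
  have hinj : Function.Injective (· + 1 : ℕ → ℕ) := add_left_injective 1
  set B := A.image (· + 1) with hB
  have hBc : B.card = A.card := Finset.card_image_of_injective _ hinj
  have hsum : ∑ y ∈ A, F (y + 1) = ∑ y ∈ B, F y := by
    rw [hB, Finset.sum_image fun x _ y _ h => hinj h]
  have hdc : (B \ A).card = (A \ B).card := Finset.card_sdiff_comm hBc
  rw [hcard, Finset.sum_sub_distrib, hsum, ← Finset.sum_sdiff_sub_sum_sdiff]
  have p1 : 0 ≤ ∑ y ∈ B \ A, F y := Finset.sum_nonneg fun y _ => hF0 y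
  have p2 : 0 ≤ ∑ y ∈ A \ B, F y := Finset.sum_nonneg fun y _ => hF0 y
  have p3 : ∑ y ∈ B \ A, F y ≤ (B \ A).card := by
    simpa using Finset.sum_le_card_nsmul (B \ A) F 1 fun y _ => hF1 y
  have p4 : ∑ y ∈ A \ B, F y ≤ (A \ B).card := by
    simpa using Finset.sum_le_card_nsmul (A \ B) F 1 fun y _ => hF1 y
  rw [← hdc] at p4
  rw [abs_le]; constructor <;> linarith

lemma coarselyScaling_shrink {h : ℝ → ℝ} {l : ℝ} (hl : 0 < l)
    (hlip : ∀ x y : ℝ, 0 ≤ x → 0 ≤ y → |h x - h y| ≤ |x - y|) :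
    CoarselyScaling (X := Sp h) (Y := Sp h) (shrink l) l := by
  classical
  refine ⟨2, by norm_num, 1, by norm_num, fun A hA => ?_⟩
  rcases A.eq_empty_or_nonempty with rfl | hne
  · have e : Set.ncard (α := Sp h) (shrink l ⁻¹' (∅ : Set ℕ)) = 0 := Set.ncard_empty (Sp h)
    change |((Set.ncard (α := Sp h) (shrink l ⁻¹' (∅ : Set ℕ)) : ℕ) : ℝ) - _| ≤ _
    rw [e, Set.ncard_empty]
    simp
  have hfin := boundary_finite (r := 2) (by norm_num) hA hne
  have hA' : Set.Finite (α := ℕ) A := hA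
  obtain ⟨T, hT⟩ : ∃ T : Finset ℕ, (T : Set ℕ) = A := ⟨hA'.toFinset, hA'.coe_toFinset⟩
  subst hT
  have h1 := shrink_count hl T
  rw [one_mul]
  have hs : ((T.image (· + 1) \ T : Finset ℕ) : Set ℕ) ⊆
      rBoundary (X := Sp h) 2 (T : Set ℕ) := by
    intro z hz
    simp only [Finset.coe_sdiff, Finset.coe_image, Set.mem_sdiff, Set.mem_image,
      Finset.mem_coe] at hz
    obtain ⟨⟨y, hy, rfl⟩, hz⟩ := hz
    constructor
    · refine (Metric.infDist_le_dist_of_mem (α := Sp h) (x := (y + 1 : ℕ)) (y := y) hy).trans ?_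
      change D h (y + 1) y ≤ 2
      have h2 := hlip ((y + 1 : ℕ) : ℝ) y (by positivity) (by positivity)
      have h3 : |((y + 1 : ℕ) : ℝ) - y| = 1 := by push_cast; simp
      unfold D
      rw [h3] at h2 ⊢
      rw [Real.sqrt_one]; linarith
    · have : Metric.infDist (α := Sp h) (y + 1 : ℕ) (T : Set ℕ)ᶜ = 0 :=
        Metric.infDist_zero_of_mem hz
      rw [this]; norm_num
  have h2 := Set.ncard_le_ncard hs hfin
  rw [Set.ncard_coe_finset] at h2
  have h3 : Set.ncard (α := Sp h) (T : Set ℕ) = T.card := Set.ncard_coe_finset T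
  rw [h3]
  exact h1.trans (Nat.cast_le.2 h2)

/-! ### Rigidity of quasi-isometries -/

/-- A quasi-isometry of `D h` encoded symmetrically as a relation that is total on both sides and
distorts distances in both directions by at most `t ↦ K t + K`. -/
structure CoarseRel (h : ℝ → ℝ) (K : ℝ) (P : ℕ → ℕ → Prop) : Prop where
  one_le : 1 ≤ K
  left : ∀ x, ∃ y, P x y
  right : ∀ y, ∃ x, P x y
  fwd : ∀ x y x' y', P x y → P x' y' → D h y y' ≤ K * D h x x' + K
  bwd : ∀ x y x' y', P x y → P x' y' → D h x x' ≤ K * D h y y' + K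

lemma CoarseRel.symm {h : ℝ → ℝ} {K : ℝ} {P : ℕ → ℕ → Prop} (H : CoarseRel h K P) :
    CoarseRel h K (fun x y => P y x) where
  one_le := H.one_le
  left := H.right
  right := H.left
  fwd := fun x y x' y' => H.bwd y x y' x'
  bwd := fun x y x' y' => H.fwd y x y' x'

lemma exists_coarseRel {h : ℝ → ℝ} {q : ℕ → ℕ}
    (hq : IsQuasiIsometry (X := Sp h) (Y := Sp h) q) :
    ∃ K P, CoarseRel h K P ∧ ∀ x, P x (q x) := by
  obtain ⟨K, hK, h1, h2⟩ := hq
  have h1' : ∀ a b : ℕ, D h a b / K - K ≤ D h (q a) (q b) ∧ D h (q a) (q b) ≤ K * D h a b + K := h1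
  have h2' : ∀ y : ℕ, ∃ x : ℕ, D h y (q x) ≤ K := h2
  refine ⟨3 * K ^ 2, fun x y => D h (q x) y ≤ K, ⟨by nlinarith, fun x => ⟨q x, ?_⟩, fun y => ?_,
    ?_, ?_⟩, fun x => ?_⟩
  · rw [D_self]; linarith
  · obtain ⟨x, hx⟩ := h2' y
    exact ⟨x, by rwa [D_comm]⟩
  · intro x y x' y' a b
    have t1 := D_triangle h y (q x) y'
    have t2 := D_triangle h (q x) (q x') y'
    rw [D_comm h y (q x)] at t1
    have := (h1' x x').2
    have h0 := D_nonneg h x x'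
    have h5 : 0 ≤ D h x x' * K * (3 * K - 1) := by
      apply mul_nonneg (mul_nonneg h0 (by linarith)); linarith
    nlinarith
  · intro x y x' y' a b
    have t1 := D_triangle h (q x) y (q x')
    have t2 := D_triangle h y y' (q x')
    rw [D_comm h y' (q x')] at t2
    have h3 := (h1' x x').1
    have h0 := D_nonneg h y y'
    have h4 : D h x x' / K ≤ D h y y' + 3 * K := by linarith
    rw [div_le_iff₀ (by linarith)] at h4
    have h5 : 0 ≤ D h y y' * K * (3 * K - 1) := by
      apply mul_nonneg (mul_nonneg h0 (by linarith)); linarith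
    nlinarith
  · change D h (q x) (q x) ≤ K
    rw [D_self]; linarith

/-- On a tent, balls grow at most linearly. -/
lemma card_ball_tent {γ ρ : ℝ} (hγ : 1 < γ) (hρ : 0 < ρ) (hl : 1 + ρ < (1 - ρ) * γ) {x : ℕ} {R : ℝ}
    (hR : 0 ≤ R) (hx : R ^ 2 < profile γ ρ x) (T : Finset ℕ)
    (hT : ∀ y ∈ T, D (profile γ ρ) x y ≤ R) : (T.card : ℝ) ≤ 2 * (2 * R + 1) := by
  obtain ⟨j, hj⟩ := exists_tent hγ (lt_of_le_of_lt (sq_nonneg R) hx)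
  set g := γ ^ j with hg
  obtain ⟨f1, c1⟩ := ncard_near_le (x : ℝ) R hR
  obtain ⟨f2, c2⟩ := ncard_near_le (2 * g - x) R hR
  have hs : (T : Set ℕ) ⊆ {y : ℕ | |(y : ℝ) - x| ≤ R} ∪ {y : ℕ | |(y : ℝ) - (2 * g - x)| ≤ R} := by
    intro y hy
    have hd := hT y hy
    have e1 := abs_sub_le_of_D hd
    have e2 : |(y : ℝ) - g| ≤ ρ * g := by
      have := abs_sub_le (y : ℝ) x g
      rw [abs_sub_comm (y : ℝ) x] at this
      linarith
    have e3 := profile_tent hγ hρ hl e2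
    have e4 : |profile γ ρ x - profile γ ρ y| ≤ R := by
      unfold D at hd
      linarith [Real.sqrt_nonneg |(x : ℝ) - y|]
    rw [hj, e3, abs_le] at e4
    change |(y : ℝ) - x| ≤ R ∨ |(y : ℝ) - (2 * g - x)| ≤ R
    rcases abs_cases ((x : ℝ) - g) with ⟨a, _⟩ | ⟨a, _⟩ <;>
    rcases abs_cases ((y : ℝ) - g) with ⟨b, _⟩ | ⟨b, _⟩ <;>
    rw [a, b] at e4
    · left; rw [abs_le]; constructor <;> linarith
    · right; rw [abs_le]; constructor <;> linarith
    · right; rw [abs_le]; constructor <;> linarith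
    · left; rw [abs_le]; constructor <;> linarith
  have h3 := (Set.ncard_le_ncard hs (f1.union f2)).trans (Set.ncard_union_le _ _)
  rw [Set.ncard_coe_finset] at h3
  have h4 := (Nat.cast_le (α := ℝ)).2 h3
  push_cast at h4
  linarith

/-- On long flat blocks, balls grow at least quadratically. -/
lemma exists_ball_block {γ ρ : ℝ} (hγ : 1 < γ) (hρ : 0 < ρ) {n : ℤ}
    {R : ℕ} (hn : 2 * (R : ℝ) ^ 2 ≤ (1 - ρ) * (γ ^ n * γ) - (1 + ρ) * γ ^ n)
    {y : ℕ} (hy : y ∈ block γ ρ n 0) :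
    ∃ T : Finset ℕ, T.card = R ^ 2 + 1 ∧ ∀ z ∈ T, D (profile γ ρ) y z ≤ R := by
  have hD : ∀ z : ℕ, z ∈ block γ ρ n 0 → |(y : ℝ) - z| ≤ (R : ℝ) ^ 2 →
      D (profile γ ρ) y z ≤ R := by
    intro z hz hyz
    unfold D
    rw [block_profile hγ hρ hy, block_profile hγ hρ hz]
    simpa using (Real.sqrt_le_left (Nat.cast_nonneg R)).2 hyz
  obtain ⟨h1, h2⟩ := hy
  rcases le_total ((y : ℝ) + R ^ 2) ((1 - ρ) * (γ ^ n * γ)) with h | h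
  · refine ⟨Finset.Icc y (y + R ^ 2), by rw [Nat.card_Icc]; omega, fun z hz => ?_⟩
    rw [Finset.mem_Icc] at hz
    have z1 : (y : ℝ) ≤ z := Nat.cast_le.2 hz.1
    have z2 : (z : ℝ) ≤ y + R ^ 2 := by exact_mod_cast hz.2
    refine hD z ⟨by linarith, by linarith⟩ ?_
    rw [abs_le]; constructor <;> nlinarith
  · have hpos : 0 < (1 + ρ) * γ ^ n := by
      have := zpow_pos (show 0 < γ by linarith) n
      positivity
    have hRy : R ^ 2 ≤ y := by
      have : ((R ^ 2 : ℕ) : ℝ) ≤ y := by push_cast; linarith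
      exact_mod_cast this
    refine ⟨Finset.Icc (y - R ^ 2) y, by rw [Nat.card_Icc]; omega, fun z hz => ?_⟩
    rw [Finset.mem_Icc] at hz
    have z1 : (z : ℝ) ≤ y := Nat.cast_le.2 hz.2
    have z2 : (y : ℝ) ≤ z + R ^ 2 := by
      have : y ≤ z + R ^ 2 := by omega
      exact_mod_cast this
    refine hD z ⟨by linarith, by linarith⟩ ?_
    rw [abs_le]; constructor <;> nlinarith

lemma exists_zpow_ge {γ : ℝ} (hγ : 1 < γ) (c : ℝ) : ∃ N : ℤ, ∀ n ≥ N, c < γ ^ n := by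
  obtain ⟨k, hk⟩ := pow_unbounded_of_one_lt c hγ
  refine ⟨k, fun n hn => lt_of_lt_of_le hk ?_⟩
  rw [← zpow_natCast]
  exact zpow_le_zpow_right₀ hγ.le hn

/-- Points related to a point of a flat block have bounded profile, by comparing the growth of
balls: a ball of radius `R` in a block injects, up to bounded multiplicity, into a ball of radius
`K R + K`. -/
lemma profile_le_of_rel {γ ρ : ℝ} (hγ : 1 < γ) (hρ : 0 < ρ) (hl : 1 + ρ < (1 - ρ) * γ)
    {K : ℝ} {P : ℕ → ℕ → Prop} (H : CoarseRel (profile γ ρ) K P) :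
    ∃ C : ℝ, 0 ≤ C ∧ ∃ N : ℤ, ∀ n ≥ N, ∀ x y, P x y → y ∈ block γ ρ n 0 → profile γ ρ x ≤ C := by
  classical
  have hK := H.one_le
  set R : ℕ := ⌈30 * K ^ 3⌉₊ with hRdef
  have hR : 30 * K ^ 3 ≤ (R : ℝ) := Nat.le_ceil _
  have hK3 : 1 ≤ K ^ 3 := one_le_pow₀ hK
  have hR1 : (1 : ℝ) ≤ R := by linarith
  obtain ⟨N, hN⟩ := exists_zpow_ge hγ (2 * (R : ℝ) ^ 2 / ((1 - ρ) * γ - (1 + ρ)))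
  refine ⟨(K * R + K) ^ 2, sq_nonneg _, N, fun n hn x y hxy hy => ?_⟩
  by_contra hcon
  rw [not_le] at hcon
  have hlen : 2 * (R : ℝ) ^ 2 ≤ (1 - ρ) * (γ ^ n * γ) - (1 + ρ) * γ ^ n := by
    have := hN n hn
    rw [div_lt_iff₀ (by linarith)] at this
    nlinarith
  obtain ⟨T, hTc, hT⟩ := exists_ball_block hγ hρ hlen hy
  choose f hf using H.right
  have himg : ∀ z ∈ T.image f, D (profile γ ρ) x z ≤ K * R + K := by
    intro z hz
    obtain ⟨w, hw, rfl⟩ := Finset.mem_image.1 hz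
    have := H.bwd x y (f w) w hxy (hf w)
    have := hT w hw
    nlinarith
  have hR1' : 0 ≤ K * (R : ℝ) + K := by positivity
  have hcard := card_ball_tent hγ hρ hl hR1' hcon (T.image f) himg
  have hfib : ∀ b ∈ T.image f, (T.filter fun a => f a = b).card ≤ ⌊2 * K ^ 2 + 1⌋₊ := by
    intro b hb
    obtain ⟨a, ha, rfl⟩ := Finset.mem_image.1 hb
    obtain ⟨f1, c1⟩ := ncard_near_le (a : ℝ) (K ^ 2) (by positivity)
    apply Nat.le_floor
    refine le_trans ?_ c1
    rw [← Set.ncard_coe_finset]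
    refine Nat.cast_le.2 (Set.ncard_le_ncard ?_ f1)
    intro c hc
    simp only [Finset.coe_filter, Set.mem_ofPred_eq] at hc
    have h1 := H.fwd (f c) c (f a) a (hf c) (hf a)
    rw [hc.2, D_self, mul_zero, zero_add] at h1
    exact abs_sub_le_of_D h1
  have hmul := Finset.card_le_mul_card_image_of_maps_to
    (fun a ha => Finset.mem_image_of_mem f ha) _ hfib
  have hmul' := (Nat.cast_le (α := ℝ)).2 hmul
  rw [hTc] at hmul'
  push_cast at hmul'
  have hfl : (⌊2 * K ^ 2 + 1⌋₊ : ℝ) ≤ 3 * K ^ 2 :=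
    (Nat.floor_le (by positivity)).trans (by nlinarith)
  have hlast : (R : ℝ) ^ 2 + 1 ≤ 3 * K ^ 2 * (2 * (2 * (K * R + K) + 1)) :=
    hmul'.trans (mul_le_mul hfl hcard (by positivity) (by positivity))
  have h10 : 2 * (2 * (K * R + K) + 1) ≤ 10 * K * R := by nlinarith
  have h11 : 3 * K ^ 2 * (2 * (2 * (K * R + K) + 1)) ≤ 3 * K ^ 2 * (10 * K * R) := by gcongr
  have h12 : 30 * K ^ 3 * R ≤ R * R := by gcongr
  nlinarith

/-- Relations are proper: large points are related only to large points. -/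
lemma large_of_rel {h : ℝ → ℝ} {K : ℝ} {P : ℕ → ℕ → Prop} (H : CoarseRel h K P) (X0 : ℝ) :
    ∃ Y0 : ℝ, ∀ x y, P x y → Y0 < y → X0 < x := by
  obtain ⟨y0, hy0⟩ := H.left 0
  -- a bound for `D h x 0` over the finitely many `x ≤ X0`
  obtain ⟨M, hM⟩ : ∃ M : ℝ, ∀ x : ℕ, (x : ℝ) ≤ X0 → D h x 0 ≤ M := by
    obtain ⟨M, hM⟩ := ((Finset.range (⌊X0⌋₊ + 1)).image fun x => D h x 0).bddAbove
    refine ⟨M, fun x hx => hM ?_⟩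
    simp only [Finset.coe_image, Set.mem_image, Finset.coe_range, Set.mem_Iio]
    exact ⟨x, Nat.lt_succ_of_le (Nat.le_floor hx), rfl⟩
  refine ⟨y0 + (K * M + K) ^ 2, fun x y hxy hy => ?_⟩
  by_contra hx
  have h1 := H.fwd x y 0 y0 hxy hy0
  have h2 := hM x (not_lt.1 hx)
  have h3 : D h y y0 ≤ K * M + K := h1.trans (by nlinarith [H.one_le])
  have h4 := (abs_le.1 (abs_sub_le_of_D h3)).2
  linarith

/-- Far out, two nearby points with small profile lie in the same cell: between two cells there is
a tent of large height. -/
lemma same_cell {γ ρ : ℝ} (hγ : 1 < γ) (hρ : 0 < ρ) (hl : 1 + ρ < (1 - ρ) * γ) {C W : ℝ}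
    {x y : ℕ} {m : ℤ} (hx : profile γ ρ x ≤ C) (hxy : |(x : ℝ) - y| ≤ W)
    (hm : C + W < ρ * γ ^ m) (h1 : (x : ℝ) < γ ^ m) (h2 : γ ^ m ≤ (y : ℝ)) : False := by
  have hg : 0 < γ ^ m := zpow_pos (by linarith) m
  have e := profile_tent hγ hρ hl (y := γ ^ m) (j := m) (by simp; positivity)
  rw [sub_self, abs_zero, sub_zero] at e
  have l := profile_lip hγ hρ hl (Nat.cast_nonneg x) hg.le
  rw [e, abs_sub_comm (x : ℝ), abs_of_nonneg (by linarith : 0 ≤ γ ^ m - (x : ℝ))] at l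
  have := abs_le.1 l
  have := abs_le.1 hxy
  linarith

lemma D_succ_le {h : ℝ → ℝ} (hlip : ∀ x y : ℝ, 0 ≤ x → 0 ≤ y → |h x - h y| ≤ |x - y|)
    (y : ℕ) : D h y (y + 1) ≤ 2 := by
  have h2 := hlip (y : ℝ) ((y + 1 : ℕ) : ℝ) (by positivity) (by positivity)
  have h3 : |(y : ℝ) - ((y + 1 : ℕ) : ℝ)| = 1 := by push_cast; simp
  unfold D
  rw [h3] at h2 ⊢
  rw [Real.sqrt_one]; linarith

/-- A quasi-isometry maps each far-out flat block into a bounded neighbourhood of one block. -/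
lemma block_to_block {γ ρ : ℝ} (hγ : 1 < γ) (hρ : 0 < ρ) (hl : 1 + ρ < (1 - ρ) * γ)
    {K : ℝ} {P : ℕ → ℕ → Prop} (H : CoarseRel (profile γ ρ) K P) :
    ∃ C : ℝ, 0 ≤ C ∧ ∀ M : ℤ, ∃ N : ℤ, ∀ n ≥ N, ∃ m ≥ M, ∀ x y, P x y → y ∈ block γ ρ n 0 →
      x ∈ block γ ρ m C := by
  have h0 : 0 < γ := by linarith
  obtain ⟨C, hC, N1, hN1⟩ := profile_le_of_rel hγ hρ hl H
  refine ⟨C, hC, fun M => ?_⟩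
  set W := (K * 2 + K) ^ 2 with hW
  obtain ⟨N2, hN2⟩ := exists_zpow_ge hγ ((C + W) / ρ)
  set M' := max M N2 with hM'
  obtain ⟨Y0, hY0⟩ := large_of_rel H (γ ^ M')
  obtain ⟨N3, hN3⟩ := exists_zpow_ge hγ Y0
  refine ⟨max N1 N3, fun n hn => ?_⟩
  have hn1 : n ≥ N1 := le_trans (le_max_left _ _) hn
  have hn3 : n ≥ N3 := le_trans (le_max_right _ _) hn
  have hbig : ∀ x y, P x y → y ∈ block γ ρ n 0 → γ ^ M' < (x : ℝ) := fun x y hxy hy =>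
    hY0 x y hxy (lt_of_lt_of_le (hN3 n hn3) (block_cell hγ hρ hy).1)
  rcases (block γ ρ n 0).eq_empty_or_nonempty with hemp | hne
  · exact ⟨M, le_rfl, fun x y _ hy => by rw [hemp] at hy; exact hy.elim⟩
  -- the cell of a partner of the least point of the block works for the whole block
  obtain ⟨a, ha, hmin⟩ : ∃ a ∈ block γ ρ n 0, ∀ y ∈ block γ ρ n 0, a ≤ y :=
    ⟨sInf (block γ ρ n 0), Nat.sInf_mem hne, fun y hy => Nat.sInf_le hy⟩
  obtain ⟨b, hb⟩ := H.right a
  have hbpos : 0 < (b : ℝ) := lt_trans (zpow_pos h0 _) (hbig b a hb ha)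
  obtain ⟨m, hm1, hm2⟩ := exists_cell hγ hbpos
  have hmM : M' ≤ m := by
    by_contra hc
    have := zpow_step hγ (not_le.1 hc)
    linarith [hbig b a hb ha]
  have htall : ∀ i ≥ M', C + W < ρ * γ ^ i := fun i hi => by
    have := hN2 i (le_trans (le_max_right _ _) hi)
    rw [div_lt_iff₀ hρ] at this
    linarith
  have hstep : ∀ x y x' y', P x y → P x' y' → y ∈ block γ ρ n 0 → y' ∈ block γ ρ n 0 →
      D (profile γ ρ) y y' ≤ 2 → (γ ^ m ≤ (x : ℝ) ∧ (x : ℝ) < γ ^ m * γ) →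
      (γ ^ m ≤ (x' : ℝ) ∧ (x' : ℝ) < γ ^ m * γ) := by
    intro x y x' y' hxy hxy' hy hy' hd hc
    have hdx : D (profile γ ρ) x x' ≤ K * 2 + K :=
      (H.bwd x y x' y' hxy hxy').trans (by nlinarith [H.one_le])
    have hab := abs_sub_le_of_D hdx
    have hab' : |(x' : ℝ) - x| ≤ W := by rwa [abs_sub_comm]
    constructor
    · by_contra hlt
      exact same_cell hγ hρ hl (hN1 n hn1 x' y' hxy' hy') hab' (htall m hmM) (not_le.1 hlt) hc.1
    · by_contra hge
      have hz : γ ^ (m + 1) = γ ^ m * γ := zpow_add_one₀ h0.ne' m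
      exact same_cell hγ hρ hl (m := m + 1) (hN1 n hn1 x y hxy hy) hab
        (htall (m + 1) (by linarith)) (by rw [hz]; exact hc.2) (by rw [hz]; exact not_lt.1 hge)
  have hall : ∀ k : ℕ, a + k ∈ block γ ρ n 0 → ∀ x, P x (a + k) →
      (γ ^ m ≤ (x : ℝ) ∧ (x : ℝ) < γ ^ m * γ) := by
    intro k
    induction k with
    | zero =>
      intro hk x hx
      exact hstep b a x a hb hx ha ha (by rw [D_self]; norm_num) ⟨hm1, hm2⟩
    | succ k ih =>
      intro hk x hx
      have hk' : a + k ∈ block γ ρ n 0 := by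
        have h1 := ha.1
        have h2 := hk.2
        push_cast at h2
        refine ⟨?_, ?_⟩ <;> push_cast <;> linarith [(Nat.cast_nonneg k : (0 : ℝ) ≤ k)]
      obtain ⟨x', hx'⟩ := H.right (a + k)
      exact hstep x' (a + k) x (a + (k + 1)) hx' hx hk' hk
        (D_succ_le (fun _ _ => profile_lip hγ hρ hl) (a + k)) (ih hk' x' hx')
  refine ⟨m, le_trans (le_max_left _ _) hmM, fun x y hxy hy => ?_⟩
  obtain ⟨k, rfl⟩ := Nat.exists_eq_add_of_le (hmin y hy)
  obtain ⟨c1, c2⟩ := hall k hy x hxy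
  exact mem_block_of_profile_le hγ c1 c2 (hN1 n hn1 x _ hxy hy)

/-! ### Correspondence of blocks and the scaling factor -/

lemma block_mono {γ ρ : ℝ} {m : ℤ} {C C' : ℝ} (h : C ≤ C') : block γ ρ m C ⊆ block γ ρ m C' :=
  fun _ hx => ⟨by linarith [hx.1], by linarith [hx.2]⟩

/-- Enlarged blocks with different indices are far apart. -/
lemma block_index_unique {γ ρ : ℝ} (hγ : 1 < γ) (hρ : 0 < ρ) (hl : 1 + ρ < (1 - ρ) * γ)
    {n n' : ℤ} {C W : ℝ} {y y' : ℕ} (hy : y ∈ block γ ρ n C) (hy' : y' ∈ block γ ρ n' C)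
    (hd : |(y : ℝ) - y'| ≤ W) (hn : 2 * C + W < 2 * ρ * γ ^ n) (hn' : 2 * C + W < 2 * ρ * γ ^ n') :
    n = n' := by
  have hρ1 : 0 < 1 - ρ := by linarith [rho_lt_one hγ hρ hl]
  have hd := abs_le.1 hd
  obtain ⟨a1, a2⟩ := hy
  obtain ⟨b1, b2⟩ := hy'
  rcases lt_trichotomy n n' with h | h | h
  · have := mul_le_mul_of_nonneg_left (zpow_step hγ h) hρ1.le
    nlinarith
  · exact h
  · have := mul_le_mul_of_nonneg_left (zpow_step hγ h) hρ1.le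
    nlinarith

lemma block_length {γ ρ : ℝ} (hγ : 1 < γ) (hl : 1 + ρ < (1 - ρ) * γ) (m : ℤ) :
    (1 + ρ) * γ ^ m ≤ (1 - ρ) * (γ ^ m * γ) := by
  have hm : 0 < γ ^ m := zpow_pos (by linarith) m
  nlinarith

/-- Every point of an enlarged block is close to an integer of the block itself. -/
lemma exists_near_block {γ ρ : ℝ} (hγ : 1 < γ) (hρ : 0 < ρ) (hl : 1 + ρ < (1 - ρ) * γ)
    {m : ℤ} {C : ℝ} (hC : 0 ≤ C) {x : ℕ} (hx : x ∈ block γ ρ m C)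
    (hm : 1 ≤ ((1 - ρ) * γ - (1 + ρ)) * γ ^ m) :
    ∃ x' ∈ block γ ρ m 0, |(x : ℝ) - x'| ≤ C + 1 := by
  obtain ⟨h1, h2⟩ := hx
  have hg : 0 < γ ^ m := zpow_pos (by linarith) m
  have hρ1 : 0 < 1 - ρ := by linarith [rho_lt_one hγ hρ hl]
  rcases lt_or_ge (x : ℝ) ((1 + ρ) * γ ^ m) with h | h
  · have c1 := Nat.le_ceil ((1 + ρ) * γ ^ m)
    have c2 := Nat.ceil_lt_add_one (a := (1 + ρ) * γ ^ m) (by positivity)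
    refine ⟨⌈(1 + ρ) * γ ^ m⌉₊, ⟨by linarith, by linarith⟩, ?_⟩
    rw [abs_le]; constructor <;> linarith
  rcases lt_or_ge ((1 - ρ) * (γ ^ m * γ)) (x : ℝ) with h' | h'
  · have c1 := Nat.floor_le (a := (1 - ρ) * (γ ^ m * γ)) (by positivity)
    have c2 := Nat.lt_floor_add_one ((1 - ρ) * (γ ^ m * γ))
    refine ⟨⌊(1 - ρ) * (γ ^ m * γ)⌋₊, ⟨by linarith, by linarith⟩, ?_⟩
    rw [abs_le]; constructor <;> linarith
  · exact ⟨x, ⟨by linarith, by linarith⟩, by rw [sub_self, abs_zero]; linarith⟩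

/-- The heart of the rigidity: far-out blocks correspond to each other, up to bounded error,
under the relation. -/
lemma block_correspondence {γ ρ : ℝ} (hγ : 1 < γ) (hρ : 0 < ρ) (hl : 1 + ρ < (1 - ρ) * γ)
    {K : ℝ} {P : ℕ → ℕ → Prop} (H : CoarseRel (profile γ ρ) K P) :
    ∃ C : ℝ, 0 ≤ C ∧ ∃ N : ℤ, ∀ n ≥ N, ∃ m : ℤ,
      (∃ y, y ∈ block γ ρ n 0) ∧
      (∀ x y, P x y → y ∈ block γ ρ n 0 → x ∈ block γ ρ m C) ∧
      (∀ x y, P x y → x ∈ block γ ρ m 0 → y ∈ block γ ρ n C) := by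
  obtain ⟨C1, hC1, H1⟩ := block_to_block hγ hρ hl H
  obtain ⟨C2, hC2, H2⟩ := block_to_block hγ hρ hl H.symm
  set C := max C1 C2 with hCdef
  have hC : 0 ≤ C := le_max_of_le_left hC1
  have hK := H.one_le
  refine ⟨C, hC, ?_⟩
  set W := (K * ((C + 1) + (C + 1)) + K) ^ 2 with hW
  set ℓ := (1 - ρ) * γ - (1 + ρ) with hℓ
  have hℓ0 : 0 < ℓ := by linarith
  obtain ⟨M1, hM1⟩ := exists_zpow_ge hγ ((2 * C + W) / (2 * ρ))
  obtain ⟨M2, hM2⟩ := exists_zpow_ge hγ (1 / ℓ)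
  have hsep : ∀ i ≥ M1, 2 * C + W < 2 * ρ * γ ^ i := fun i hi => by
    have := hM1 i hi
    rw [div_lt_iff₀ (by positivity)] at this; linarith
  have hlen : ∀ i ≥ M2, 1 ≤ ℓ * γ ^ i := fun i hi => by
    have := hM2 i hi
    rw [div_lt_iff₀ hℓ0] at this; linarith
  obtain ⟨M3, hM3⟩ := H2 M1
  obtain ⟨N, hN⟩ := H1 (max M2 M3)
  refine ⟨max N (max M1 M2), fun n hn => ?_⟩
  have hnN : n ≥ N := le_trans (le_max_left _ _) hn
  have hnM1 : n ≥ M1 := le_trans (le_trans (le_max_left _ _) (le_max_right _ _)) hn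
  have hnM2 : n ≥ M2 := le_trans (le_trans (le_max_right _ _) (le_max_right _ _)) hn
  obtain ⟨m, hm, hmb⟩ := hN n hnN
  have hmM2 : m ≥ M2 := le_trans (le_max_left _ _) hm
  obtain ⟨n', hn', hnb⟩ := hM3 m (le_trans (le_max_right _ _) hm)
  have hg : 0 < γ ^ n := zpow_pos (by linarith) n
  obtain ⟨y, hy⟩ : ∃ y, y ∈ block γ ρ n 0 := by
    have c1 := Nat.le_ceil ((1 + ρ) * γ ^ n)
    have c2 := Nat.ceil_lt_add_one (a := (1 + ρ) * γ ^ n) (by positivity)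
    have := hlen n hnM2
    refine ⟨⌈(1 + ρ) * γ ^ n⌉₊, by linarith, ?_⟩
    rw [hℓ] at this
    linarith
  -- the block related to block `m` is block `n` again
  have hnn : n = n' := by
    obtain ⟨x, hx⟩ := H.right y
    have hxm := block_mono (le_max_left C1 C2) (hmb x y hx hy)
    obtain ⟨x', hx', hd⟩ := exists_near_block hγ hρ hl hC hxm (hlen m hmM2)
    obtain ⟨y', hy'⟩ := H.left x'
    have hy'n := block_mono (le_max_right C1 C2) (hnb y' x' hy' hx')
    have hDx : D (profile γ ρ) x x' ≤ (C + 1) + (C + 1) := by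
      have l := profile_lip hγ hρ hl (Nat.cast_nonneg x) (Nat.cast_nonneg x')
      have s : √|(x : ℝ) - x'| ≤ C + 1 := by
        rw [Real.sqrt_le_left (by positivity)]; nlinarith
      unfold D; linarith
    have hDy : D (profile γ ρ) y y' ≤ K * ((C + 1) + (C + 1)) + K :=
      (H.fwd x y x' y' hx hy').trans (by gcongr)
    exact block_index_unique hγ hρ hl (block_mono hC hy) hy'n (abs_sub_le_of_D hDy)
      (hsep n hnM1) (hsep n' hn')
  subst hnn
  exact ⟨m, ⟨y, hy⟩, fun x y hxy hy => block_mono (le_max_left C1 C2) (hmb x y hxy hy),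
    fun x y hxy hx => block_mono (le_max_right C1 C2) (hnb y x hxy hx)⟩

lemma preimage_finite {h : ℝ → ℝ} {K : ℝ} {P : ℕ → ℕ → Prop} (H : CoarseRel h K P) {q : ℕ → ℕ}
    (hq : ∀ x, P x (q x)) {A : Set ℕ} (hA : A.Finite) : (q ⁻¹' A).Finite := by
  obtain ⟨b, hb⟩ := hA.bddAbove
  obtain ⟨Y0, hY⟩ := large_of_rel H.symm b
  refine (finite_Icc_real 0 Y0).subset fun x hx => ⟨Nat.cast_nonneg x, ?_⟩
  by_contra hc
  have h1 := hY (q x) x (hq x) (not_le.1 hc)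
  have h2 : ((q x : ℕ) : ℝ) ≤ b := Nat.cast_le.2 (hb hx)
  linarith

/-- Dividing by `γ ^ n` and letting `n → ∞`, the hypothesis says that `k` is a limit of powers of `γ`,
and these form a closed subset of the positive reals. -/
lemma eq_zpow_of_approx {γ k E : ℝ} (hγ : 1 < γ) (hk : 0 < k) (N : ℤ)
    (h : ∀ n ≥ N, ∃ m : ℤ, |k * γ ^ n - γ ^ m| ≤ E) : ∃ j : ℤ, k = γ ^ j := by
  have h0 : 0 < γ := by linarith
  obtain ⟨j, h1, h2⟩ := exists_cell hγ hk
  by_contra hne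
  have h1' : γ ^ j < k := lt_of_le_of_ne h1 fun e => hne ⟨j, e.symm⟩
  obtain ⟨δ, hδ, hd1, hd2⟩ : ∃ δ : ℝ, 0 < δ ∧ γ ^ j + δ ≤ k ∧ k + δ ≤ γ ^ j * γ :=
    ⟨min (k - γ ^ j) (γ ^ j * γ - k), lt_min (by linarith) (by linarith),
      by linarith [min_le_left (k - γ ^ j) (γ ^ j * γ - k)],
      by linarith [min_le_right (k - γ ^ j) (γ ^ j * γ - k)]⟩
  obtain ⟨N', hN'⟩ := exists_zpow_ge hγ (E / δ)
  set n := max N N' with hn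
  obtain ⟨m, hm⟩ := h n (le_max_left _ _)
  have hbig := hN' n (le_max_right _ _)
  rw [div_lt_iff₀ hδ] at hbig
  have hg : 0 < γ ^ n := zpow_pos h0 n
  have hm' := abs_le.1 hm
  have hmn : γ ^ m = γ ^ (m - n) * γ ^ n := by
    rw [← zpow_add₀ h0.ne']; congr 1; ring
  rw [hmn] at hm'
  rcases le_or_gt (m - n) j with hc | hc
  · have hle : γ ^ (m - n) ≤ γ ^ j := zpow_le_zpow_right₀ hγ.le hc
    have : (γ ^ (m - n) + δ) * γ ^ n ≤ k * γ ^ n := by gcongr; linarith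
    nlinarith
  · have hle := zpow_step hγ hc
    have : (k + δ) * γ ^ n ≤ γ ^ (m - n) * γ ^ n := by gcongr; linarith
    nlinarith

/-- The scaling condition, applied to the `n`-th block, whose boundary is bounded, gives
`k γ ^ n = γ ^ m + O(1)`, where the `m`-th block is the one corresponding to it. -/
lemma scaling_factor_eq_zpow {γ ρ k : ℝ} (hγ : 1 < γ) (hρ : 0 < ρ) (hl : 1 + ρ < (1 - ρ) * γ)
    (hk : 0 < k) {q : ℕ → ℕ}
    (hq : IsQuasiIsometry (X := Sp (profile γ ρ)) (Y := Sp (profile γ ρ)) q)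
    (hs : CoarselyScaling (X := Sp (profile γ ρ)) (Y := Sp (profile γ ρ)) q k) :
    ∃ j : ℤ, k = γ ^ j := by
  obtain ⟨K, P, H, hP⟩ := exists_coarseRel hq
  obtain ⟨r, hr, c, hc, hs⟩ := hs
  obtain ⟨C, hC, N, hN⟩ := block_correspondence hγ hρ hl H
  set ℓ := (1 - ρ) * γ - (1 + ρ) with hℓ
  have hℓ0 : 0 < ℓ := by linarith
  set c' := c * (2 * (2 * (r + 1) ^ 2 + 1)) with hc'
  have hc'0 : 0 ≤ c' := by positivity
  have hfin : ∀ (n : ℤ) (C : ℝ), (block γ ρ n C).Finite := fun n C => finite_Icc_real _ _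
  have hinterval : ∀ (n : ℤ) (C : ℝ), (block γ ρ n C).Nonempty →
      |((q ⁻¹' block γ ρ n C).ncard : ℝ) - k * (block γ ρ n C).ncard| ≤ c' := by
    intro n C hne
    have h1 := hs (block γ ρ n C) (hfin n C)
    have h2 := boundary_interval (h := profile γ ρ) (r := r) _ _ hne
    exact h1.trans (mul_le_mul_of_nonneg_left h2 hc)
  refine eq_zpow_of_approx hγ hk (E := (k * (2 * C + 1) + c' + 2 * C + 1) / ℓ) N
    fun n hn => ?_
  obtain ⟨m, hne, hb1, hb2⟩ := hN n hn
  refine ⟨m, ?_⟩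
  have hgn : 0 < γ ^ n := zpow_pos (by linarith) n
  have hgm : 0 < γ ^ m := zpow_pos (by linarith) m
  have hln := block_length hγ hl n
  have hlm := block_length hγ hl m
  have hρ0 : 0 ≤ 1 + ρ := by linarith
  have en : (1 - ρ) * (γ ^ n * γ) - (1 + ρ) * γ ^ n = ℓ * γ ^ n := by rw [hℓ]; ring
  have em : (1 - ρ) * (γ ^ m * γ) - (1 + ρ) * γ ^ m = ℓ * γ ^ m := by rw [hℓ]; ring
  have b1 : ℓ * γ ^ n - 1 ≤ (block γ ρ n 0).ncard := by
    have := le_ncard_Icc ((1 + ρ) * γ ^ n - 0) ((1 - ρ) * (γ ^ n * γ) + 0)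
      (by rw [sub_zero]; positivity) (by linarith)
    unfold block; linarith
  have b2 : ℓ * γ ^ m - 1 ≤ (block γ ρ m 0).ncard := by
    have := le_ncard_Icc ((1 + ρ) * γ ^ m - 0) ((1 - ρ) * (γ ^ m * γ) + 0)
      (by rw [sub_zero]; positivity) (by linarith)
    unfold block; linarith
  have b3 : ((block γ ρ n C).ncard : ℝ) ≤ ℓ * γ ^ n + 2 * C + 1 := by
    have := ncard_Icc_le ((1 + ρ) * γ ^ n - C) ((1 - ρ) * (γ ^ n * γ) + C) (by linarith)
    unfold block; linarith
  have b4 : ((block γ ρ m C).ncard : ℝ) ≤ ℓ * γ ^ m + 2 * C + 1 := by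
    have := ncard_Icc_le ((1 + ρ) * γ ^ m - C) ((1 - ρ) * (γ ^ m * γ) + C) (by linarith)
    unfold block; linarith
  have s1 : ((q ⁻¹' block γ ρ n 0).ncard : ℝ) ≤ (block γ ρ m C).ncard :=
    Nat.cast_le.2 (Set.ncard_le_ncard (fun x hx => hb1 x (q x) (hP x) hx) (hfin m C))
  have s2 : ((block γ ρ m 0).ncard : ℝ) ≤ (q ⁻¹' block γ ρ n C).ncard :=
    Nat.cast_le.2 (Set.ncard_le_ncard (fun x hx => hb2 x (q x) (hP x) hx)
      (preimage_finite H hP (hfin n C)))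
  have t1 := abs_le.1 (hinterval n 0 hne)
  have t2 := abs_le.1 (hinterval n C (Set.Nonempty.mono (block_mono hC) hne))
  have u1 := mul_le_mul_of_nonneg_left b1 hk.le
  have u2 := mul_le_mul_of_nonneg_left b3 hk.le
  have hkC : 0 ≤ k * C := by positivity
  rw [le_div_iff₀ hℓ0, ← abs_of_pos hℓ0, ← abs_mul, abs_le]
  constructor <;> nlinarith

end CyclicScaling

/-- For every real `γ > 1` there is an amenable UDBG metric space `X` whose
scaling group is exactly `{γ^n : n ∈ ℤ}`. -/
theorem exists_UDBG_space_with_cyclic_scaling_group (γ : ℝ) (hγ : 1 < γ) :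
    ∃ (X : Type) (_ : MetricSpace X),
      UniformlyDiscrete X ∧ BoundedGeometry X ∧ MetricAmenable X ∧
      ScalingGroup X = {x : ℝ | ∃ n : ℤ, x = γ ^ n} := by
  obtain ⟨ρ, hρ, hl⟩ : ∃ ρ : ℝ, 0 < ρ ∧ 1 + ρ < (1 - ρ) * γ := by
    have h1 : 0 < γ + 1 := by linarith
    refine ⟨(γ - 1) / (2 * (γ + 1)), by apply div_pos <;> linarith, ?_⟩
    have h2 : (γ - 1) / (2 * (γ + 1)) * (γ + 1) = (γ - 1) / 2 := by field_simp
    linarith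
  have h0 : 0 < γ := by linarith
  refine ⟨CyclicScaling.Sp (CyclicScaling.profile γ ρ), inferInstance,
    CyclicScaling.uniformlyDiscrete _, CyclicScaling.boundedGeometry _,
    CyclicScaling.amenable _, Set.ext fun k => ⟨?_, ?_⟩⟩
  · rintro ⟨hk, q, hq, hs⟩
    exact CyclicScaling.scaling_factor_eq_zpow hγ hρ hl hk hq hs
  · rintro ⟨j, rfl⟩
    have hlip : ∀ x y : ℝ, 0 ≤ x → 0 ≤ y →
        |CyclicScaling.profile γ ρ x - CyclicScaling.profile γ ρ y| ≤ |x - y| :=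
      fun _ _ => CyclicScaling.profile_lip hγ hρ hl
    exact ⟨zpow_pos h0 j, CyclicScaling.shrink (γ ^ j),
      CyclicScaling.isQuasiIsometry_shrink (zpow_pos h0 j) hlip
        fun _ hx => CyclicScaling.profile_div hγ hx j,
      CyclicScaling.coarselyScaling_shrink (zpow_pos h0 j) hlip⟩
end

section
/- Let X and Y be amenable UDBG metric spaces and let q : X → Y be a quasi-isometry. Then for k > 0, q is coarsely k-to-1 if and only if for every Følner sequence (S_i) in Y there exist r > 0 and C ≥ 0 such that | |q⁻¹(S_i)| − k·|S_i| | ≤ C·|∂_r S_i| for all i. -/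
theorem rBoundary_finite {Y : Type*} [MetricSpace Y] (hY : BoundedGeometry Y) {A : Set Y}
    (hA : A.Finite) (hne : A.Nonempty) (r : ℝ) : (rBoundary r A).Finite := by
  have hpos : 0 < |r| + 1 := by positivity
  obtain ⟨B, hB⟩ := hY (|r| + 1) hpos
  refine (hA.biUnion fun a _ => (hB a).1).subset ?_
  rintro x ⟨hx, -⟩
  have hlt : Metric.infDist x A < |r| + 1 := by linarith [le_abs_self r]
  obtain ⟨a, ha, hxa⟩ := (Metric.infDist_lt_iff hne).1 hlt
  exact Set.mem_biUnion ha (Metric.mem_closedBall.2 hxa.le)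

/-- Nonemptiness of `A` matters: for `r ≥ 0`, `rBoundary r ∅` is the whole space, since
`Metric.infDist x ∅ = 0`, and `ncard` takes the junk value `0` if that space is infinite. -/
theorem ncard_rBoundary_mono {Y : Type*} [MetricSpace Y] (hY : BoundedGeometry Y) {A : Set Y}
    (hA : A.Finite) (hne : A.Nonempty) {r s : ℝ} (hrs : r ≤ s) :
    ((rBoundary r A).ncard : ℝ) ≤ (rBoundary s A).ncard := by
  have hsub : rBoundary r A ⊆ rBoundary s A := fun x hx => ⟨hx.1.trans hrs, hx.2.trans hrs⟩
  exact_mod_cast Set.ncard_le_ncard hsub (rBoundary_finite hY hA hne s)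

/-- Each fibre of a quasi-isometry lies in a ball of radius `K ^ 2`, so preimages of finite sets
grow at most linearly. -/
theorem exists_ncard_preimage_le {X Y : Type*} [MetricSpace X] [MetricSpace Y]
    (hX : BoundedGeometry X) {q : X → Y} (hq : IsQuasiIsometry q) :
    ∃ B : ℕ, ∀ A : Set Y, A.Finite → (q ⁻¹' A).ncard ≤ B * A.ncard := by
  obtain ⟨K, hK, hd, -⟩ := hq
  have hK0 : 0 < K := by linarith
  obtain ⟨B, hB⟩ := hX (K * K) (by positivity)
  have hfib : ∀ a : X, q ⁻¹' {q a} ⊆ Metric.closedBall a (K * K) := by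
    intro a x hx
    have hxa : q x = q a := hx
    have h := (hd x a).1
    rw [hxa, dist_self] at h
    exact Metric.mem_closedBall.2 ((div_le_iff₀ hK0).1 (by linarith))
  have hfin : ∀ y : Y, (q ⁻¹' {y}).Finite ∧ (q ⁻¹' {y}).ncard ≤ B := by
    intro y
    rcases (q ⁻¹' {y}).eq_empty_or_nonempty with h | ⟨a, ha⟩
    · simp [h]
    · obtain rfl : q a = y := ha
      exact ⟨(hB a).1.subset (hfib a), (Set.ncard_le_ncard (hfib a) (hB a).1).trans (hB a).2⟩
  refine ⟨B, fun A hA => ?_⟩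
  classical
  have hpre : (q ⁻¹' A).Finite := hA.preimage' fun y _ => (hfin y).1
  rw [Set.ncard_eq_toFinset_card _ hpre, Set.ncard_eq_toFinset_card _ hA]
  refine Finset.card_le_mul_card_image_of_maps_to (f := q) (by simp) B fun y _ => ?_
  refine le_trans ?_ (hfin y).2
  rw [← Set.ncard_coe_finset]
  exact Set.ncard_le_ncard (fun x hx => by simpa using (Finset.mem_filter.1 hx).2) (hfin y).1

theorem exists_discrepancy_le {X Y : Type*} [MetricSpace X] [MetricSpace Y]
    (hX : BoundedGeometry X) {q : X → Y} (hq : IsQuasiIsometry q) {k : ℝ} (hk : 0 < k) :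
    ∃ M : ℝ, ∀ A : Set Y, A.Finite →
      |((q ⁻¹' A).ncard : ℝ) - k * (A.ncard : ℝ)| ≤ M * (A.ncard : ℝ) := by
  obtain ⟨B, hB⟩ := exists_ncard_preimage_le hX hq
  refine ⟨B + k, fun A hA => ?_⟩
  have h1 : ((q ⁻¹' A).ncard : ℝ) ≤ B * A.ncard := by exact_mod_cast hB A hA
  have h2 : (0 : ℝ) ≤ (q ⁻¹' A).ncard := by positivity
  have h3 : 0 ≤ k * (A.ncard : ℝ) := by positivity
  have h4 : 0 ≤ (B : ℝ) * A.ncard := by positivity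
  rw [abs_le]
  constructor <;> linarith

/-- **Block–Weinberger / Whyte criterion.** A quasi-isometry `q` between amenable
UDBG spaces is coarsely `k`-to-1 iff for every Følner sequence `(Sᵢ)` in the target,
`||q⁻¹(Sᵢ)| − k|Sᵢ|| ≤ C|∂_r Sᵢ|` for some `r > 0`, `C ≥ 0` and all `i`. -/
theorem coarselyScaling_iff_folner {X Y : Type*} [MetricSpace X] [MetricSpace Y]
    (hXud : UniformlyDiscrete X) (hXbg : BoundedGeometry X) (hXam : MetricAmenable X)
    (hYud : UniformlyDiscrete Y) (hYbg : BoundedGeometry Y) (hYam : MetricAmenable Y)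
    (q : X → Y) (hq : IsQuasiIsometry q) (k : ℝ) (hk : 0 < k) :
    CoarselyScaling q k ↔
      ∀ S : ℕ → Set Y, IsFolnerSeq S →
        ∃ r : ℝ, 0 < r ∧ ∃ C : ℝ, 0 ≤ C ∧ ∀ i : ℕ,
          |((q ⁻¹' (S i)).ncard : ℝ) - k * ((S i).ncard : ℝ)| ≤
            C * ((rBoundary r (S i)).ncard : ℝ) := by
  constructor
  · rintro ⟨r, hr, C, hC, h⟩ S hS
    exact ⟨r, hr, C, hC, fun i => h (S i) (hS.1 i).2⟩
  intro H
  by_contra hcon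
  obtain ⟨M, hM⟩ := exists_discrepancy_le hXbg hq hk
  have hex : ∀ n : ℕ, ∃ A : Set Y, A.Finite ∧
      ((n : ℝ) + 1) * ((rBoundary ((n : ℝ) + 1) A).ncard : ℝ) <
        |((q ⁻¹' A).ncard : ℝ) - k * (A.ncard : ℝ)| := by
    intro n
    by_contra! hn
    exact hcon ⟨n + 1, by positivity, n + 1, by positivity, hn⟩
  choose A hAfin hA using hex
  have hne : ∀ n, (A n).Nonempty := by
    intro n
    by_contra h
    have hn := hA n
    rw [Set.not_nonempty_iff_eq_empty.1 h] at hn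
    simp only [Set.preimage_empty, Set.ncard_empty, Nat.cast_zero, mul_zero, sub_zero,
      abs_zero] at hn
    exact absurd hn (not_lt.2 (by positivity))
  have hF : IsFolnerSeq A := by
    refine ⟨fun n => ⟨hne n, hAfin n⟩, fun r _ => ?_⟩
    have hlim : Filter.Tendsto (fun n : ℕ => M / ((n : ℝ) + 1)) Filter.atTop (nhds 0) :=
      Filter.Tendsto.div_atTop tendsto_const_nhds
        (Filter.tendsto_atTop_add_const_right _ _ tendsto_natCast_atTop_atTop)
    refine tendsto_of_tendsto_of_tendsto_of_le_of_le' tendsto_const_nhds hlim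
      (Filter.Eventually.of_forall fun n => by positivity) ?_
    obtain ⟨N, hN⟩ := exists_nat_ge r
    filter_upwards [Filter.eventually_ge_atTop N] with n hn
    have hNn : (N : ℝ) ≤ n := by exact_mod_cast hn
    have hcard : (0 : ℝ) < (A n).ncard := by
      exact_mod_cast (Set.ncard_pos (hAfin n)).2 (hne n)
    have hmono := ncard_rBoundary_mono hYbg (hAfin n) (hne n) (r := r) (s := n + 1) (by linarith)
    rw [div_le_div_iff₀ hcard (by positivity)]
    have hpos : (0 : ℝ) ≤ (n : ℝ) + 1 := by positivity
    calc ((rBoundary r (A n)).ncard : ℝ) * (n + 1)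
        ≤ (n + 1) * ((rBoundary ((n : ℝ) + 1) (A n)).ncard : ℝ) := by
          rw [mul_comm]; gcongr
      _ ≤ M * (A n).ncard := (hA n).le.trans (hM _ (hAfin n))
  obtain ⟨r, hr, C, hC, h⟩ := H A hF
  obtain ⟨n, hn⟩ := exists_nat_ge (max r C)
  have hrn : r ≤ (n : ℝ) + 1 := by linarith [le_max_left r C]
  have hCn : C ≤ (n : ℝ) + 1 := by linarith [le_max_right r C]
  have hmono := ncard_rBoundary_mono hYbg (hAfin n) (hne n) hrn
  have hle : C * ((rBoundary r (A n)).ncard : ℝ) ≤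
      ((n : ℝ) + 1) * ((rBoundary ((n : ℝ) + 1) (A n)).ncard : ℝ) := by gcongr
  exact absurd (hA n) (not_lt.2 ((h n).trans hle))
end

section
/- Let X and Y be UDBG metric spaces with Y amenable, and let q : X → Y be a quasi-isometry. If q is coarsely k₁-to-1 and coarsely k₂-to-1 for positive reals k₁, k₂, then k₁ = k₂. In other words, a quasi-isometry into an amenable UDBG space is k-scaling for at most one value of k. -/
/-- A quasi-isometry into an amenable UDBG space is coarsely `k`-to-1 for at most
one positive value of `k`. -/
theorem scaling_factor_unique {X Y : Type*} [MetricSpace X] [MetricSpace Y]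
    (hXud : UniformlyDiscrete X) (hXbg : BoundedGeometry X)
    (hYud : UniformlyDiscrete Y) (hYbg : BoundedGeometry Y) (hYam : MetricAmenable Y)
    (q : X → Y) (hq : IsQuasiIsometry q) (k₁ k₂ : ℝ) (hk₁ : 0 < k₁) (hk₂ : 0 < k₂)
    (h₁ : CoarselyScaling q k₁) (h₂ : CoarselyScaling q k₂) :
    k₁ = k₂ := by
  obtain ⟨S, hS, hlim⟩ := hYam
  obtain ⟨r₁, hr₁, C₁, -, hA₁⟩ := h₁
  obtain ⟨r₂, hr₂, C₂, -, hA₂⟩ := h₂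
  have hT := ((hlim r₁ hr₁).const_mul C₁).add ((hlim r₂ hr₂).const_mul C₂)
  simp only [mul_zero, add_zero] at hT
  have hle : |k₁ - k₂| ≤ 0 := by
    refine ge_of_tendsto' hT fun i => ?_
    have hpos : (0 : ℝ) < ((S i).ncard : ℝ) := by
      exact_mod_cast (Set.ncard_pos (hS i).2).2 (hS i).1
    rw [← mul_div_assoc, ← mul_div_assoc, ← add_div, le_div_iff₀ hpos]
    calc |k₁ - k₂| * ((S i).ncard : ℝ)
        = |k₁ * ((S i).ncard : ℝ) - k₂ * ((S i).ncard : ℝ)| := by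
          rw [← sub_mul, abs_mul, abs_of_pos hpos]
      _ ≤ |k₁ * ((S i).ncard : ℝ) - ((q ⁻¹' S i).ncard : ℝ)|
          + |((q ⁻¹' S i).ncard : ℝ) - k₂ * ((S i).ncard : ℝ)| := abs_sub_le _ _ _
      _ ≤ _ := by
          rw [abs_sub_comm (k₁ * _)]
          exact add_le_add (hA₁ _ (hS i).2) (hA₂ _ (hS i).2)
  exact sub_eq_zero.mp (abs_nonpos_iff.mp hle)
end

section
/- Let (X, d_X) be a UDBG metric space, let a : ℤ → X, and suppose there is M ∈ ℕ such that |{i ∈ ℤ : a_i = x}| ≤ M for every x ∈ X. Let U = X ⊔ {(i, p) : i ∈ ℤ, p ∈ ℤ² ∖ {0}} and define d on U by: d(x, y) = d_X(x, y) for x, y ∈ X; d((i, p), (i, q)) = ‖p − q‖₁; d((i, p), x) = d(x, (i, p)) = ‖p‖₁ + d_X(a_i, x) for x ∈ X; and d((i, p), (j, q)) = ‖p‖₁ + d_X(a_i, a_j) + ‖q‖₁ for i ≠ j, where ‖·‖₁ is the taxicab norm on ℤ². Then d is a metric on U, and the metric space (U, d) is uniformly discrete, has bounded geometry, and is amenable.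 -/
/-- The taxicab norm `‖p‖₁ = |p₁| + |p₂|` of a point of `ℤ²`, as a real number. -/
def taxi (p : ℤ × ℤ) : ℝ := ((|p.1| + |p.2| : ℤ) : ℝ)

/-- The underlying set of the space obtained from `X` by attaching, for each
`i ∈ ℤ`, a copy of `ℤ²` whose origin is identified with the attachment point
`a i ∈ X`. -/
def FlatsSpace (X : Type*) : Type _ :=
  X ⊕ (ℤ × {p : ℤ × ℤ // p ≠ 0})

/-- The distance on `FlatsSpace X`: `X` and each flat keep their own metrics,
flat points are joined to `X` through their origin `a i`, and distinct flats are
joined through their attachment points (the largest metric allowed by the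
triangle inequality). -/
noncomputable def flatsDist {X : Type*} [MetricSpace X] (a : ℤ → X) :
    FlatsSpace X → FlatsSpace X → ℝ
  | Sum.inl x, Sum.inl y => dist x y
  | Sum.inl x, Sum.inr (i, p) => taxi p.1 + dist (a i) x
  | Sum.inr (i, p), Sum.inl y => taxi p.1 + dist (a i) y
  | Sum.inr (i, p), Sum.inr (j, q) =>
      if i = j then taxi (p.1 - q.1)
      else taxi p.1 + dist (a i) (a j) + taxi q.1

/-! ### The metric -/

lemma taxi_nonneg (p : ℤ × ℤ) : 0 ≤ taxi p := by
  unfold taxi; positivity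

lemma taxi_neg (p : ℤ × ℤ) : taxi (-p) = taxi p := by
  simp [taxi]

lemma taxi_add_le (p q : ℤ × ℤ) : taxi (p + q) ≤ taxi p + taxi q := by
  unfold taxi
  have h1 := abs_add_le p.1 q.1
  have h2 := abs_add_le p.2 q.2
  norm_cast
  simp only [Prod.fst_add, Prod.snd_add]
  linarith

lemma one_le_taxi {p : ℤ × ℤ} (hp : p ≠ 0) : 1 ≤ taxi p := by
  unfold taxi
  have : 0 < |p.1| + |p.2| := by
    rcases eq_or_ne p.1 0 with h1 | h1
    · have h2 : p.2 ≠ 0 := fun h2 => hp (Prod.ext h1 h2)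
      have := abs_pos.2 h2
      positivity
    · have := abs_pos.2 h1
      positivity
  exact_mod_cast this

lemma taxi_sub_comm (p q : ℤ × ℤ) : taxi (p - q) = taxi (q - p) := by
  rw [← taxi_neg, neg_sub]

lemma taxi_sub_triangle (p q s : ℤ × ℤ) : taxi (p - s) ≤ taxi (p - q) + taxi (q - s) := by
  simpa using taxi_add_le (p - q) (q - s)

lemma taxi_sub_le (p q : ℤ × ℤ) : taxi (p - q) ≤ taxi p + taxi q := by
  simpa [taxi_neg, sub_eq_add_neg] using taxi_add_le p (-q)

lemma taxi_le_sub_add (p q : ℤ × ℤ) : taxi p ≤ taxi (p - q) + taxi q := by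
  simpa using taxi_add_le (p - q) q

section
variable {X : Type*} [MetricSpace X] (a : ℤ → X)

lemma flatsDist_comm (u v : FlatsSpace X) : flatsDist a u v = flatsDist a v u := by
  rcases u with x | ⟨i, p⟩ <;> rcases v with y | ⟨j, q⟩ <;> simp only [flatsDist]
  · exact dist_comm x y
  · by_cases h : i = j
    · subst h; simp [taxi_sub_comm p.1 q.1]
    · rw [if_neg h, if_neg (Ne.symm h), dist_comm]; ring

lemma flatsDist_triangle (u v w : FlatsSpace X) :
    flatsDist a u w ≤ flatsDist a u v + flatsDist a v w := by
  rcases u with x | ⟨i, p⟩ <;> rcases v with y | ⟨j, q⟩ <;> rcases w with z | ⟨k, s⟩ <;>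
    simp only [flatsDist]
  · exact dist_triangle x y z
  · linarith [dist_triangle (a k) y x, dist_comm x y]
  · linarith [dist_triangle x (a j) z, dist_comm x (a j), taxi_nonneg q.1]
  · split_ifs with h
    · subst h
      linarith [taxi_le_sub_add s.1 q.1, taxi_sub_comm q.1 s.1]
    · linarith [dist_triangle (a k) (a j) x, dist_comm (a k) (a j), taxi_nonneg q.1]
  · linarith [dist_triangle (a i) y z]
  · split_ifs with h
    · subst h
      linarith [taxi_sub_le p.1 s.1, dist_nonneg (x := a i) (y := y)]
    · linarith [dist_triangle (a i) y (a k), dist_comm (a k) y]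
  · split_ifs with h
    · subst h
      linarith [taxi_le_sub_add p.1 q.1]
    · linarith [dist_triangle (a i) (a j) z, taxi_nonneg q.1]
  · by_cases hij : i = j
    · subst hij
      by_cases hik : i = k
      · subst hik
        simpa using taxi_sub_triangle p.1 q.1 s.1
      · simp only [if_neg hik, if_true]
        linarith [taxi_le_sub_add p.1 q.1]
    · by_cases hjk : j = k
      · subst hjk
        simp only [if_neg hij, if_true]
        linarith [taxi_le_sub_add s.1 q.1, taxi_sub_comm q.1 s.1]
      · simp only [if_neg hij, if_neg hjk]
        split_ifs with hik
        · linarith [taxi_sub_le p.1 s.1, dist_nonneg (x := a i) (y := a j),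
            dist_nonneg (x := a j) (y := a k), taxi_nonneg q.1]
        · linarith [dist_triangle (a i) (a j) (a k), taxi_nonneg q.1]

lemma flatsDist_self (u : FlatsSpace X) : flatsDist a u u = 0 := by
  rcases u with x | ⟨i, p⟩ <;> simp [flatsDist, taxi]

/-- The separation constant of `X` capped at `1`, the least distance occurring inside a flat or
between a flat and anything else, separates the points of the union. -/
lemma le_flatsDist {ε : ℝ} (hε : ∀ x y : X, x ≠ y → ε ≤ dist x y) {u v : FlatsSpace X}
    (h : u ≠ v) : min ε 1 ≤ flatsDist a u v := by
  rcases u with x | ⟨i, p⟩ <;> rcases v with y | ⟨j, q⟩ <;> simp only [flatsDist]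
  · exact (min_le_left _ _).trans (hε x y fun e => h (by rw [e]))
  · refine (min_le_right _ _).trans ?_
    linarith [one_le_taxi q.2, dist_nonneg (x := a j) (y := x)]
  · refine (min_le_right _ _).trans ?_
    linarith [one_le_taxi p.2, dist_nonneg (x := a i) (y := y)]
  · refine (min_le_right _ _).trans ?_
    split_ifs with hij
    · subst hij
      refine one_le_taxi (sub_ne_zero.2 fun e => h ?_)
      rw [Subtype.ext e]
    · linarith [one_le_taxi p.2, dist_nonneg (x := a i) (y := a j), taxi_nonneg q.1]

lemma eq_of_flatsDist_eq_zero {u v : FlatsSpace X} (h : flatsDist a u v = 0) : u = v := by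
  rcases u with x | ⟨i, p⟩ <;> rcases v with y | ⟨j, q⟩ <;> simp only [flatsDist] at h
  · rw [dist_eq_zero.1 h]
  · linarith [one_le_taxi q.2, dist_nonneg (x := a j) (y := x)]
  · linarith [one_le_taxi p.2, dist_nonneg (x := a i) (y := y)]
  · split_ifs at h with hij
    · subst hij
      by_cases e : p.1 - q.1 = 0
      · rw [Subtype.ext (sub_eq_zero.1 e)]
      · linarith [one_le_taxi e]
    · linarith [one_le_taxi p.2, dist_nonneg (x := a i) (y := a j), taxi_nonneg q.1]

/-- The metric space structure on `FlatsSpace X` with distance `flatsDist a`. -/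
noncomputable abbrev flatsMetric : MetricSpace (FlatsSpace X) where
  dist := flatsDist a
  dist_self := flatsDist_self a
  dist_comm := flatsDist_comm a
  dist_triangle := flatsDist_triangle a
  eq_of_dist_eq_zero := eq_of_flatsDist_eq_zero a

/-! ### Bounded geometry -/

/-- The nearest-point retraction of the union onto `X`, collapsing each flat to its attachment
point. -/
def flatsBase : FlatsSpace X → X
  | Sum.inl x => x
  | Sum.inr (i, _) => a i

/-- The point `p` of the `i`-th flat; for `p = 0` this is the attachment point `a i`. -/
def flatPt (i : ℤ) (p : ℤ × ℤ) : FlatsSpace X :=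
  if h : p ≠ 0 then Sum.inr (i, ⟨p, h⟩) else Sum.inl (a i)

lemma flatPt_of_ne {X : Type*} (a : ℤ → X) (i : ℤ) {p : ℤ × ℤ} (h : p ≠ 0) :
    flatPt a i p = Sum.inr (i, ⟨p, h⟩) :=
  dif_pos h

lemma flatPt_zero {X : Type*} (a : ℤ → X) (i : ℤ) : flatPt a i 0 = Sum.inl (a i) :=
  dif_neg (by simp)

lemma flatPt_injective {X : Type*} (a : ℤ → X) (i : ℤ) : Function.Injective (flatPt a i) := by
  intro p q h
  by_cases hp : p = 0 <;> by_cases hq : q = 0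
  · rw [hp, hq]
  · rw [hp, flatPt_zero, flatPt_of_ne a i hq] at h
    exact absurd h Sum.inl_ne_inr
  · rw [hq, flatPt_zero, flatPt_of_ne a i hp] at h
    exact absurd h Sum.inr_ne_inl
  · rw [flatPt_of_ne a i hp, flatPt_of_ne a i hq] at h
    exact congrArg (fun z => z.2.1) (Sum.inr.inj h)

/-- The square `[-N, N]²` in `ℤ²`. -/
noncomputable def box (N : ℕ) : Finset (ℤ × ℤ) :=
  Finset.Icc (-(N : ℤ)) N ×ˢ Finset.Icc (-(N : ℤ)) N

lemma mem_box_of_taxi_le {N : ℕ} {p : ℤ × ℤ} (h : taxi p ≤ N) : p ∈ box N := by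
  unfold taxi at h
  have h : |p.1| + |p.2| ≤ (N : ℤ) := by exact_mod_cast h
  have h1 := abs_nonneg p.1
  have h2 := abs_nonneg p.2
  simp only [box, Finset.mem_product, Finset.mem_Icc, ← abs_le]
  constructor <;> linarith

/-- At most `M * B` flats are attached at the points of a set of at most `B` points. -/
lemma index_bound {X : Type*} (a : ℤ → X) {M B : ℕ}
    (hM : ∀ x : X, ({i : ℤ | a i = x}).Finite ∧ ({i : ℤ | a i = x}).ncard ≤ M)
    {s : Set X} (hs : s.Finite) (hB : s.ncard ≤ B) :
    (a ⁻¹' s).Finite ∧ (a ⁻¹' s).ncard ≤ M * B := by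
  classical
  have hf : (a ⁻¹' s).Finite := hs.preimage' fun b _ => (hM b).1
  refine ⟨hf, ?_⟩
  rw [Set.ncard_eq_toFinset_card _ hf]
  rw [Set.ncard_eq_toFinset_card _ hs] at hB
  refine (Finset.card_le_mul_card_image_of_maps_to (f := a) (t := hs.toFinset) ?_ M ?_).trans
    (Nat.mul_le_mul_left M hB)
  · intro i hi
    simpa using hi
  · intro x _
    rw [← Set.ncard_coe_finset]
    refine (Set.ncard_le_ncard ?_ (hM x).1).trans (hM x).2
    intro i hi
    simp only [Finset.coe_filter, Set.mem_ofPred_eq] at hi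
    exact hi.2

lemma flats_boundedGeometry (hbg : BoundedGeometry X) {M : ℕ}
    (hM : ∀ x : X, ({i : ℤ | a i = x}).Finite ∧ ({i : ℤ | a i = x}).ncard ≤ M) :
    @BoundedGeometry _ (flatsMetric a) := by
  classical
  let _ := flatsMetric a
  intro r hr
  obtain ⟨B, hB⟩ := hbg r hr
  obtain ⟨N, hN⟩ := exists_nat_ge r
  refine ⟨B + ((box N).card + M * B * (box N).card), fun u => ?_⟩
  obtain ⟨hballf, hballc⟩ := hB (flatsBase a u)
  obtain ⟨hJf, hJc⟩ := index_bound a hM hballf hballc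
  -- The index and position of `u` in its flat; any values serve when `u` lies in `X`.
  let c : ℤ × (ℤ × ℤ) := match u with
    | Sum.inl _ => (0, 0)
    | Sum.inr (i, p) => (i, p.1)
  let A₁ : Finset (FlatsSpace X) := hballf.toFinset.image Sum.inl
  let A₂ : Finset (FlatsSpace X) := (box N).image fun q => flatPt a c.1 (c.2 - q)
  let A₃ : Finset (FlatsSpace X) := (hJf.toFinset ×ˢ box N).image fun z => flatPt a z.1 z.2
  have hsub : Metric.closedBall u r ⊆ ((A₁ ∪ (A₂ ∪ A₃) : Finset (FlatsSpace X)) : Set _) := by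
    intro v hv
    have hv : flatsDist a v u ≤ r := hv
    simp only [Finset.coe_union, Set.mem_union, Finset.mem_coe]
    -- A point of a flat not containing `u` is reached through its attachment point.
    have far : ∀ (j : ℤ) (q : {p : ℤ × ℤ // p ≠ 0}),
        taxi q.1 + dist (a j) (flatsBase a u) ≤ r → flatPt a j q.1 ∈ A₃ := by
      intro j q h
      refine Finset.mem_image.2 ⟨(j, q.1), Finset.mem_product.2 ⟨?_, mem_box_of_taxi_le ?_⟩, rfl⟩
      · simp only [Set.Finite.mem_toFinset, Set.mem_preimage, Metric.mem_closedBall]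
        linarith [taxi_nonneg q.1]
      · linarith [dist_nonneg (x := a j) (y := flatsBase a u)]
    rcases v with y | ⟨j, q⟩
    · left
      refine Finset.mem_image.2 ⟨y, ?_, rfl⟩
      simp only [Set.Finite.mem_toFinset, Metric.mem_closedBall]
      rcases u with x | ⟨i, p⟩
      · exact hv
      · simp only [flatsDist] at hv
        rw [dist_comm]
        simp only [flatsBase]
        linarith [taxi_nonneg p.1]
    · right
      have hq : (Sum.inr (j, q) : FlatsSpace X) = flatPt a j q.1 := (flatPt_of_ne a j q.2).symm
      rw [hq]
      rcases u with x | ⟨i, p⟩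
      · exact Or.inr (far j q hv)
      · simp only [flatsDist] at hv
        split_ifs at hv with hij
        · subst hij
          left
          refine Finset.mem_image.2 ⟨p.1 - q.1, mem_box_of_taxi_le ?_, ?_⟩
          · rw [taxi_sub_comm]; linarith
          · simp only [c, sub_sub_cancel]
        · refine Or.inr (far j q ?_)
          simp only [flatsBase]
          linarith [taxi_nonneg p.1]
  refine ⟨(Finset.finite_toSet _).subset hsub, ?_⟩
  refine (Set.ncard_le_ncard hsub (Finset.finite_toSet _)).trans ?_
  rw [Set.ncard_coe_finset]
  rw [Set.ncard_eq_toFinset_card _ hballf] at hballc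
  rw [Set.ncard_eq_toFinset_card _ hJf] at hJc
  have h1 : A₁.card ≤ B := Finset.card_image_le.trans hballc
  have h2 : A₂.card ≤ (box N).card := Finset.card_image_le
  have h3 : A₃.card ≤ M * B * (box N).card := by
    refine Finset.card_image_le.trans ?_
    rw [Finset.card_product]
    exact Nat.mul_le_mul_right _ hJc
  have h4 := Finset.card_union_le A₁ (A₂ ∪ A₃)
  have h5 := Finset.card_union_le A₂ A₃
  omega

/-! ### Amenability -/

/-- The square `[1, n + 1]²`, which avoids the origin. -/
noncomputable def square (n : ℕ) : Finset (ℤ × ℤ) :=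
  Finset.Icc 1 ((n : ℤ) + 1) ×ˢ Finset.Icc 1 ((n : ℤ) + 1)

/-- The integers within `R` of an end of the interval `[1, n + 1]`. -/
noncomputable def ends (R n : ℕ) : Finset ℤ :=
  Finset.Icc (1 - (R : ℤ)) R ∪ Finset.Icc ((n : ℤ) + 2 - R) (n + 1 + R)

/-- The frame of width `2R` around the boundary of the square `[1, n + 1]²`. -/
noncomputable def frame (R n : ℕ) : Finset (ℤ × ℤ) :=
  ends R n ×ˢ Finset.Icc (1 - (R : ℤ)) (n + 1 + R) ∪
    Finset.Icc (1 - (R : ℤ)) (n + 1 + R) ×ˢ ends R n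

lemma card_square (n : ℕ) : (square n).card = (n + 1) * (n + 1) := by
  simp [square]

lemma card_frame_le (R n : ℕ) : (frame R n).card ≤ 8 * R * (n + 1 + 2 * R) := by
  have he : (ends R n).card ≤ 4 * R := by
    refine (Finset.card_union_le _ _).trans ?_
    simp only [Int.card_Icc]
    omega
  have hI : (Finset.Icc (1 - (R : ℤ)) (n + 1 + R)).card = n + 1 + 2 * R := by
    simp only [Int.card_Icc]
    omega
  refine (Finset.card_union_le _ _).trans ?_
  rw [Finset.card_product, Finset.card_product, hI]
  nlinarith [Nat.mul_le_mul_right (n + 1 + 2 * R) he]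

lemma taxi_lt_iff (p : ℤ × ℤ) (R : ℕ) : taxi p < R ↔ |p.1| + |p.2| < (R : ℤ) := by
  unfold taxi
  exact_mod_cast Iff.rfl

/-- A point close both to the square and to a point of the flat outside it lies in the frame. -/
lemma mem_frame {R n : ℕ} {p q s : ℤ × ℤ} (hs : s ∈ square n) (hps : taxi (p - s) < R)
    (hq : q ∉ square n) (hpq : taxi (p - q) < R) : p ∈ frame R n := by
  rw [taxi_lt_iff] at hps hpq
  simp only [square, frame, ends, Finset.mem_product, Finset.mem_union, Finset.mem_Icc,
    Prod.fst_sub, Prod.snd_sub] at *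
  have := abs_nonneg (p.1 - s.1)
  have := abs_nonneg (p.2 - s.2)
  have := abs_nonneg (p.1 - q.1)
  have := abs_nonneg (p.2 - q.2)
  have h1 := abs_lt.1 (show |p.1 - s.1| < (R : ℤ) by linarith)
  have h2 := abs_lt.1 (show |p.2 - s.2| < (R : ℤ) by linarith)
  have h3 := abs_lt.1 (show |p.1 - q.1| < (R : ℤ) by linarith)
  have h4 := abs_lt.1 (show |p.2 - q.2| < (R : ℤ) by linarith)
  omega

lemma zero_notMem_square (n : ℕ) : (0 : ℤ × ℤ) ∉ square n := by
  simp [square]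

/-- A point near the square is near the attachment point `a 0` unless it lies in the flat with
index `0`; in that flat, leaving the square for another part of the union means passing through the
origin, which is also outside the square. So the boundary consists of a frame and a ball whose
radius does not depend on `n`. -/
lemma boundary_subset {r : ℝ} {R : ℕ} (hR : r < R) (n : ℕ) :
    letI := flatsMetric a
    rBoundary r (flatPt a 0 '' (square n : Set (ℤ × ℤ))) ⊆
      flatPt a 0 '' (frame R n : Set (ℤ × ℤ)) ∪ Metric.closedBall (flatPt a 0 0) R := by
  let _ := flatsMetric a
  rintro u ⟨hu1, hu2⟩
  have hne : (flatPt a 0 '' (square n : Set (ℤ × ℤ))).Nonempty :=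
    ⟨_, (1, 1), by simp [square], rfl⟩
  have h0 : flatPt a 0 0 ∉ flatPt a 0 '' (square n : Set (ℤ × ℤ)) := by
    rintro ⟨p, hp, e⟩
    rw [flatPt_injective a 0 e] at hp
    exact zero_notMem_square n hp
  obtain ⟨_, ⟨s, hs, rfl⟩, hus⟩ := (Metric.infDist_lt_iff hne).1 (hu1.trans_lt hR)
  obtain ⟨t, ht, hut⟩ := (Metric.infDist_lt_iff ⟨_, h0⟩).1 (hu2.trans_lt hR)
  have hs0 : s ≠ 0 := fun e => zero_notMem_square n (e ▸ hs)
  have hus : flatsDist a u (flatPt a 0 s) < R := hus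
  have hut : flatsDist a u t < R := hut
  rw [flatPt_of_ne a 0 hs0] at hus
  have hfar : flatsDist a u (flatPt a 0 0) ≤ R → u ∈ Metric.closedBall (flatPt a 0 0) R :=
    fun h => h
  rw [flatPt_zero] at hfar
  rcases u with x | ⟨i, p⟩
  · right
    apply hfar
    simp only [flatsDist] at hus ⊢
    rw [dist_comm]
    linarith [taxi_nonneg s]
  · by_cases hi : i = 0
    · subst hi
      left
      refine ⟨p.1, ?_, flatPt_of_ne a 0 p.2⟩
      simp only [flatsDist, if_true] at hus
      -- If `t` lies outside the flat, the origin takes its place.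
      have horigin : taxi p.1 < R → p.1 ∈ frame R n := fun h =>
        mem_frame hs hus (zero_notMem_square n) (by simpa using h)
      rcases t with y | ⟨j, q⟩
      · simp only [flatsDist] at hut
        exact horigin (by linarith [dist_nonneg (x := a 0) (y := y)])
      · simp only [flatsDist] at hut
        split_ifs at hut with hj
        · subst hj
          refine mem_frame hs hus (fun hq => ht ⟨q.1, hq, flatPt_of_ne a 0 q.2⟩) hut
        · exact horigin (by linarith [dist_nonneg (x := a 0) (y := a j), taxi_nonneg q.1])
    · right
      apply hfar
      simp only [flatsDist, if_neg hi] at hus ⊢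
      linarith [taxi_nonneg s]

lemma flats_amenable (hbg : @BoundedGeometry _ (flatsMetric a)) :
    @MetricAmenable _ (flatsMetric a) := by
  let _ := flatsMetric a
  refine ⟨fun n => flatPt a 0 '' (square n : Set (ℤ × ℤ)), fun n =>
    ⟨⟨_, (1, 1), by simp [square], rfl⟩, (Finset.finite_toSet _).image _⟩, fun r hr => ?_⟩
  obtain ⟨R, hR⟩ := exists_nat_gt r
  have hR0 : (0 : ℝ) < R := hr.trans hR
  obtain ⟨B, hB⟩ := hbg R hR0
  obtain ⟨hBf, hBc⟩ := hB (flatPt a 0 0)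
  -- `8 R (n + 1 + 2 R) + B ≤ C (n + 1)`, so the ratio is at most `C / (n + 1)`.
  let C : ℝ := 8 * R * (1 + 2 * R) + B
  have hlim : Filter.Tendsto (fun n : ℕ => C * (1 / ((n : ℝ) + 1))) Filter.atTop (nhds 0) := by
    simpa using (tendsto_one_div_add_atTop_nhds_zero_nat (𝕜 := ℝ)).const_mul C
  refine squeeze_zero (fun n => by positivity) (fun n => ?_) hlim
  have hS : (flatPt a 0 '' (square n : Set (ℤ × ℤ))).ncard = (n + 1) * (n + 1) := by
    rw [Set.ncard_image_of_injective _ (flatPt_injective a 0), Set.ncard_coe_finset, card_square]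
  have hb : (rBoundary r (flatPt a 0 '' (square n : Set (ℤ × ℤ)))).ncard ≤
      8 * R * (n + 1 + 2 * R) + B := by
    have hFf : (flatPt a 0 '' (frame R n : Set (ℤ × ℤ))).Finite :=
      (Finset.finite_toSet _).image _
    refine (Set.ncard_le_ncard (boundary_subset a hR n) (hFf.union hBf)).trans ?_
    refine (Set.ncard_union_le _ _).trans (add_le_add ?_ hBc)
    rw [Set.ncard_image_of_injective _ (flatPt_injective a 0), Set.ncard_coe_finset]
    exact card_frame_le R n
  have hb' : ((rBoundary r (flatPt a 0 '' (square n : Set (ℤ × ℤ)))).ncard : ℝ) ≤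
      8 * R * (n + 1 + 2 * R) + B := by exact_mod_cast hb
  have hn : (0 : ℝ) ≤ n := n.cast_nonneg
  rw [hS, mul_one_div, Nat.cast_mul, Nat.cast_add_one, ← div_div]
  refine div_le_div_of_nonneg_right ?_ (by positivity)
  rw [div_le_iff₀ (by positivity)]
  refine hb'.trans ?_
  have h1 : (0 : ℝ) ≤ 16 * R * R * n := by positivity
  have h2 : (0 : ℝ) ≤ B * n := by positivity
  simp only [C]
  nlinarith

end

/-- Attaching flats `ℤ²` along a sequence of attachment points `a : ℤ → X` with
uniformly bounded multiplicity to a UDBG space `X` yields a metric space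
(with the prescribed distance `flatsDist a`) that is uniformly discrete, has
bounded geometry, and is amenable. -/
theorem flatsSpace_UDBG_amenable {X : Type*} [MetricSpace X]
    (hud : UniformlyDiscrete X) (hbg : BoundedGeometry X)
    (a : ℤ → X) (M : ℕ)
    (hM : ∀ x : X, ({i : ℤ | a i = x}).Finite ∧ ({i : ℤ | a i = x}).ncard ≤ M) :
    ∃ m : MetricSpace (FlatsSpace X),
      (∀ u v : FlatsSpace X, m.dist u v = flatsDist a u v) ∧
      @UniformlyDiscrete _ m ∧ @BoundedGeometry _ m ∧ @MetricAmenable _ m := by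
  obtain ⟨ε, hε, hsep⟩ := hud
  have hB := flats_boundedGeometry a hbg hM
  exact ⟨flatsMetric a, fun _ _ => rfl,
    ⟨min ε 1, lt_min hε one_pos, fun _ _ h => le_flatsDist a hsep h⟩, hB, flats_amenable a hB⟩
end
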